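/- arXiv:1803.02273 — 2 statements merged into one kernel-verified Lean document; each statement's English description precedes it below -/
import Mathlib

section
/- Let K be an isolated non-saddle compact invariant set with no dissonant points such that H(K)∖K ≠ ∅, where the phase space is locally compact. Then H(K) is compact and is itself an isolated non-saddle invariant set. -/
/-!
The argument avoids isolating blocks. Write `I = I(K)` and `H = H(K)`.

* A point whose two-sided prolongational limit `J*` meets `K × K` lies in `H`: it lies in `I`
  because it is not externally dissonant, and then in `A(K)` and in `R(K)` because it is neither
  positively nor negatively dissonant (`mem_Hset_of_Jstar`). If `xₙ ∈ H` converges to `x`, then each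
  `xₙ` is close to `K` at some time `≥ n` and at some time `≤ -n`, and compactness of `K` gives
  a point of `J*(x) ∩ (K × K)`. Hence `H` is closed (`isClosed_Hset`).
* If `C` is a compact neighborhood of `K`, every point of `H ∩ C` returns to `C` in the past, and by
  compactness it does so within a uniform time `T`. Going back from a far-future visit to `C`, every
  point of `H` lies in the compact set `φ([-T, 0] × (H ∩ C))`, so `H` is compact (`isCompact_Hset`).
* Non-saddleness inside an isolating neighborhood shows that `I` is a neighborhood of `K`, and so `I`
  is open (`isOpen_Iset`). A compact neighborhood `P ⊆ I` of `H` isolates `H`: if the orbit of `x`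
  stays in `P` and, say, `x ∈ A(K)`, then `ω*(x) ⊆ I` is a nonempty closed invariant set, so it meets
  `K`, and since `x` is not negatively dissonant, `x ∈ R(K)`.
* Non-saddleness passes from `K` to `H` directly: the orbit of `x ∈ H` enters, at some time `T ≥ 0`,
  the neighborhood of `K` witnessing that `K` is non-saddle, and points near `x` follow it during
  `[0, T]` without leaving the given neighborhood of `H`.

Statements about the past are obtained from statements about the future of the reversed flow.
-/

open Set Filter Topology

variable {M : Type*}

/-- The positive semi-trajectory `γ⁺(x)`. -/
def posOrbit [TopologicalSpace M] (φ : Flow ℝ M) (x : M) : Set M :=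
  {y | ∃ t : ℝ, 0 ≤ t ∧ φ t x = y}

/-- The negative semi-trajectory `γ⁻(x)`. -/
def negOrbit [TopologicalSpace M] (φ : Flow ℝ M) (x : M) : Set M :=
  {y | ∃ t : ℝ, t ≤ 0 ∧ φ t x = y}

/-- The omega-limit set `ω(x) = ⋂_{t>0} closure (x·[t,∞))`. -/
def omegaLim [TopologicalSpace M] (φ : Flow ℝ M) (x : M) : Set M :=
  ⋂ t ∈ Set.Ioi (0:ℝ), closure {y | ∃ s : ℝ, t ≤ s ∧ φ s x = y}

/-- The negative omega-limit set `ω*(x) = ⋂_{t<0} closure (x·(-∞,t])`. -/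
def alphaLim [TopologicalSpace M] (φ : Flow ℝ M) (x : M) : Set M :=
  ⋂ t ∈ Set.Iio (0:ℝ), closure {y | ∃ s : ℝ, s ≤ t ∧ φ s x = y}

/-- `K` is invariant under the flow. -/
def FlowInvariant [TopologicalSpace M] (φ : Flow ℝ M) (K : Set M) : Prop :=
  ∀ x ∈ K, ∀ t : ℝ, φ t x ∈ K

/-- `K` is a compact invariant set which is the maximal invariant subset of some
compact neighborhood (an isolated invariant compactum). -/
def IsIsolatedInv [TopologicalSpace M] (φ : Flow ℝ M) (K : Set M) : Prop :=
  IsCompact K ∧ FlowInvariant φ K ∧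
    ∃ N : Set M, IsCompact N ∧ K ⊆ interior N ∧
      ∀ x ∈ N, (∀ t : ℝ, φ t x ∈ N) → x ∈ K

/-- `K` is saddle: it admits a neighborhood `U` such that every neighborhood `V` of `K`
contains a point whose positive and negative semi-trajectories both leave `U`. -/
def Saddle [TopologicalSpace M] (φ : Flow ℝ M) (K : Set M) : Prop :=
  ∃ U : Set M, K ⊆ interior U ∧ ∀ V : Set M, K ⊆ interior V →
    ∃ x ∈ V, ¬ posOrbit φ x ⊆ U ∧ ¬ negOrbit φ x ⊆ U

/-- `K` is non-saddle: every neighborhood `U` of `K` contains a neighborhood `V` of `K`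
such that every point of `V` has `γ⁺(x) ⊆ U` or `γ⁻(x) ⊆ U`. -/
def NonSaddle [TopologicalSpace M] (φ : Flow ℝ M) (K : Set M) : Prop :=
  ∀ U : Set M, K ⊆ interior U → ∃ V : Set M, K ⊆ interior V ∧ V ⊆ U ∧
    ∀ x ∈ V, posOrbit φ x ⊆ U ∨ negOrbit φ x ⊆ U

/-- The stable manifold (region of attraction) `A(K)`. -/
def Aset [TopologicalSpace M] (φ : Flow ℝ M) (K : Set M) : Set M :=
  {x | (omegaLim φ x).Nonempty ∧ omegaLim φ x ⊆ K}

/-- The unstable manifold (region of repulsion) `R(K)`. -/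
def Rset [TopologicalSpace M] (φ : Flow ℝ M) (K : Set M) : Set M :=
  {x | (alphaLim φ x).Nonempty ∧ alphaLim φ x ⊆ K}

/-- The region of influence `I(K) = A(K) ∪ R(K)`. -/
def Iset [TopologicalSpace M] (φ : Flow ℝ M) (K : Set M) : Set M :=
  Aset φ K ∪ Rset φ K

/-- `H(K) = A(K) ∩ R(K)`. -/
def Hset [TopologicalSpace M] (φ : Flow ℝ M) (K : Set M) : Set M :=
  Aset φ K ∩ Rset φ K

/-- The positive prolongational limit set `J⁺(x)`. -/
def Jplus [TopologicalSpace M] (φ : Flow ℝ M) (x : M) : Set M :=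
  {y | ∃ (xs : ℕ → M) (ts : ℕ → ℝ), Tendsto xs atTop (𝓝 x) ∧
    Tendsto ts atTop atTop ∧ Tendsto (fun n => φ (ts n) (xs n)) atTop (𝓝 y)}

/-- The negative prolongational limit set `J⁻(x)`. -/
def Jminus [TopologicalSpace M] (φ : Flow ℝ M) (x : M) : Set M :=
  {y | ∃ (xs : ℕ → M) (ts : ℕ → ℝ), Tendsto xs atTop (𝓝 x) ∧
    Tendsto ts atTop atBot ∧ Tendsto (fun n => φ (ts n) (xs n)) atTop (𝓝 y)}

/-- The two-sided prolongational limit set `J*(x)`. -/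
def Jstar [TopologicalSpace M] (φ : Flow ℝ M) (x : M) : Set (M × M) :=
  {p | ∃ (xs : ℕ → M) (ts ss : ℕ → ℝ), Tendsto xs atTop (𝓝 x) ∧
    Tendsto ts atTop atTop ∧ Tendsto ss atTop atBot ∧
    Tendsto (fun n => φ (ts n) (xs n)) atTop (𝓝 p.1) ∧
    Tendsto (fun n => φ (ss n) (xs n)) atTop (𝓝 p.2)}

/-- `x ∈ I(K)` is positively dissonant. -/
def PosDissonant [TopologicalSpace M] (φ : Flow ℝ M) (K : Set M) (x : M) : Prop :=
  x ∈ Iset φ K ∧ x ∉ Aset φ K ∧ (Jplus φ x ∩ K).Nonempty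

/-- `x ∈ I(K)` is negatively dissonant. -/
def NegDissonant [TopologicalSpace M] (φ : Flow ℝ M) (K : Set M) (x : M) : Prop :=
  x ∈ Iset φ K ∧ x ∉ Rset φ K ∧ (Jminus φ x ∩ K).Nonempty

/-- `x ∉ I(K)` is externally dissonant. -/
def ExtDissonant [TopologicalSpace M] (φ : Flow ℝ M) (K : Set M) (x : M) : Prop :=
  x ∉ Iset φ K ∧ (Jstar φ x ∩ K ×ˢ K).Nonempty

/-- `x` is a dissonant point of `K`. -/
def Dissonant [TopologicalSpace M] (φ : Flow ℝ M) (K : Set M) (x : M) : Prop :=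
  PosDissonant φ K x ∨ NegDissonant φ K x ∨ ExtDissonant φ K x

/-- `N` is an isolating block for `K` with entrance set `Ni` and exit set `No`. -/
structure IsolatingBlock [TopologicalSpace M] (φ : Flow ℝ M) (K N Ni No : Set M) : Prop where
  compact_N : IsCompact N
  nbhd : K ⊆ interior N
  maximal : ∀ x ∈ N, (∀ t : ℝ, φ t x ∈ N) → x ∈ K
  compact_Ni : IsCompact Ni
  compact_No : IsCompact No
  Ni_sub : Ni ⊆ frontier N
  No_sub : No ⊆ frontier N
  cover : frontier N = Ni ∪ No
  entrance : ∀ x ∈ Ni, ∃ ε > (0:ℝ), ∀ t ∈ Set.Ico (-ε) (0:ℝ), φ t x ∉ N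
  exitSet : ∀ x ∈ No, ∃ δ > (0:ℝ), ∀ t ∈ Set.Ioc (0:ℝ) δ, φ t x ∉ N
  tang_neg : ∀ x ∈ frontier N \ Ni, ∃ ε > (0:ℝ), ∀ t ∈ Set.Ico (-ε) (0:ℝ), φ t x ∈ interior N
  tang_pos : ∀ x ∈ frontier N \ No, ∃ δ > (0:ℝ), ∀ t ∈ Set.Ioc (0:ℝ) δ, φ t x ∈ interior N

/-- `p` is strongly influenced by `K`. -/
def StronglyInfluenced [TopologicalSpace M] (φ : Flow ℝ M) (K : Set M) (p : M) : Prop :=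
  ∃ U ∈ 𝓝 p, ∀ V : Set M, K ⊆ interior V → ∃ T : ℝ, 0 ≤ T ∧ ∀ x ∈ U,
    (∀ t : ℝ, T ≤ t → φ t x ∈ V) ∨ (∀ t : ℝ, t ≤ -T → φ t x ∈ V)

/-- `p` is strongly attracted by `K`. -/
def StronglyAttracted [TopologicalSpace M] (φ : Flow ℝ M) (K : Set M) (p : M) : Prop :=
  ∃ U ∈ 𝓝 p, ∀ V : Set M, K ⊆ interior V → ∃ T : ℝ, 0 ≤ T ∧ ∀ x ∈ U,
    ∀ t : ℝ, T ≤ t → φ t x ∈ V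

/-- `p` is strongly repelled by `K`. -/
def StronglyRepelled [TopologicalSpace M] (φ : Flow ℝ M) (K : Set M) (p : M) : Prop :=
  ∃ U ∈ 𝓝 p, ∀ V : Set M, K ⊆ interior V → ∃ T : ℝ, 0 ≤ T ∧ ∀ x ∈ U,
    ∀ t : ℝ, t ≤ -T → φ t x ∈ V

/-- `K` is (positively) stable. -/
def IsStable [TopologicalSpace M] (φ : Flow ℝ M) (K : Set M) : Prop :=
  ∀ U : Set M, K ⊆ interior U → ∃ V : Set M, K ⊆ interior V ∧ V ⊆ U ∧
    ∀ x ∈ V, ∀ t : ℝ, 0 ≤ t → φ t x ∈ V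

/-- `K` is negatively stable. -/
def IsNegStable [TopologicalSpace M] (φ : Flow ℝ M) (K : Set M) : Prop :=
  ∀ U : Set M, K ⊆ interior U → ∃ V : Set M, K ⊆ interior V ∧ V ⊆ U ∧
    ∀ x ∈ V, ∀ t : ℝ, t ≤ 0 → φ t x ∈ V

/-- `K` is an attractor: stable and attracting some neighborhood. -/
def IsAttractor [TopologicalSpace M] (φ : Flow ℝ M) (K : Set M) : Prop :=
  IsStable φ K ∧ ∃ W : Set M, K ⊆ interior W ∧ W ⊆ Aset φ K

/-- `K` is a repeller: negatively stable and repelling some neighborhood. -/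
def IsRepeller [TopologicalSpace M] (φ : Flow ℝ M) (K : Set M) : Prop :=
  IsNegStable φ K ∧ ∃ W : Set M, K ⊆ interior W ∧ W ⊆ Rset φ K

/-! ### Limit sets -/

lemma mem_omegaLim [TopologicalSpace M] {φ : Flow ℝ M} {x y : M} :
    y ∈ omegaLim φ x ↔ MapClusterPt y atTop (fun t => φ t x) := by
  simp only [omegaLim, mem_iInter, mem_Ioi, mem_closure_iff_nhds, mapClusterPt_iff_frequently,
    frequently_atTop]
  constructor
  · intro h s hs a
    obtain ⟨z, hz, t, ht, rfl⟩ := h (max a 1) (by positivity) s hs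
    exact ⟨t, (le_max_left _ _).trans ht, hz⟩
  · intro h t _ s hs
    obtain ⟨b, hb, hbs⟩ := h s hs t
    exact ⟨_, hbs, b, hb, rfl⟩

lemma omegaLim_reverse [TopologicalSpace M] (φ : Flow ℝ M) (x : M) :
    omegaLim φ.reverse x = alphaLim φ x := by
  ext y
  simp only [omegaLim, alphaLim, mem_iInter, mem_Ioi, mem_Iio, Flow.reverse_apply]
  have key (t : ℝ) : {y | ∃ s : ℝ, t ≤ s ∧ φ (-s) x = y} = {y | ∃ s : ℝ, s ≤ -t ∧ φ s x = y} := by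
    ext y
    constructor
    · rintro ⟨s, hs, h⟩
      exact ⟨-s, by linarith, h⟩
    · rintro ⟨s, hs, h⟩
      exact ⟨-s, by linarith, by simpa using h⟩
  simp only [key]
  constructor
  · intro h t ht
    simpa using h (-t) (by linarith)
  · intro h t ht
    exact h (-t) (by linarith)

lemma Aset_reverse [TopologicalSpace M] (φ : Flow ℝ M) (K : Set M) :
    Aset φ.reverse K = Rset φ K := by
  simp only [Aset, Rset, omegaLim_reverse]

lemma reverse_reverse [TopologicalSpace M] (φ : Flow ℝ M) : φ.reverse.reverse = φ :=
  Flow.ext fun t x => by simp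

lemma Rset_reverse [TopologicalSpace M] (φ : Flow ℝ M) (K : Set M) :
    Rset φ.reverse K = Aset φ K := by
  rw [← Aset_reverse, reverse_reverse]

lemma Jminus_reverse [TopologicalSpace M] (φ : Flow ℝ M) (x : M) :
    Jminus φ.reverse x = Jplus φ x := by
  ext y
  constructor
  · rintro ⟨xs, ts, h1, h2, h3⟩
    exact ⟨xs, fun n => -ts n, h1, tendsto_neg_atBot_atTop.comp h2, h3⟩
  · rintro ⟨xs, ts, h1, h2, h3⟩
    exact ⟨xs, fun n => -ts n, h1, tendsto_neg_atTop_atBot.comp h2, by simpa using h3⟩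

lemma isClosed_omegaLim [TopologicalSpace M] (φ : Flow ℝ M) (x : M) :
    IsClosed (omegaLim φ x) :=
  isClosed_biInter fun _ _ => isClosed_closure

lemma omegaLim_invariant [TopologicalSpace M] (φ : Flow ℝ M) (x : M) :
    FlowInvariant φ (omegaLim φ x) := by
  intro y hy t
  rw [mem_omegaLim, mapClusterPt_iff_frequently] at hy ⊢
  intro s hs
  have hs' := (φ.continuous_toFun t).continuousAt.preimage_mem_nhds hs
  have := hy _ hs'
  rw [frequently_atTop] at this ⊢
  intro a
  obtain ⟨b, hb, hbs⟩ := this (a - t)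
  refine ⟨t + b, by linarith, ?_⟩
  rw [φ.map_add]
  exact hbs

lemma omegaLim_apply [TopologicalSpace M] (φ : Flow ℝ M) (x : M) (s : ℝ) :
    omegaLim φ (φ s x) = omegaLim φ x := by
  have sub (s : ℝ) (x : M) : omegaLim φ (φ s x) ⊆ omegaLim φ x := by
    intro y hy
    rw [mem_omegaLim, mapClusterPt_iff_frequently] at hy ⊢
    intro u hu
    have := hy u hu
    rw [frequently_atTop] at this ⊢
    intro a
    obtain ⟨b, hb, hbs⟩ := this (a - s)
    refine ⟨b + s, by linarith, ?_⟩
    rw [φ.map_add]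
    exact hbs
  refine (sub s x).antisymm ?_
  have := sub (-s) (φ s x)
  rwa [← φ.map_add, neg_add_cancel, φ.map_zero_apply] at this

lemma omegaLim_subset_of_forward [TopologicalSpace M] {φ : Flow ℝ M} {x : M} {C : Set M}
    (hC : IsClosed C) (h : ∀ t : ℝ, 0 ≤ t → φ t x ∈ C) : omegaLim φ x ⊆ C := by
  intro y hy
  rw [mem_omegaLim, mapClusterPt_iff_frequently] at hy
  rw [← hC.closure_eq, mem_closure_iff_nhds]
  intro s hs
  obtain ⟨t, ht, hts⟩ := frequently_atTop.1 (hy s hs) 0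
  exact ⟨_, hts, h t ht⟩

lemma omegaLim_nonempty_of_forward [TopologicalSpace M] {φ : Flow ℝ M} {x : M} {C : Set M}
    (hC : IsCompact C) (h : ∀ t : ℝ, 0 ≤ t → φ t x ∈ C) : (omegaLim φ x).Nonempty := by
  obtain ⟨y, -, hy⟩ := hC.exists_mapClusterPt_of_frequently
    (l := (atTop : Filter ℝ)) (f := fun t => φ t x)
    ((eventually_ge_atTop (0 : ℝ)).mono h).frequently
  exact ⟨y, mem_omegaLim.2 hy⟩

/-! ### Regions of attraction and repulsion -/

lemma Aset_invariant [TopologicalSpace M] (φ : Flow ℝ M) (K : Set M) :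
    FlowInvariant φ (Aset φ K) := by
  intro x hx t
  simpa only [Aset, mem_ofPred_eq, omegaLim_apply] using hx

lemma Rset_invariant [TopologicalSpace M] (φ : Flow ℝ M) (K : Set M) :
    FlowInvariant φ (Rset φ K) := by
  intro x hx t
  rw [← Aset_reverse] at hx ⊢
  simpa using Aset_invariant φ.reverse K x hx (-t)

lemma exists_time_mem [TopologicalSpace M] {φ : Flow ℝ M} {K W : Set M} {x : M}
    (hx : x ∈ Aset φ K) (hW : K ⊆ interior W) (T : ℝ) : ∃ t, T ≤ t ∧ φ t x ∈ interior W := by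
  obtain ⟨⟨y, hy⟩, hK⟩ := hx
  have := mapClusterPt_iff_frequently.1 (mem_omegaLim.1 hy) _
    (isOpen_interior.mem_nhds (hW (hK hy)))
  exact frequently_atTop.1 this T

lemma exists_neg_time_mem [TopologicalSpace M] {φ : Flow ℝ M} {K W : Set M} {x : M}
    (hx : x ∈ Rset φ K) (hW : K ⊆ interior W) (T : ℝ) : ∃ t, t ≤ T ∧ φ t x ∈ interior W := by
  rw [← Aset_reverse] at hx
  obtain ⟨t, ht, h⟩ := exists_time_mem hx hW (-T)
  exact ⟨-t, by linarith, h⟩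

lemma subset_Hset [TopologicalSpace M] {φ : Flow ℝ M} {K : Set M} (hK : IsCompact K)
    (hcl : IsClosed K) (hinv : FlowInvariant φ K) : K ⊆ Hset φ K := by
  intro x hx
  refine ⟨⟨omegaLim_nonempty_of_forward hK fun t _ => hinv x hx t,
    omegaLim_subset_of_forward hcl fun t _ => hinv x hx t⟩, ?_⟩
  rw [← Aset_reverse]
  exact ⟨omegaLim_nonempty_of_forward hK fun t _ => hinv x hx (-t),
    omegaLim_subset_of_forward hcl fun t _ => hinv x hx (-t)⟩

/-- In an isolating neighborhood `N` of `K`, the omega-limit set of a point whose forward orbit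
stays in `N` is an invariant subset of `N`, hence contained in `K`. -/
lemma mem_Aset_of_forward [TopologicalSpace M] [T2Space M] {φ : Flow ℝ M} {K N : Set M} {x : M}
    (hN : IsCompact N) (hmax : ∀ x ∈ N, (∀ t : ℝ, φ t x ∈ N) → x ∈ K)
    (h : ∀ t : ℝ, 0 ≤ t → φ t x ∈ N) : x ∈ Aset φ K := by
  have hsub := omegaLim_subset_of_forward hN.isClosed h
  exact ⟨omegaLim_nonempty_of_forward hN h, fun y hy =>
    hmax y (hsub hy) fun t => hsub (omegaLim_invariant φ x y hy t)⟩

lemma isOpen_Iset [TopologicalSpace M] [T2Space M] {φ : Flow ℝ M} {K : Set M}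
    (hIso : IsIsolatedInv φ K) (hNS : NonSaddle φ K) : IsOpen (Iset φ K) := by
  obtain ⟨-, -, N, hN, hKN, hmax⟩ := hIso
  obtain ⟨V, hKV, -, hV⟩ := hNS N hKN
  have hVI : V ⊆ Iset φ K := by
    intro x hx
    rcases hV x hx with h | h
    · exact Or.inl (mem_Aset_of_forward hN hmax fun t ht => h ⟨t, ht, rfl⟩)
    · right
      rw [← Aset_reverse]
      refine mem_Aset_of_forward hN (fun x hx h => hmax x hx fun t => ?_)
        fun t ht => h ⟨-t, by linarith, rfl⟩
      simpa using h (-t)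
  have hinv : FlowInvariant φ (Iset φ K) := fun x hx t =>
    hx.imp (fun h => Aset_invariant φ K x h t) (fun h => Rset_invariant φ K x h t)
  rw [isOpen_iff_mem_nhds]
  intro x hx
  obtain ⟨t, ht⟩ : ∃ t, φ t x ∈ interior V := by
    rcases hx with h | h
    · obtain ⟨t, -, ht⟩ := exists_time_mem h hKV 0
      exact ⟨t, ht⟩
    · obtain ⟨t, -, ht⟩ := exists_neg_time_mem h hKV 0
      exact ⟨t, ht⟩
  filter_upwards [(φ.continuous_toFun t).continuousAt.preimage_mem_nhds
    (isOpen_interior.mem_nhds ht)] with y hy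
  have := hinv _ (hVI (interior_subset hy)) (-t)
  rwa [← φ.map_add, neg_add_cancel, φ.map_zero_apply] at this

/-! ### Compactness -/

lemma mem_Hset_of_Jstar [TopologicalSpace M] {φ : Flow ℝ M} {K : Set M} {x : M}
    (hD : ¬ Dissonant φ K x) (h : (Jstar φ x ∩ K ×ˢ K).Nonempty) : x ∈ Hset φ K := by
  have hI : x ∈ Iset φ K := by
    by_contra hx
    exact hD (Or.inr (Or.inr ⟨hx, h⟩))
  obtain ⟨p, ⟨xs, ts, ss, h1, h2, h3, h4, h5⟩, hp1, hp2⟩ := h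
  constructor
  · by_contra hx
    exact hD (Or.inl ⟨hI, hx, p.1, ⟨xs, ts, h1, h2, h4⟩, hp1⟩)
  · by_contra hx
    exact hD (Or.inr (Or.inl ⟨hI, hx, p.2, ⟨xs, ss, h1, h3, h5⟩, hp2⟩))

lemma exists_time_near [MetricSpace M] {φ : Flow ℝ M} {K : Set M} {x : M}
    (hx : x ∈ Aset φ K) (n : ℕ) :
    ∃ t : ℝ, (n : ℝ) ≤ t ∧ ∃ y ∈ K, dist (φ t x) y < 1 / ((n : ℝ) + 1) := by
  obtain ⟨⟨y, hy⟩, hK⟩ := hx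
  have := mapClusterPt_iff_frequently.1 (mem_omegaLim.1 hy) _
    (Metric.ball_mem_nhds y (Nat.one_div_pos_of_nat (n := n)))
  obtain ⟨t, ht, h⟩ := frequently_atTop.1 this n
  exact ⟨t, ht, y, hK hy, h⟩

lemma isClosed_Hset [MetricSpace M] {φ : Flow ℝ M} {K : Set M} (hK : IsCompact K)
    (hD : ∀ x : M, ¬ Dissonant φ K x) : IsClosed (Hset φ K) := by
  rw [← isSeqClosed_iff_isClosed]
  intro xs x hxs hx
  choose ts hts ys hys hty using fun n => exists_time_near (hxs n).1 n
  choose ss hss zs hzs hsz using fun n => exists_time_near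
    (φ := φ.reverse) (K := K) (x := xs n) (by rw [Aset_reverse]; exact (hxs n).2) n
  obtain ⟨p, hp, g, hg, hlim⟩ := (hK.prod hK).tendsto_subseq (x := fun n => (ys n, zs n))
    fun n => ⟨hys n, hzs n⟩
  have hcast := (tendsto_natCast_atTop_atTop (R := ℝ)).comp hg.tendsto_atTop
  have hzero := (tendsto_one_div_add_atTop_nhds_zero_nat (𝕜 := ℝ)).comp hg.tendsto_atTop
  refine mem_Hset_of_Jstar (hD x) ⟨p, ⟨xs ∘ g, ts ∘ g, fun n => -ss (g n),
    hx.comp hg.tendsto_atTop, tendsto_atTop_mono (fun n => hts (g n)) hcast,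
    tendsto_neg_atTop_atBot.comp (tendsto_atTop_mono (fun n => hss (g n)) hcast), ?_, ?_⟩, hp⟩
  · refine ((continuous_fst.tendsto p).comp hlim).congr_dist ?_
    refine squeeze_zero (fun _ => dist_nonneg) (fun n => ?_) hzero
    rw [dist_comm]
    exact (hty (g n)).le
  · refine ((continuous_snd.tendsto p).comp hlim).congr_dist ?_
    refine squeeze_zero (fun _ => dist_nonneg) (fun n => ?_) hzero
    rw [dist_comm]
    exact (hsz (g n)).le

lemma isCompact_Hset [MetricSpace M] [LocallyCompactSpace M] {φ : Flow ℝ M} {K : Set M}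
    (hK : IsCompact K) (hD : ∀ x : M, ¬ Dissonant φ K x) : IsCompact (Hset φ K) := by
  obtain ⟨C, hC, hKC, -⟩ := exists_compact_between hK isOpen_univ (subset_univ K)
  have hcl := isClosed_Hset hK hD
  have hHC : IsCompact (Hset φ K ∩ C) := hC.inter_left hcl
  -- points of `H ∩ C` return to `C` at a time in `[-T, -1]`
  obtain ⟨T, hT⟩ : ∃ T : ℝ, ∀ y ∈ Hset φ K ∩ C, ∃ s, -T ≤ s ∧ s ≤ -1 ∧ φ s y ∈ C := by
    refine hHC.induction_on (p := fun S => ∃ T : ℝ, ∀ y ∈ S, ∃ s, -T ≤ s ∧ s ≤ -1 ∧ φ s y ∈ C)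
      ⟨0, by simp⟩ ?_ ?_ ?_
    · rintro S S' hS ⟨T, hT⟩
      exact ⟨T, fun y hy => hT y (hS hy)⟩
    · rintro S S' ⟨T, hT⟩ ⟨T', hT'⟩
      refine ⟨max T T', ?_⟩
      rintro y (hy | hy)
      · obtain ⟨s, h1, h2⟩ := hT y hy
        exact ⟨s, by linarith [le_max_left T T'], h2⟩
      · obtain ⟨s, h1, h2⟩ := hT' y hy
        exact ⟨s, by linarith [le_max_right T T'], h2⟩
    · intro y hy
      obtain ⟨s, hs, hsC⟩ := exists_neg_time_mem hy.1.2 hKC (-1)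
      refine ⟨φ.toFun s ⁻¹' interior C, mem_nhdsWithin_of_mem_nhds
        ((φ.continuous_toFun s).continuousAt.preimage_mem_nhds (isOpen_interior.mem_nhds hsC)),
        -s, fun z hz => ⟨s, by simp, hs, interior_subset hz⟩⟩
  have hinv : FlowInvariant φ (Hset φ K) := fun x hx t =>
    ⟨Aset_invariant φ K x hx.1 t, Rset_invariant φ K x hx.2 t⟩
  -- induction on the integer part of the time of a visit to `C`, each step going back by at least 1
  have step : ∀ n : ℕ, ∀ x ∈ Hset φ K, ∀ t : ℝ, 0 ≤ t → t ≤ n → φ t x ∈ C →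
      ∃ r, 0 ≤ r ∧ r ≤ max T 0 ∧ φ r x ∈ C := by
    intro n
    induction n with
    | zero =>
      intro x _ t h0 h1 h2
      exact ⟨t, h0, by simp at h1; exact h1.trans (le_max_right _ _), h2⟩
    | succ n ih =>
      intro x hx t h0 h1 h2
      by_cases htT : t ≤ T
      · exact ⟨t, h0, htT.trans (le_max_left _ _), h2⟩
      · obtain ⟨s, hs1, hs2, hs3⟩ := hT _ ⟨hinv x hx t, h2⟩
        rw [← φ.map_add] at hs3
        push_cast at h1
        exact ih x hx (s + t) (by linarith) (by linarith) hs3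
  have himg : IsCompact ((fun p : ℝ × M => φ p.1 p.2) ''
      (Icc (-(max T 0)) 0 ×ˢ (Hset φ K ∩ C))) :=
    (isCompact_Icc.prod hHC).image (φ.continuous continuous_fst continuous_snd)
  refine himg.of_isClosed_subset hcl fun x hx => ?_
  obtain ⟨t, ht, htC⟩ := exists_time_mem hx.1 hKC 0
  obtain ⟨n, hn⟩ := exists_nat_ge t
  obtain ⟨r, hr0, hr1, hrC⟩ := step n x hx t ht hn (interior_subset htC)
  refine ⟨(-r, φ r x), ⟨⟨by linarith, by linarith⟩, hinv x hx r, hrC⟩, ?_⟩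
  simp only [← φ.map_add, neg_add_cancel, φ.map_zero_apply]

/-! ### Isolation and non-saddleness -/

lemma omegaLim_subset_Jplus [MetricSpace M] (φ : Flow ℝ M) (x : M) :
    omegaLim φ x ⊆ Jplus φ x := by
  intro y hy
  have key (n : ℕ) : ∃ t : ℝ, (n : ℝ) ≤ t ∧ dist (φ t x) y < 1 / ((n : ℝ) + 1) :=
    frequently_atTop.1 (mapClusterPt_iff_frequently.1 (mem_omegaLim.1 hy) _
      (Metric.ball_mem_nhds y (Nat.one_div_pos_of_nat (n := n)))) n
  choose ts h1 h2 using key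
  refine ⟨fun _ => x, ts, tendsto_const_nhds,
    tendsto_atTop_mono h1 tendsto_natCast_atTop_atTop, ?_⟩
  rw [tendsto_iff_dist_tendsto_zero]
  exact squeeze_zero (fun _ => dist_nonneg) (fun n => (h2 n).le)
    tendsto_one_div_add_atTop_nhds_zero_nat

/-- The omega-limit set of `x` is closed and invariant, so it contains `ω(z)` and `ω*(z)` for each of
its points `z`; as it consists of points of `I(K)`, it meets `K`. -/
lemma Jplus_inter_nonempty [MetricSpace M] {φ : Flow ℝ M} {K P : Set M} {x : M}
    (hP : IsCompact P) (hPI : P ⊆ Iset φ K) (h : ∀ t : ℝ, φ t x ∈ P) :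
    (Jplus φ x ∩ K).Nonempty := by
  obtain ⟨z, hz⟩ := omegaLim_nonempty_of_forward hP fun t _ => h t
  have hinv := omegaLim_invariant φ x z hz
  have hcl := isClosed_omegaLim φ x
  rcases hPI (omegaLim_subset_of_forward hP.isClosed (fun t _ => h t) hz) with hA | hR
  · obtain ⟨⟨w, hw⟩, hK⟩ := hA
    exact ⟨w, omegaLim_subset_Jplus φ x (omegaLim_subset_of_forward hcl (fun t _ => hinv t) hw),
      hK hw⟩
  · rw [← Aset_reverse] at hR
    obtain ⟨⟨w, hw⟩, hK⟩ := hR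
    exact ⟨w, omegaLim_subset_Jplus φ x
      (omegaLim_subset_of_forward hcl (fun t _ => hinv (-t)) hw), hK hw⟩

lemma mem_Hset_of_orbit [MetricSpace M] {φ : Flow ℝ M} {K P : Set M} {x : M}
    (hD : ¬ Dissonant φ K x) (hP : IsCompact P) (hPI : P ⊆ Iset φ K) (h : ∀ t : ℝ, φ t x ∈ P) :
    x ∈ Hset φ K := by
  have hI : x ∈ Iset φ K := by simpa using hPI (h 0)
  constructor
  · by_contra hx
    exact hD (Or.inl ⟨hI, hx, Jplus_inter_nonempty hP hPI h⟩)
  · by_contra hx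
    refine hD (Or.inr (Or.inl ⟨hI, hx, ?_⟩))
    rw [← reverse_reverse φ, Jminus_reverse]
    refine Jplus_inter_nonempty hP ?_ fun t => h (-t)
    rwa [Iset, Aset_reverse, Rset_reverse, union_comm]

lemma nonSaddle_Hset [TopologicalSpace M] {φ : Flow ℝ M} {K : Set M} (hNS : NonSaddle φ K)
    (hKH : K ⊆ Hset φ K) : NonSaddle φ (Hset φ K) := by
  intro U hU
  obtain ⟨W, hKW, -, hW⟩ := hNS U (hKH.trans hU)
  refine ⟨{x ∈ U | posOrbit φ x ⊆ U ∨ negOrbit φ x ⊆ U}, fun x hx => ?_, sep_subset _ _,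
    fun x hx => hx.2⟩
  obtain ⟨T, hT, hTW⟩ := exists_time_mem hx.1 hKW 0
  have hcont : Continuous fun p : ℝ × M => φ p.1 p.2 := φ.continuous continuous_fst continuous_snd
  -- points near `x` stay in `U` during `[0, T]`
  obtain ⟨u, v, -, hv, hu, hxv, huv⟩ := generalized_tube_lemma (isCompact_Icc (a := (0 : ℝ)) (b := T))
    (isCompact_singleton (x := x)) (isOpen_interior.preimage (t := interior U) hcont) (by
      rintro ⟨t, y⟩ ⟨-, rfl⟩
      exact hU ⟨Aset_invariant φ K _ hx.1 t, Rset_invariant φ K _ hx.2 t⟩)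
  rw [mem_interior_iff_mem_nhds]
  filter_upwards [hv.mem_nhds (hxv rfl), (φ.continuous_toFun T).continuousAt.preimage_mem_nhds
    (isOpen_interior.mem_nhds hTW)] with y hyv hyW
  have hseg (t : ℝ) (h0 : 0 ≤ t) (h1 : t ≤ T) : φ t y ∈ U :=
    interior_subset (huv (⟨hu ⟨h0, h1⟩, hyv⟩ : (t, y) ∈ u ×ˢ v))
  have hshift (t : ℝ) : φ (t - T) (φ T y) = φ t y := by
    rw [← φ.map_add, sub_add_cancel]
  refine ⟨by simpa using hseg 0 le_rfl hT, ?_⟩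
  rcases hW _ (interior_subset hyW) with h | h
  · left
    rintro _ ⟨t, ht, rfl⟩
    rcases le_total t T with htT | htT
    · exact hseg t ht htT
    · exact h ⟨t - T, by linarith, hshift t⟩
  · right
    rintro _ ⟨t, ht, rfl⟩
    exact h ⟨t - T, by linarith, hshift t⟩

/-- if `K` has no dissonant points and `H(K)∖K ≠ ∅`, then `H(K)` is
compact and an isolated non-saddle invariant set. -/
theorem stmt13 {M : Type*} [MetricSpace M] [LocallyCompactSpace M]
    (φ : Flow ℝ M) (K : Set M)
    (hIso : IsIsolatedInv φ K) (hNS : NonSaddle φ K)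
    (hD : ∀ x : M, ¬ Dissonant φ K x) (hH : (Hset φ K \ K).Nonempty) :
    IsCompact (Hset φ K) ∧ FlowInvariant φ (Hset φ K) ∧
    IsIsolatedInv φ (Hset φ K) ∧ NonSaddle φ (Hset φ K) := by
  have hKH := subset_Hset hIso.1 hIso.1.isClosed hIso.2.1
  have hcomp := isCompact_Hset hIso.1 hD
  have hinv : FlowInvariant φ (Hset φ K) := fun x hx t =>
    ⟨Aset_invariant φ K x hx.1 t, Rset_invariant φ K x hx.2 t⟩
  obtain ⟨P, hP, hHP, hPI⟩ := exists_compact_between hcomp (isOpen_Iset hIso hNS)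
    (fun x hx => Or.inl hx.1)
  exact ⟨hcomp, hinv, ⟨hcomp, hinv, P, hP, hHP,
    fun x _ h => mem_Hset_of_orbit (hD x) hP hPI h⟩, nonSaddle_Hset hNS hKH⟩
end

section
/- Let K be an isolated invariant continuum of a continuous flow on ℝ² and suppose some connected component U of ℝ²∖K contains no fixed points of the flow. If U contains a trajectory γ with ω(γ) ∩ K ≠ ∅ and ω*(γ) ∩ K ≠ ∅, then a contradiction follows; that is, if U contains no fixed point, then no trajectory in U has both its omega-limit and its negative omega-limit meeting K. -/
/-!
The flow is read on `ℂ`, where separation is expressed by continuous logarithms: a closed set `X`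
separates `a` from `b` when `(z - a) / (z - b)` has no continuous logarithm on `X` (`LogEq`), and
the winding number of a curve is the change of a logarithm along it (`wind`). No form of the Jordan
curve theorem is needed: a curve passing only once through a point changes winding number there
(`winding_jump`), because `z ↦ y - z` has no logarithm on a punctured disc.

Call a point of `U` homoclinic if its orbit accumulates on `K` in both time directions; the claim is
that there is no such point.

* An orbit which returns near a non-fixed point `y` closes up, through a local section at `y`, to a
  simple closed curve separating its future from its past (`trap`). The future and the past of a
  homoclinic orbit both accumulate on the connected set `K`, so a homoclinic orbit accumulates only
  on `K` (`no_accumulation`). Its union with `K` is compact and connected, and it separates two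
  points of `U` near any point of the orbit (`exists_not_logEq`).
* The same trapping argument produces a periodic orbit in every compact invariant set without fixed
  points (`exists_periodic`), and a periodic orbit has a fixed point on it or around it
  (`periodic_fixed`): the secants `γ (q + r) - γ q` turn a nonzero number of times, and for small
  `r` they are the values on the orbit of the displacement `z ↦ ψ r z - z`.
* Fix a base point `b` of `U`, outside a large disc unless `U` lies in it. The points of `U`
  separated from `b` by `K` and a homoclinic orbit are the inside of that orbit. It is invariant,
  and a point in it whose orbit did not accumulate on `K` would have a periodic orbit of `U` in its
  limit set, which winds around points of `U` only. Hence all points inside are again homoclinic (`homo_of_inside`), and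
  their own insides are smaller.
* As `K` is isolated, each orbit of this nest leaves the isolating neighborhood, hence meets one
  fixed compact part of `U`. By compactness chains of nested homoclinic orbits are bounded, so
  Zorn's lemma gives an innermost one. But it separates points of `U`, so something lies inside it,
  and this contradiction proves the theorem (`not_homo`).
-/

open Set Filter Topology

variable {M : Type*}

/-! ### Continuous logarithms and winding numbers -/

/-- A nonvanishing function on a simply connected, locally path connected space has a continuous
logarithm. -/
theorem exists_log_of_ne_zero {X : Type*} [TopologicalSpace X] [LocallyPathConnectedSpace X]
    [SimplyConnectedSpace X] {g : X → ℂ} (hg : Continuous g) (h0 : ∀ x, g x ≠ 0) :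
    ∃ f : X → ℂ, Continuous f ∧ ∀ x, Complex.exp (f x) = g x := by
  obtain ⟨x₀⟩ : Nonempty X := inferInstance
  rcases Complex.isCoveringMapOn_exp.existsUnique_continuousMap_lifts ⟨g, hg⟩
    (a₀ := x₀) (e₀ := Complex.log (g x₀)) (Complex.exp_log (h0 x₀)) h0 with ⟨f, ⟨-, hf⟩, -⟩
  exact ⟨f, f.continuous, fun x => congrFun hf x⟩

theorem eq_of_locally_eq {X Y : Type*} [TopologicalSpace X] {S : Set X} (hS : IsPreconnected S)
    {f : X → Y} (h : ∀ x ∈ S, ∀ᶠ y in 𝓝[S] x, f y = f x) {x y : X} (hx : x ∈ S) (hy : y ∈ S) :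
    f x = f y := by
  have : PreconnectedSpace S := isPreconnected_iff_preconnectedSpace.mp hS
  have hl : IsLocallyConstant (fun z : S => f z) := by
    rw [IsLocallyConstant.iff_eventually_eq]
    rintro ⟨z, hz⟩
    have := h z hz
    rw [nhdsWithin_eq_map_subtype_coe hz, eventually_map] at this
    exact this
  exact hl.apply_eq_of_preconnectedSpace ⟨x, hx⟩ ⟨y, hy⟩

theorem eq_zero_of_exp_eq_one {z : ℂ} (h : Complex.exp z = 1) (hz : ‖z‖ < 2 * Real.pi) :
    z = 0 := by
  obtain ⟨n, rfl⟩ := Complex.exp_eq_one_iff.mp h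
  have h2 : |(n : ℝ)| < 1 := by
    have : ‖(n : ℂ) * (2 * Real.pi * Complex.I)‖ = |(n : ℝ)| * (2 * Real.pi) := by
      simp [abs_of_pos Real.pi_pos]
    rw [this] at hz
    by_contra hc
    nlinarith [Real.pi_pos]
  have h3 : |n| < 1 := by exact_mod_cast h2
  rw [Int.abs_lt_one_iff] at h3
  simp [h3]

/-- Two continuous logarithms of the same function on a preconnected set differ by a constant. -/
theorem log_sub_const {X : Type*} [TopologicalSpace X] {S : Set X} (hS : IsPreconnected S)
    {f g : X → ℂ} (hf : ContinuousOn f S) (hg : ContinuousOn g S)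
    (h : ∀ x ∈ S, Complex.exp (f x) = Complex.exp (g x)) {x y : X} (hx : x ∈ S) (hy : y ∈ S) :
    f x - g x = f y - g y := by
  refine eq_of_locally_eq hS (f := fun x => f x - g x) (fun z hz => ?_) hx hy
  have hc : ContinuousWithinAt (fun x => f x - g x) S z := (hf z hz).sub (hg z hz)
  have := Metric.tendsto_nhds.mp hc (2 * Real.pi) (by positivity)
  filter_upwards [this, self_mem_nhdsWithin] with w hw hwS
  rw [dist_eq_norm] at hw
  refine sub_eq_zero.mp (eq_zero_of_exp_eq_one ?_ hw)
  rw [Complex.exp_sub, Complex.exp_sub, Complex.exp_sub, h w hwS, h z hz,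
    div_self (Complex.exp_ne_zero _), div_self (Complex.exp_ne_zero _), div_self one_ne_zero]

/-- `z ↦ y - z` has no continuous logarithm on a punctured disc around `y`. -/
theorem no_log_punctured {y : ℂ} {ρ : ℝ} (hρ : 0 < ρ) {Λ : ℂ → ℂ}
    (hc : ContinuousOn Λ (Metric.ball y ρ \ {y}))
    (he : ∀ a ∈ Metric.ball y ρ \ {y}, Complex.exp (Λ a) = y - a) : False := by
  set c : ℝ → ℂ := fun θ => y + (ρ / 2 : ℝ) * Complex.exp (θ * Complex.I) with hcdef
  have hcc : Continuous c := by fun_prop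
  have hmem : ∀ θ, c θ ∈ Metric.ball y ρ \ {y} := by
    intro θ
    have : ‖c θ - y‖ = ρ / 2 := by
      simp [hcdef, Complex.norm_exp_ofReal_mul_I, abs_of_pos hρ]
    refine ⟨?_, ?_⟩
    · rw [Metric.mem_ball, dist_eq_norm, this]; linarith
    · intro h
      rw [mem_singleton_iff] at h
      rw [h] at this
      simp at this; linarith
  have h1 : ContinuousOn (fun θ => Λ (c θ)) (univ : Set ℝ) :=
    hc.comp hcc.continuousOn (fun θ _ => hmem θ)
  have h2 : ContinuousOn (fun θ : ℝ => θ * Complex.I + Complex.log (-(ρ / 2 : ℝ)))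
    (univ : Set ℝ) := by fun_prop
  have hne : (-(ρ / 2 : ℝ) : ℂ) ≠ 0 := by
    simp; linarith
  have := log_sub_const isPreconnected_univ h1 h2 (fun θ _ => by
    rw [he _ (hmem θ), Complex.exp_add, Complex.exp_log hne]
    simp [hcdef]; ring) (mem_univ 0) (mem_univ (2 * Real.pi))
  have hper : c (2 * Real.pi) = c 0 := by simp [hcdef]
  simp only [hper] at this
  have h3 : (2 * Real.pi : ℂ) * Complex.I = 0 := by
    have h4 := this
    push_cast at h4
    linear_combination h4
  simp at h3

/-- `L` is a continuous logarithm of `σ - a` on `[A, B]`. -/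
def IsLog (σ : ℝ → ℂ) (A B : ℝ) (a : ℂ) (L : ℝ → ℂ) : Prop :=
  ContinuousOn L (Icc A B) ∧ ∀ q ∈ Icc A B, Complex.exp (L q) = σ q - a

theorem IsLog.mono {σ : ℝ → ℂ} {A B A' B' : ℝ} {a : ℂ} {L : ℝ → ℂ} (h : IsLog σ A B a L)
    (hs : Icc A' B' ⊆ Icc A B) : IsLog σ A' B' a L :=
  ⟨h.1.mono hs, fun q hq => h.2 q (hs hq)⟩

theorem IsLog.add_const {σ : ℝ → ℂ} {A B : ℝ} {a : ℂ} {L : ℝ → ℂ} (h : IsLog σ A B a L)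
    {c : ℂ} (hc : Complex.exp c = 1) : IsLog σ A B a (fun q => L q + c) :=
  ⟨h.1.add continuousOn_const, fun q hq => by rw [Complex.exp_add, hc, mul_one, h.2 q hq]⟩

theorem IsLog.sub_eq {σ : ℝ → ℂ} {A B : ℝ} {a : ℂ} {L L' : ℝ → ℂ} (h : IsLog σ A B a L)
    (h' : IsLog σ A B a L') {p q : ℝ} (hp : p ∈ Icc A B) (hq : q ∈ Icc A B) :
    L p - L' p = L q - L' q :=
  log_sub_const isPreconnected_Icc h.1 h'.1 (fun x hx => by rw [h.2 x hx, h'.2 x hx]) hp hq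

theorem exists_isLog {σ : ℝ → ℂ} {A B : ℝ} (hAB : A ≤ B) (hσ : ContinuousOn σ (Icc A B)) {a : ℂ}
    (ha : a ∉ σ '' Icc A B) : ∃ L, IsLog σ A B a L := by
  have h0 : ∀ q ∈ Icc A B, σ q - a ≠ 0 := fun q hq h => ha ⟨q, hq, sub_eq_zero.mp h⟩
  obtain ⟨f, hf, hf'⟩ := exists_log_of_ne_zero
    (g := fun q => σ (projIcc A B hAB q) - a)
    ((hσ.comp_continuous (f := fun q => (projIcc A B hAB q : ℝ)) (by fun_prop)
      (fun q => (projIcc A B hAB q).2)).sub continuous_const) (fun q => h0 _ (projIcc A B hAB q).2)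
  refine ⟨f, hf.continuousOn, fun q hq => ?_⟩
  rw [hf', projIcc_of_mem hAB hq]

theorem exists_isLog_of_anchor {σ : ℝ → ℂ} {A B p : ℝ} (hp : p ∈ Icc A B)
    (hσ : ContinuousOn σ (Icc A B)) {a : ℂ} (ha : a ∉ σ '' Icc A B) {k : ℂ}
    (hk : Complex.exp k = σ p - a) : ∃ L, IsLog σ A B a L ∧ L p = k := by
  obtain ⟨L, hL⟩ := exists_isLog (hp.1.trans hp.2) hσ ha
  refine ⟨fun q => L q + (k - L p), hL.add_const ?_, by simp⟩
  rw [Complex.exp_sub, hk, hL.2 p hp, div_self]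
  exact fun h => ha ⟨p, hp, sub_eq_zero.mp h⟩

theorem mem_slitPlane_of_near {z a₀ a : ℂ} (h : ‖a - a₀‖ < ‖z - a₀‖) :
    (z - a) / (z - a₀) ∈ Complex.slitPlane := by
  have h0 : z - a₀ ≠ 0 := by
    intro h'; rw [h', norm_zero] at h; exact absurd h (not_lt.mpr (norm_nonneg _))
  have : (z - a) / (z - a₀) = 1 - (a - a₀) / (z - a₀) := by field_simp; ring
  rw [this]
  have h1 : ‖(a - a₀) / (z - a₀)‖ < 1 := by
    rw [norm_div, div_lt_one (norm_pos_iff.mpr h0)]; exact h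
  left
  have := (Complex.abs_re_le_norm ((a - a₀) / (z - a₀))).trans_lt h1
  rw [abs_lt] at this
  simp only [Complex.sub_re, Complex.one_re]
  linarith [this.2]

/-- A logarithm of `σ - a₀` is corrected to one of `σ - a`, for `a` near `a₀`, by a principal
logarithm. -/
theorem IsLog.eventually {σ : ℝ → ℂ} {A B : ℝ} (hσ : ContinuousOn σ (Icc A B)) {a₀ : ℂ}
    {L : ℝ → ℂ} (h : IsLog σ A B a₀ L) : ∀ᶠ a in 𝓝 a₀,
      IsLog σ A B a (fun q => L q + Complex.log ((σ q - a) / (σ q - a₀))) := by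
  have hK : IsCompact (σ '' Icc A B) := isCompact_Icc.image_of_continuousOn hσ
  have ha : a₀ ∉ σ '' Icc A B := by
    rintro ⟨q, hq, rfl⟩
    have := h.2 q hq
    simp [Complex.exp_ne_zero] at this
  obtain ⟨r, hr, hb⟩ := Metric.isOpen_iff.mp hK.isClosed.isOpen_compl a₀ ha
  filter_upwards [Metric.ball_mem_nhds a₀ hr] with a haa
  have hlt : ∀ q ∈ Icc A B, ‖a - a₀‖ < ‖σ q - a₀‖ := by
    intro q hq
    rw [Metric.mem_ball, dist_eq_norm] at haa
    refine haa.trans_le (le_of_not_gt fun hc => ?_)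
    have hqb : σ q ∈ Metric.ball a₀ r := by rwa [Metric.mem_ball, dist_eq_norm]
    exact hb hqb ⟨q, hq, rfl⟩
  have h0 : ∀ q ∈ Icc A B, σ q - a₀ ≠ 0 := fun q hq h => ha ⟨q, hq, sub_eq_zero.mp h⟩
  refine ⟨h.1.add (ContinuousOn.clog ?_ fun q hq => mem_slitPlane_of_near (hlt q hq)), ?_⟩
  · exact (hσ.sub continuousOn_const).div (hσ.sub continuousOn_const) h0
  · intro q hq
    rw [Complex.exp_add, Complex.exp_log (Complex.slitPlane_ne_zero
      (mem_slitPlane_of_near (hlt q hq))), h.2 q hq]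
    field_simp [h0 q hq]

/-- The logarithm at `r` of the curve seen from `a`, normalised at `p`, depends continuously
on `a`. -/
theorem continuousAt_transport {σ : ℝ → ℂ} {A B p r : ℝ} (hσ : ContinuousOn σ (Icc A B))
    (hp : p ∈ Icc A B) (hr : r ∈ Icc A B) {a₀ : ℂ} {κ F : ℂ → ℂ} (hκ : ContinuousAt κ a₀)
    (hF : ∀ᶠ a in 𝓝 a₀, ∃ L, IsLog σ A B a L ∧ L p = κ a ∧ L r = F a) : ContinuousAt F a₀ := by
  obtain ⟨L, hL, hLp, hLr⟩ := hF.self_of_nhds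
  have h0 : ∀ q ∈ Icc A B, σ q - a₀ ≠ 0 := fun q hq => by
    rw [← hL.2 q hq]; exact Complex.exp_ne_zero _
  have hev := hL.eventually hσ
  have hcl : ∀ q ∈ Icc A B, ContinuousAt (fun a => Complex.log ((σ q - a) / (σ q - a₀))) a₀ := by
    intro q hq
    refine ContinuousAt.clog (by fun_prop) ?_
    rw [div_self (h0 q hq)]; exact Complex.one_mem_slitPlane
  have hd : ContinuousAt (fun a => κ a - (L p + Complex.log ((σ p - a) / (σ p - a₀)))) a₀ :=
    hκ.sub (continuousAt_const.add (hcl p hp))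
  have hd0 := Metric.tendsto_nhds.mp hd (2 * Real.pi) (by positivity)
  simp only [hLp, div_self (h0 p hp), Complex.log_one, add_zero, sub_self, dist_zero_right] at hd0
  have hF' : F =ᶠ[𝓝 a₀] fun a => L r + Complex.log ((σ r - a) / (σ r - a₀)) := by
    filter_upwards [hev, hd0, hF] with a h1 h2 ⟨L', hL', hp', hr'⟩
    have h3 := hL'.sub_eq h1 hp hr
    have h4 : L' p - (L p + Complex.log ((σ p - a) / (σ p - a₀))) = 0 := by
      refine eq_zero_of_exp_eq_one ?_ ?_
      · rw [Complex.exp_sub, hL'.2 p hp, h1.2 p hp, div_self]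
        rw [← h1.2 p hp]; exact Complex.exp_ne_zero _
      · rw [hp', hLp]; exact h2
    rw [← hr']
    linear_combination h4 - h3
  exact (continuousAt_const.add (hcl r hr)).congr hF'.symm

/-- The change of `log (σ - a)` along a curve jumps when `a` crosses a point `σ m` through which
the curve passes only once: it cannot equal `κB - κA + C` on all of a small disc off the curve,
where `κA`, `κB` are local branches of `log (σ A - a)`, `log (σ B - a)`. -/
theorem winding_jump {σ : ℝ → ℂ} {A B m ρ : ℝ} (hAm : A ≤ m) (hmB : m ≤ B)
    (hσ : ContinuousOn σ (Icc A B)) (hρ : 0 < ρ) {κA κB : ℂ → ℂ} {C : ℂ}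
    (hκA : ContinuousOn κA (Metric.ball (σ m) ρ)) (hκB : ContinuousOn κB (Metric.ball (σ m) ρ))
    (hA : ∀ a ∈ Metric.ball (σ m) ρ, Complex.exp (κA a) = σ A - a)
    (hB : ∀ a ∈ Metric.ball (σ m) ρ, Complex.exp (κB a) = σ B - a)
    (hu : ∀ q ∈ Icc A m, ∀ q' ∈ Icc m B, σ q = σ q' → σ q ∈ Metric.ball (σ m) ρ → σ q = σ m)
    (hC : ∀ a ∈ Metric.ball (σ m) ρ, ∀ L, IsLog σ A B a L → L B - L A = κB a - κA a + C) :
    False := by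
  classical
  have hs1 : Icc A m ⊆ Icc A B := Icc_subset_Icc_right hmB
  have hs2 : Icc m B ⊆ Icc A B := Icc_subset_Icc_left hAm
  have hσ1 := hσ.mono hs1
  have hσ2 := hσ.mono hs2
  -- if the curve filled the disc, `hC` would be void and any constant would do
  obtain ⟨C', hC1, hC'⟩ : ∃ C' : ℂ, Complex.exp C' = 1 ∧ ∀ a ∈ Metric.ball (σ m) ρ, ∀ L,
      IsLog σ A B a L → L B - L A = κB a - κA a + C' := by
    by_cases hne : ∃ a ∈ Metric.ball (σ m) ρ, ∃ L, IsLog σ A B a L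
    · obtain ⟨a, ha, L, hL⟩ := hne
      refine ⟨C, ?_, hC⟩
      have h1 := hC a ha L hL
      have h2 : C = (L B - L A) - (κB a - κA a) := by rw [h1]; ring
      rw [h2, Complex.exp_sub, Complex.exp_sub, Complex.exp_sub, hA a ha, hB a ha,
        hL.2 A (left_mem_Icc.mpr (hAm.trans hmB)), hL.2 B (right_mem_Icc.mpr (hAm.trans hmB)),
        div_self]
      rw [← hA a ha, ← hB a ha]
      exact div_ne_zero (Complex.exp_ne_zero _) (Complex.exp_ne_zero _)
    · push Not at hne
      exact ⟨0, Complex.exp_zero, fun a ha L hL => absurd hL (hne a ha L)⟩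
  have e1 : ∀ a, ∃ v, a ∈ Metric.ball (σ m) ρ → a ∉ σ '' Icc A m →
      ∃ L, IsLog σ A m a L ∧ L A = κA a ∧ L m = v := by
    intro a
    by_cases h : a ∈ Metric.ball (σ m) ρ ∧ a ∉ σ '' Icc A m
    · obtain ⟨L, hL, hL'⟩ := exists_isLog_of_anchor (left_mem_Icc.mpr hAm) hσ1 h.2 (hA a h.1)
      exact ⟨L m, fun _ _ => ⟨L, hL, hL', rfl⟩⟩
    · exact ⟨0, fun h1 h2 => absurd ⟨h1, h2⟩ h⟩
  have e2 : ∀ a, ∃ v, a ∈ Metric.ball (σ m) ρ → a ∉ σ '' Icc m B →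
      ∃ L, IsLog σ m B a L ∧ L B = κB a + C' ∧ L m = v := by
    intro a
    by_cases h : a ∈ Metric.ball (σ m) ρ ∧ a ∉ σ '' Icc m B
    · obtain ⟨L, hL, hL'⟩ := exists_isLog_of_anchor (right_mem_Icc.mpr hmB) hσ2 h.2
        (k := κB a + C') (by rw [Complex.exp_add, hC1, mul_one, hB a h.1])
      exact ⟨L m, fun _ _ => ⟨L, hL, hL', rfl⟩⟩
    · exact ⟨0, fun h1 h2 => absurd ⟨h1, h2⟩ h⟩
  choose F hF using e1
  choose G hG using e2
  have hFG : ∀ a ∈ Metric.ball (σ m) ρ, a ∉ σ '' Icc A m → a ∉ σ '' Icc m B → F a = G a := by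
    intro a ha h1 h2
    have h12 : a ∉ σ '' Icc A B := by
      rintro ⟨q, hq, rfl⟩
      rcases le_total q m with h | h
      · exact h1 ⟨q, ⟨hq.1, h⟩, rfl⟩
      · exact h2 ⟨q, ⟨h, hq.2⟩, rfl⟩
    obtain ⟨L, hL, hLA⟩ := exists_isLog_of_anchor (left_mem_Icc.mpr (hAm.trans hmB)) hσ h12
      (hA a ha)
    have h3 := hC' a ha L hL
    obtain ⟨L1, hL1, hL1A, hL1m⟩ := hF a ha h1
    obtain ⟨L2, hL2, hL2B, hL2m⟩ := hG a ha h2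
    have h4 := (hL.mono hs1).sub_eq hL1 (left_mem_Icc.mpr hAm) (right_mem_Icc.mpr hAm)
    have h5 := (hL.mono hs2).sub_eq hL2 (left_mem_Icc.mpr hmB) (right_mem_Icc.mpr hmB)
    rw [← hL1m, ← hL2m]
    linear_combination h4 + h5 + h3 - hLA + hLA - hL2B + hL1A
  have hcl1 : IsOpen (σ '' Icc A m)ᶜ :=
    (isCompact_Icc.image_of_continuousOn hσ1).isClosed.isOpen_compl
  have hcl2 : IsOpen (σ '' Icc m B)ᶜ :=
    (isCompact_Icc.image_of_continuousOn hσ2).isClosed.isOpen_compl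
  have hno : ∀ a ∈ Metric.ball (σ m) ρ \ {σ m}, a ∈ σ '' Icc A m → a ∉ σ '' Icc m B := by
    rintro a ⟨ha, hne⟩ ⟨q, hq, rfl⟩ ⟨q', hq', h⟩
    exact hne (hu q hq q' hq' h.symm ha)
  refine no_log_punctured hρ (y := σ m) (Λ := fun a => if a ∉ σ '' Icc A m then F a else G a)
    ?_ ?_
  · intro a ha
    refine ContinuousAt.continuousWithinAt ?_
    have hb : Metric.ball (σ m) ρ ∈ 𝓝 a := Metric.isOpen_ball.mem_nhds ha.1
    by_cases h1 : a ∈ σ '' Icc A m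
    · have h2 := hno a ha h1
      have hc : ContinuousAt G a := continuousAt_transport hσ2 (right_mem_Icc.mpr hmB)
        (left_mem_Icc.mpr hmB) (κ := fun a => κB a + C')
        ((hκB.continuousAt hb).add continuousAt_const)
        (by filter_upwards [hb, hcl2.mem_nhds h2] with b hb1 hb2 using hG b hb1 hb2)
      refine hc.congr ?_
      filter_upwards [hb, hcl2.mem_nhds h2] with b hb1 hb2
      split_ifs with h
      · rfl
      · exact (hFG b hb1 h hb2).symm
    · have hc : ContinuousAt F a := continuousAt_transport hσ1 (left_mem_Icc.mpr hAm)
        (right_mem_Icc.mpr hAm) (hκA.continuousAt hb)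
        (by filter_upwards [hb, hcl1.mem_nhds h1] with b hb1 hb2 using hF b hb1 hb2)
      refine hc.congr ?_
      filter_upwards [hcl1.mem_nhds h1] with b hb2
      exact (if_pos hb2).symm
  · intro a ha
    by_cases h1 : a ∈ σ '' Icc A m
    · obtain ⟨L, hL, -, hLm⟩ := hG a ha.1 (hno a ha h1)
      simp only [h1, not_true_eq_false, if_false]
      rw [← hLm, hL.2 m (left_mem_Icc.mpr hmB)]
    · obtain ⟨L, hL, -, hLm⟩ := hF a ha.1 h1
      simp only [h1, not_false_eq_true, if_true]
      rw [← hLm, hL.2 m (right_mem_Icc.mpr hAm)]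

/-- A local branch of `log (p - a)` for `a` near a point `y` other than `p`. -/
theorem exists_log_branch {p y : ℂ} {ρ : ℝ} (h : ρ ≤ ‖p - y‖) (hρ : 0 < ρ) :
    ∃ κ : ℂ → ℂ, ContinuousOn κ (Metric.ball y ρ) ∧
      ∀ a ∈ Metric.ball y ρ, Complex.exp (κ a) = p - a := by
  have h0 : p - y ≠ 0 := norm_pos_iff.mp (hρ.trans_le h)
  have hs : ∀ a ∈ Metric.ball y ρ, (p - a) / (p - y) ∈ Complex.slitPlane := fun a ha =>
    mem_slitPlane_of_near (by rw [Metric.mem_ball, dist_eq_norm] at ha; linarith)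
  refine ⟨fun a => Complex.log ((p - a) / (p - y)) + Complex.log (p - y),
    (ContinuousOn.clog (by fun_prop) hs).add continuousOn_const, fun a ha => ?_⟩
  rw [Complex.exp_add, Complex.exp_log h0, Complex.exp_log (Complex.slitPlane_ne_zero (hs a ha)),
    div_mul_cancel₀ _ h0]

open Classical in
/-- The change of a continuous logarithm of `σ - a` along `[A, B]`; for a closed curve this is
`2πi` times the winding number around `a`. It is set to `0` if there is no such logarithm. -/
noncomputable def wind (σ : ℝ → ℂ) (A B : ℝ) (a : ℂ) : ℂ :=
  if h : ∃ L, IsLog σ A B a L then h.choose B - h.choose A else 0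

theorem IsLog.wind_eq {σ : ℝ → ℂ} {A B : ℝ} (hAB : A ≤ B) {a : ℂ} {L : ℝ → ℂ}
    (h : IsLog σ A B a L) : wind σ A B a = L B - L A := by
  have he : ∃ L, IsLog σ A B a L := ⟨L, h⟩
  rw [wind, dif_pos he]
  linear_combination -(he.choose_spec.sub_eq h (left_mem_Icc.mpr hAB) (right_mem_Icc.mpr hAB))

theorem wind_const {σ : ℝ → ℂ} {A B : ℝ} (hAB : A ≤ B) (hσ : ContinuousOn σ (Icc A B))
    (hc : σ A = σ B) {S : Set ℂ} (hS : IsPreconnected S) (hd : ∀ a ∈ S, a ∉ σ '' Icc A B) {a b : ℂ}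
    (ha : a ∈ S) (hb : b ∈ S) : wind σ A B a = wind σ A B b := by
  refine eq_of_locally_eq hS (fun z hz => ?_) ha hb
  obtain ⟨L, hL⟩ := exists_isLog hAB hσ (hd z hz)
  filter_upwards [mem_nhdsWithin_of_mem_nhds (hL.eventually hσ)] with w hw
  rw [hw.wind_eq hAB, hL.wind_eq hAB, hc]; ring

/-- The winding number of a closed curve is an integer. -/
theorem wind_int {σ : ℝ → ℂ} {A B : ℝ} (hAB : A ≤ B) (hσ : ContinuousOn σ (Icc A B))
    (hc : σ A = σ B) {a : ℂ} (ha : a ∉ σ '' Icc A B) :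
    ∃ n : ℤ, wind σ A B a = n * (2 * Real.pi * Complex.I) := by
  obtain ⟨L, hL⟩ := exists_isLog hAB hσ ha
  rw [hL.wind_eq hAB]
  refine Complex.exp_eq_one_iff.mp ?_
  rw [Complex.exp_sub, hL.2 A (left_mem_Icc.mpr hAB), hL.2 B (right_mem_Icc.mpr hAB), hc, div_self]
  exact fun h => ha ⟨B, right_mem_Icc.mpr hAB, sub_eq_zero.mp h⟩

/-- A closed curve does not wind around points outside a disc which contains it. -/
theorem wind_far {σ : ℝ → ℂ} {A B R : ℝ} (hAB : A ≤ B) (hσ : ContinuousOn σ (Icc A B))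
    (hc : σ A = σ B) (hR : σ '' Icc A B ⊆ Metric.closedBall 0 R) {a : ℂ} (ha : R < ‖a‖) :
    wind σ A B a = 0 := by
  have h : ∀ q ∈ Icc A B, ‖σ q‖ < ‖a‖ := fun q hq =>
    (mem_closedBall_zero_iff.mp (hR ⟨q, hq, rfl⟩)).trans_lt ha
  have h0 : a ≠ 0 := by
    rintro rfl
    have := h A (left_mem_Icc.mpr hAB)
    rw [norm_zero] at this
    exact absurd this (not_lt.mpr (norm_nonneg _))
  have hs : ∀ q ∈ Icc A B, (a - σ q) / (a - 0) ∈ Complex.slitPlane := fun q hq =>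
    mem_slitPlane_of_near (by simpa using h q hq)
  have hL : IsLog σ A B a (fun q => Complex.log ((a - σ q) / (a - 0)) + Complex.log (-a)) := by
    refine ⟨(ContinuousOn.clog ?_ hs).add continuousOn_const, fun q hq => ?_⟩
    · exact (continuousOn_const.sub hσ).div_const _
    · rw [Complex.exp_add, Complex.exp_log (Complex.slitPlane_ne_zero (hs q hq)),
        Complex.exp_log (neg_ne_zero.mpr h0), sub_zero]
      field_simp; ring
  rw [hL.wind_eq hAB, hc]; ring

/-- Near a point through which a closed curve passes once, the winding number is not constant. -/
theorem wind_jump {σ : ℝ → ℂ} {A B m ρ : ℝ} (hAm : A ≤ m) (hmB : m ≤ B)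
    (hσ : ContinuousOn σ (Icc A B)) (hc : σ A = σ B) (hρ : 0 < ρ) (hρ' : ρ ≤ ‖σ A - σ m‖)
    (hu : ∀ q ∈ Icc A m, ∀ q' ∈ Icc m B, σ q = σ q' → σ q ∈ Metric.ball (σ m) ρ → σ q = σ m)
    (C : ℂ) : ∃ a ∈ Metric.ball (σ m) ρ, a ∉ σ '' Icc A B ∧ wind σ A B a ≠ C := by
  by_contra! hcon
  obtain ⟨κ, hκ, hκ'⟩ := exists_log_branch hρ' hρ
  refine winding_jump hAm hmB hσ hρ hκ hκ hκ' (hc ▸ hκ') hu (C := C) (fun a ha L hL => ?_)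
  rw [← hL.wind_eq (hAm.trans hmB), hcon a ha, sub_self, zero_add]
  rintro ⟨q, hq, rfl⟩
  have := hL.2 q hq
  simp [Complex.exp_ne_zero] at this

/-! ### Local sections -/

theorem Flow.cont_pair (ψ : Flow ℝ ℂ) : Continuous (fun p : ℝ × ℂ => ψ p.1 p.2) :=
  ψ.continuous continuous_fst continuous_snd

theorem Flow.cont_time (ψ : Flow ℝ ℂ) (x : ℂ) : Continuous (fun q => ψ q x) :=
  ψ.continuous continuous_id continuous_const

theorem Flow.cont_space (ψ : Flow ℝ ℂ) (q : ℝ) : Continuous (fun x => ψ q x) :=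
  ψ.continuous continuous_const continuous_id

/-- A local section through a non-fixed point `y`: nearby points `x` are moved by a small time
`T x` onto a set that no orbit meets twice within time `ε`. The section is a level set of the
average of a linear functional along a short orbit piece. -/
theorem exists_local_section (ψ : Flow ℝ ℂ) {y : ℂ} (hy : ∃ κ, ψ κ y ≠ y) {O : Set ℂ}
    (hO : O ∈ 𝓝 y) : ∃ ε > 0, ∃ ρ > 0, ∃ T : ℂ → ℝ, ε ≤ 1 / 2 ∧
      ContinuousOn T (Metric.ball y ρ) ∧ (∀ x ∈ Metric.ball y ρ, |T x| ≤ 1 / 2) ∧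
      (∀ x ∈ Metric.ball y ρ, ψ (T x) x ∈ O) ∧
      ∀ x ∈ Metric.ball y ρ, ∀ x' ∈ Metric.ball y ρ, ∀ δ : ℝ, δ ≠ 0 → |δ| ≤ ε →
        ψ δ (ψ (T x) x) ≠ ψ (T x') x' := by
  obtain ⟨κ, hκ0, hκ⟩ : ∃ κ > 0, ψ κ y ≠ y := by
    obtain ⟨κ, hκ⟩ := hy
    rcases lt_trichotomy κ 0 with h | h | h
    · refine ⟨-κ, by linarith, fun h' => hκ ?_⟩
      conv_lhs => rw [← h']
      rw [← ψ.map_add]; simp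
    · subst h; simp at hκ
    · exact ⟨κ, h, hκ⟩
  have hcp := ψ.cont_pair
  set d : ℂ := ψ κ y - y with hd
  have hd0 : d ≠ 0 := sub_ne_zero.mpr hκ
  set P : ℂ → ℝ → ℝ := fun x q => inner ℝ (ψ q x) d with hP
  have hPc : Continuous (fun p : ℂ × ℝ => P p.1 p.2) :=
    (hcp.comp (continuous_snd.prodMk continuous_fst)).inner continuous_const
  have hPx : ∀ x, Continuous (P x) := fun x => hPc.comp (by fun_prop : Continuous fun q => (x, q))
  set f : ℂ → ℝ := fun x => ∫ q in (0:ℝ)..κ, P x q with hf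
  have hfc : Continuous f := intervalIntegral.continuous_parametric_intervalIntegral_of_continuous'
    hPc 0 κ
  have hder : ∀ x q, HasDerivAt (fun q => f (ψ q x)) (P x (q + κ) - P x q) q := by
    intro x q
    have h1 : (fun q => f (ψ q x)) = fun q => (∫ s in (0:ℝ)..(q + κ), P x s) -
        ∫ s in (0:ℝ)..q, P x s := by
      ext q
      rw [intervalIntegral.integral_interval_sub_left ((hPx x).intervalIntegrable _ _)
        ((hPx x).intervalIntegrable _ _)]
      simp only [hf, hP, ← ψ.map_add]
      have := intervalIntegral.integral_comp_add_right (a := 0) (b := κ) (fun s => P x s) q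
      simp only [zero_add, hP] at this
      rw [this, add_comm]
    rw [h1]
    refine HasDerivAt.sub ?_ ?_
    · exact HasDerivAt.comp_add_const q κ (intervalIntegral.integral_hasDerivAt_right
        ((hPx x).intervalIntegrable _ _) ((hPx x).stronglyMeasurableAtFilter _ _)
        (hPx x).continuousAt)
    · exact intervalIntegral.integral_hasDerivAt_right
        ((hPx x).intervalIntegrable _ _) ((hPx x).stronglyMeasurableAtFilter _ _)
        (hPx x).continuousAt
  have hpos : 0 < P y (0 + κ) - P y 0 := by
    simp only [hP, ← inner_sub_left, zero_add]
    rw [ψ.map_zero_apply, ← hd]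
    exact real_inner_self_pos.mpr hd0
  have hev : ∀ᶠ p : ℂ × ℝ in 𝓝 (y, 0), 0 < P p.1 (p.2 + κ) - P p.1 p.2 ∧ ψ p.2 p.1 ∈ O := by
    refine Filter.Eventually.and ?_ ?_
    · have : Continuous fun p : ℂ × ℝ => P p.1 (p.2 + κ) - P p.1 p.2 :=
        (hPc.comp (by fun_prop : Continuous fun p : ℂ × ℝ => (p.1, p.2 + κ))).sub hPc
      exact this.continuousAt.eventually (lt_mem_nhds hpos)
    · have : Continuous fun p : ℂ × ℝ => ψ p.2 p.1 :=
        hcp.comp (continuous_snd.prodMk continuous_fst)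
      refine this.continuousAt.eventually (?_ : ∀ᶠ z in 𝓝 (ψ 0 y), z ∈ O)
      rw [ψ.map_zero_apply]; exact hO
  obtain ⟨r, hr, hball⟩ := Metric.eventually_nhds_iff_ball.mp hev
  set η : ℝ := min (r / 2) (1 / 2) / 2 with hη
  have hη0 : 0 < η := by positivity
  have hη1 : 2 * η ≤ 1 / 2 := by rw [hη]; linarith [min_le_right (r / 2) (1 / 2)]
  have hη2 : 2 * η ≤ r / 2 := by rw [hη]; linarith [min_le_left (r / 2) (1 / 2)]
  have hmem : ∀ x ∈ Metric.ball y r, ∀ q : ℝ, |q| ≤ 2 * η → (x, q) ∈ Metric.ball (y, (0:ℝ)) r := by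
    intro x hx q hq
    rw [Metric.mem_ball, Prod.dist_eq, max_lt_iff]
    exact ⟨hx, by simp; linarith⟩
  have hmono : ∀ x ∈ Metric.ball y r, StrictMonoOn (fun q => f (ψ q x)) (Icc (-(2 * η)) (2 * η)) := by
    intro x hx
    refine strictMonoOn_of_deriv_pos (convex_Icc _ _) (hfc.comp (ψ.cont_time x)).continuousOn ?_
    intro q hq
    rw [interior_Icc] at hq
    rw [(hder x q).deriv]
    exact (hball _ (hmem x hx q (abs_le.mpr ⟨hq.1.le, hq.2.le⟩))).1
  have hFc : Continuous fun p : ℂ × ℝ => f (ψ p.2 p.1) :=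
    hfc.comp (hcp.comp (continuous_snd.prodMk continuous_fst))
  have hFx : ∀ q, Continuous fun x => f (ψ q x) := fun q => hfc.comp (ψ.cont_space q)
  have hyb : y ∈ Metric.ball y r := Metric.mem_ball_self hr
  have hev2 : ∀ᶠ x in 𝓝 y, f (ψ (-η) x) < f y ∧ f y < f (ψ η x) := by
    have h1 : f (ψ (-η) y) < f y := by
      have := hmono y hyb ⟨by linarith, by linarith⟩ ⟨by linarith, by linarith⟩
        (neg_lt_zero.mpr hη0)
      simpa using this
    have h2 : f y < f (ψ η y) := by
      have := hmono y hyb ⟨by linarith, by linarith⟩ ⟨by linarith, by linarith⟩ hη0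
      simpa using this
    exact ((hFx _).continuousAt.eventually (gt_mem_nhds h1)).and
      ((hFx _).continuousAt.eventually (lt_mem_nhds h2))
  obtain ⟨ρ', hρ', hb2⟩ := Metric.eventually_nhds_iff_ball.mp hev2
  set ρ := min ρ' r
  have hρr : ∀ x ∈ Metric.ball y ρ, x ∈ Metric.ball y r :=
    fun x hx => Metric.ball_subset_ball (min_le_right _ _) hx
  have hex : ∀ x, ∃ τ : ℝ, x ∈ Metric.ball y ρ → (-η < τ ∧ τ < η) ∧ f (ψ τ x) = f y := by
    intro x
    by_cases hx : x ∈ Metric.ball y ρ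
    · have h := hb2 x (Metric.ball_subset_ball (min_le_left _ _) hx)
      obtain ⟨τ, hτ, hτ'⟩ := intermediate_value_Ioo (by linarith : -η ≤ η)
        (hfc.comp (ψ.cont_time x)).continuousOn h
      exact ⟨τ, fun _ => ⟨hτ, hτ'⟩⟩
    · exact ⟨0, fun h => absurd h hx⟩
  choose T hT using hex
  refine ⟨η, hη0, ρ, lt_min hρ' hr, T, by linarith, ?_, ?_, ?_, ?_⟩
  · intro x hx
    refine ContinuousAt.continuousWithinAt ?_
    obtain ⟨⟨hT1, hT2⟩, hT3⟩ := hT x hx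
    rw [Metric.continuousAt_iff']
    intro e he
    set e' := min e η / 2
    have he' : 0 < e' := by positivity
    have hee : e' < e := by
      have := min_le_left e η
      simp only [e']; linarith
    have heη : e' < η := by
      have := min_le_right e η
      simp only [e']; linarith
    have h1 : f (ψ (T x - e') x) < f y := by
      rw [← hT3]
      exact hmono x (hρr x hx) ⟨by linarith, by linarith⟩ ⟨by linarith, by linarith⟩
        (by linarith)
    have h2 : f y < f (ψ (T x + e') x) := by
      rw [← hT3]
      exact hmono x (hρr x hx) ⟨by linarith, by linarith⟩ ⟨by linarith, by linarith⟩
        (by linarith)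
    filter_upwards [(hFx _).continuousAt.eventually (gt_mem_nhds h1),
      (hFx _).continuousAt.eventually (lt_mem_nhds h2),
      Metric.isOpen_ball.mem_nhds hx] with z hz1 hz2 hz3
    obtain ⟨⟨hz4, hz5⟩, hz6⟩ := hT z hz3
    have hm := hmono z (hρr z hz3)
    rw [← hz6] at hz1 hz2
    have hz7 := (hm.lt_iff_lt ⟨by linarith, by linarith⟩ ⟨by linarith, by linarith⟩).mp hz1
    have hz8 := (hm.lt_iff_lt ⟨by linarith, by linarith⟩ ⟨by linarith, by linarith⟩).mp hz2
    rw [Real.dist_eq, abs_lt]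
    constructor <;> linarith
  · intro x hx
    have := (hT x hx).1
    exact abs_le.mpr ⟨by linarith, by linarith⟩
  · intro x hx
    have := (hT x hx).1
    exact (hball _ (hmem x (hρr x hx) (T x) (abs_le.mpr ⟨by linarith, by linarith⟩))).2
  · intro x hx x' hx' δ hδ hδ' h
    have hm := hmono x (hρr x hx)
    have h1 := (hT x hx)
    rw [abs_le] at hδ'
    rw [← ψ.map_add] at h
    have h2 : f (ψ (δ + T x) x) = f (ψ (T x) x) := by rw [h, (hT x' hx').2, h1.2]
    have h3 := hm.injOn ⟨by linarith, by linarith⟩ ⟨by linarith, by linarith⟩ h2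
    apply hδ; linarith

/-! ### A recurrent orbit is trapped -/

theorem first_hit {g : ℝ → ℂ} (hg : Continuous g) {S : Set ℂ} (hS : IsClosed S) (h0 : g 0 ∉ S)
    {r : ℝ} (hr : 0 ≤ r) (hrS : g r ∈ S) :
    ∃ q, 0 < q ∧ q ≤ r ∧ g q ∈ S ∧ ∀ q', 0 ≤ q' → q' < q → g q' ∉ S := by
  have hc : IsCompact (Icc 0 r ∩ g ⁻¹' S) := isCompact_Icc.inter_right (hS.preimage hg)
  obtain ⟨q, ⟨⟨hq0, hqr⟩, hqS⟩, hmin⟩ := hc.exists_isLeast ⟨r, ⟨hr, le_rfl⟩, hrS⟩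
  refine ⟨q, lt_of_le_of_ne hq0 fun h => h0 (h ▸ hqS), hqr, hqS, fun q' h1 h2 h3 => ?_⟩
  exact absurd (hmin ⟨⟨h1, by linarith⟩, h3⟩) (not_le.mpr h2)

/-- A simple closed curve made of the orbit arc from `x·s` to `x·t` and of a cross-section `c`
leading back from `x·t` to `x·s` separates the later orbit from the earlier one: orbits cross `c`
in one direction only, and the winding number tells the two sides of the curve apart. -/
theorem trap_core (ψ : Flow ℝ ℂ) {x : ℂ} (hinj : Function.Injective fun q => ψ q x) {s t ε : ℝ}
    (hst : s < t) (hε : 0 < ε) {c : ℝ → ℂ} (hc : ContinuousOn c (Icc 0 1)) (hc0 : c 0 = ψ t x)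
    (hc1 : c 1 = ψ s x) (hcd : ∀ v ∈ Ioo (0:ℝ) 1, ∀ q ∈ Icc s t, c v ≠ ψ q x)
    (hcs : ∀ v ∈ Icc (0:ℝ) 1, ∀ v' ∈ Icc (0:ℝ) 1, ∀ δ : ℝ, δ ≠ 0 → |δ| ≤ ε → ψ δ (c v) ≠ c v') :
    ∃ (S : Set ℂ) (w : ℂ → ℂ) (mp mm : ℂ), IsCompact S ∧
      S ⊆ (fun q => ψ q x) '' Icc s t ∪ c '' Icc 0 1 ∧
      (∀ D : Set ℂ, IsPreconnected D → (∀ a ∈ D, a ∉ S) → ∀ a ∈ D, ∀ b ∈ D, w a = w b) ∧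
      mp ≠ mm ∧ (∀ q, t < q → ψ q x ∉ S ∧ w (ψ q x) = mp) ∧
      (∀ q, q < s → ψ q x ∉ S ∧ w (ψ q x) = mm) := by
  classical
  set γ : ℝ → ℂ := fun q => ψ q x with hγ
  have hγc : Continuous γ := ψ.cont_time x
  have hsh : ∀ δ q, ψ δ (γ q) = γ (δ + q) := fun δ q => (ψ.map_add δ q x).symm
  have hback : ∀ δ a b, ψ δ a = b → a = ψ (-δ) b := by
    rintro δ a b rfl
    rw [← ψ.map_add]; simp
  set σ : ℝ → ℂ := fun q => if q ≤ t then γ q else c (q - t) with hσd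
  have hσ1 : ∀ q, q ≤ t → σ q = γ q := fun q hq => if_pos hq
  have hσ2 : ∀ q, t ≤ q → σ q = c (q - t) := by
    intro q hq
    rcases hq.lt_or_eq with h | h
    · exact if_neg (not_le.mpr h)
    · subst h; simp [hσd, hc0, hγ]
  have hσc : ContinuousOn σ (Icc s (t + 1)) := by
    have h1 : ContinuousOn σ (Icc s t) :=
      hγc.continuousOn.congr fun q hq => hσ1 q hq.2
    have h2 : ContinuousOn σ (Icc t (t + 1)) := by
      refine ContinuousOn.congr (f := fun q => c (q - t)) ?_ fun q hq => hσ2 q hq.1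
      exact hc.comp (by fun_prop) fun q hq => ⟨by linarith [hq.1], by linarith [hq.2]⟩
    rw [← Icc_union_Icc_eq_Icc hst.le (by linarith : t ≤ t + 1)]
    exact h1.union_of_isClosed h2 isClosed_Icc isClosed_Icc
  set S := σ '' Icc s (t + 1) with hS
  have hScpt : IsCompact S := isCompact_Icc.image_of_continuousOn hσc
  have hSγ : ∀ q ∈ Icc s t, γ q ∈ S := fun q hq =>
    ⟨q, ⟨hq.1, by linarith [hq.2]⟩, hσ1 q hq.2⟩
  have hSc : ∀ v ∈ Icc (0:ℝ) 1, c v ∈ S := fun v hv =>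
    ⟨t + v, ⟨by linarith [hv.1], by linarith [hv.2]⟩, by
      rw [hσ2 _ (by linarith [hv.1])]; congr 1; ring⟩
  have hSsub : ∀ a ∈ S, (∃ q ∈ Icc s t, a = γ q) ∨ ∃ v ∈ Icc (0:ℝ) 1, a = c v := by
    rintro a ⟨q, hq, rfl⟩
    rcases le_total q t with h | h
    · exact Or.inl ⟨q, ⟨hq.1, h⟩, hσ1 q h⟩
    · exact Or.inr ⟨q - t, ⟨by linarith, by linarith [hq.2]⟩, hσ2 q h⟩
  have hclosed : σ s = σ (t + 1) := by
    rw [hσ1 s hst.le, hσ2 _ (by linarith), add_sub_cancel_left, hc1]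
  set w : ℂ → ℂ := wind σ s (t + 1) with hw
  have hwc : ∀ D : Set ℂ, IsPreconnected D → (∀ a ∈ D, a ∉ S) → ∀ a ∈ D, ∀ b ∈ D, w a = w b :=
    fun D hD hd a ha b hb => wind_const (by linarith) hσc hclosed hD hd ha hb
  -- just after the cross-section
  have hVp : ∀ v ∈ Ico (0:ℝ) 1, ∀ δ ∈ Ioc 0 ε, ψ δ (c v) ∉ S := by
    intro v hv δ hδ h
    have hvI : v ∈ Icc (0:ℝ) 1 := ⟨hv.1, hv.2.le⟩
    rcases hSsub _ h with ⟨q, hq, h⟩ | ⟨v', hv', h⟩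
    · have h1 : c v = γ (-δ + q) := by rw [← hsh]; exact hback _ _ _ h
      rcases hv.1.eq_or_lt with h0 | h0
      · rw [← h0, hc0] at h1
        have := hinj h1
        linarith [hq.2, hδ.1]
      · by_cases h2 : s ≤ -δ + q
        · exact hcd v ⟨h0, hv.2⟩ _ ⟨h2, by linarith [hδ.1, hq.2]⟩ h1
        · push Not at h2
          refine hcs v hvI 1 (by simp) (s - (-δ + q)) (by linarith) ?_ ?_
          · rw [abs_of_pos (by linarith)]; linarith [hδ.2, hq.1]
          · rw [h1, hsh, hc1]; simp [hγ]
    · exact hcs v hvI v' hv' δ hδ.1.ne' (by rw [abs_of_pos hδ.1]; exact hδ.2) h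
  -- just before the cross-section
  have hVm : ∀ v ∈ Ioc (0:ℝ) 1, ∀ δ ∈ Ioc 0 ε, ψ (-δ) (c v) ∉ S := by
    intro v hv δ hδ h
    have hvI : v ∈ Icc (0:ℝ) 1 := ⟨hv.1.le, hv.2⟩
    rcases hSsub _ h with ⟨q, hq, h⟩ | ⟨v', hv', h⟩
    · have h1 : c v = γ (δ + q) := by
        rw [← hsh]; have := hback _ _ _ h; rwa [neg_neg] at this
      rcases hv.2.eq_or_lt with h0 | h0
      · rw [h0, hc1] at h1
        have := hinj h1
        linarith [hq.1, hδ.1]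
      · by_cases h2 : δ + q ≤ t
        · exact hcd v ⟨hv.1, h0⟩ _ ⟨by linarith [hδ.1, hq.1], h2⟩ h1
        · push Not at h2
          refine hcs v hvI 0 (by simp) (t - (δ + q)) (by linarith) ?_ ?_
          · rw [abs_of_neg (by linarith)]; linarith [hδ.2, hq.2]
          · rw [h1, hsh, hc0]; simp [hγ]
    · exact hcs v hvI v' hv' (-δ) (by linarith [hδ.1]) (by
        rw [abs_neg, abs_of_pos hδ.1]; exact hδ.2) h
  have himg : ∀ (J : Set ℝ) (k : ℝ), Convex ℝ J → J ⊆ Icc 0 1 →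
      IsPreconnected ((fun p : ℝ × ℝ => ψ (k * p.1) (c p.2)) '' (Ioc 0 ε ×ˢ J)) := by
    intro J k hJ hJ1
    refine (isPreconnected_Ioc.prod hJ.isPreconnected).image _ ?_
    refine ψ.cont_pair.comp_continuousOn (f := fun p : ℝ × ℝ => (k * p.1, c p.2)) ?_
    refine ContinuousOn.prodMk (by fun_prop) (hc.comp continuousOn_snd fun p hp => hJ1 hp.2)
  set mp := w (ψ ε (c 0)) with hmp
  set mm := w (ψ (-ε) (c 1)) with hmm
  have hwp : ∀ v ∈ Ico (0:ℝ) 1, ∀ δ ∈ Ioc 0 ε, w (ψ δ (c v)) = mp := by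
    intro v hv δ hδ
    refine hwc _ (himg (Ico 0 1) 1 (convex_Ico 0 1) Ico_subset_Icc_self) ?_ _
      ⟨(δ, v), ⟨hδ, hv⟩, by simp⟩ _ ⟨(ε, 0), ⟨⟨hε, le_rfl⟩, by simp⟩, by simp⟩
    rintro _ ⟨p, hp, rfl⟩
    simpa using hVp p.2 hp.2 p.1 hp.1
  have hwm : ∀ v ∈ Ioc (0:ℝ) 1, ∀ δ ∈ Ioc 0 ε, w (ψ (-δ) (c v)) = mm := by
    intro v hv δ hδ
    refine hwc _ (himg (Ioc 0 1) (-1) (convex_Ioc 0 1) Ioc_subset_Icc_self) ?_ _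
      ⟨(δ, v), ⟨hδ, hv⟩, by simp⟩ _ ⟨(ε, 1), ⟨⟨hε, le_rfl⟩, by simp⟩, by simp⟩
    rintro _ ⟨p, hp, rfl⟩
    simpa using hVm p.2 hp.2 p.1 hp.1
  have hwcurve : ∀ (g : ℝ → ℂ) (q : ℝ), Continuous g → 0 ≤ q →
      (∀ q', 0 ≤ q' → q' ≤ q → g q' ∉ S) → w (g 0) = w (g q) := by
    intro g q hg hq h
    refine hwc (g '' Icc 0 q) (isPreconnected_Icc.image _ hg.continuousOn) ?_ _
      ⟨0, ⟨le_rfl, hq⟩, rfl⟩ _ ⟨q, ⟨hq, le_rfl⟩, rfl⟩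
    rintro _ ⟨q', h', rfl⟩
    exact h q' h'.1 h'.2
  have hit_fwd : ∀ a, a ∉ S → ∀ r, 0 ≤ r → ψ r a ∈ S → w a = mm := by
    intro a ha r hr hrS
    obtain ⟨q, hq0, -, hqS, hq⟩ := first_hit (g := fun q => ψ q a) (ψ.cont_time a)
      hScpt.isClosed (by simpa using ha) hr hrS
    have hv : ∃ v ∈ Ioc (0:ℝ) 1, ψ q a = c v := by
      have key : ∀ q₁ ∈ Ioc s t, ψ q a ≠ γ q₁ := by
        intro q₁ hq₁ h
        set δ := min q (q₁ - s)
        have hδ : 0 < δ := lt_min hq0 (by linarith [hq₁.1])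
        have hδ1 : δ ≤ q := min_le_left _ _
        have hδ2 : δ ≤ q₁ - s := min_le_right _ _
        refine hq (q - δ) (by linarith) (by linarith) ?_
        have h1 : ψ (q - δ) a = γ (-δ + q₁) := by
          rw [← hsh, ← h, ← ψ.map_add]; congr 1; ring
        simp only [h1]
        exact hSγ _ ⟨by linarith, by linarith [hq₁.2]⟩
      rcases hSsub _ hqS with ⟨q₁, hq₁, h⟩ | ⟨v, hv, h⟩
      · rcases hq₁.1.eq_or_lt with h0 | h0
        · exact ⟨1, by simp, by rw [h, ← h0, hc1]⟩
        · exact absurd h (key q₁ ⟨h0, hq₁.2⟩)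
      · rcases hv.1.eq_or_lt with h0 | h0
        · rw [← h0, hc0] at h
          exact absurd h (key t ⟨hst, le_rfl⟩)
        · exact ⟨v, ⟨h0, hv.2⟩, h⟩
    obtain ⟨v, hv, hqv⟩ := hv
    set δ := min q ε
    have hδ : 0 < δ := lt_min hq0 hε
    have hδ1 : δ ≤ q := min_le_left _ _
    have h1 : ψ (q - δ) a = ψ (-δ) (c v) := by
      rw [← hqv, ← ψ.map_add]; congr 1; ring
    have h2 := hwcurve (fun q => ψ q a) (q - δ) (ψ.cont_time a) (by linarith)
      (fun q' h3 h4 => hq q' h3 (by linarith))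
    simp only [ψ.map_zero_apply, h1] at h2
    rw [h2, hwm v hv δ ⟨hδ, min_le_right _ _⟩]
  have hit_bwd : ∀ a, a ∉ S → ∀ r, 0 ≤ r → ψ (-r) a ∈ S → w a = mp := by
    intro a ha r hr hrS
    have hgc : Continuous fun q => ψ (-q) a := (ψ.cont_time a).comp continuous_neg
    obtain ⟨q, hq0, -, hqS, hq⟩ := first_hit (g := fun q => ψ (-q) a) hgc
      hScpt.isClosed (by simpa using ha) hr hrS
    have hv : ∃ v ∈ Ico (0:ℝ) 1, ψ (-q) a = c v := by
      have key : ∀ q₁ ∈ Ico s t, ψ (-q) a ≠ γ q₁ := by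
        intro q₁ hq₁ h
        set δ := min q (t - q₁)
        have hδ : 0 < δ := lt_min hq0 (by linarith [hq₁.2])
        have hδ1 : δ ≤ q := min_le_left _ _
        have hδ2 : δ ≤ t - q₁ := min_le_right _ _
        refine hq (q - δ) (by linarith) (by linarith) ?_
        have h1 : ψ (-(q - δ)) a = γ (δ + q₁) := by
          rw [← hsh, ← h, ← ψ.map_add]; congr 1; ring
        simp only [h1]
        exact hSγ _ ⟨by linarith [hq₁.1], by linarith⟩
      rcases hSsub _ hqS with ⟨q₁, hq₁, h⟩ | ⟨v, hv, h⟩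
      · rcases hq₁.2.eq_or_lt with h0 | h0
        · exact ⟨0, by simp, by simp only [h, h0, hc0, hγ]⟩
        · exact absurd h (key q₁ ⟨hq₁.1, h0⟩)
      · rcases hv.2.eq_or_lt with h0 | h0
        · rw [h0, hc1] at h
          exact absurd h (key s ⟨le_rfl, hst⟩)
        · exact ⟨v, ⟨hv.1, h0⟩, h⟩
    obtain ⟨v, hv, hqv⟩ := hv
    set δ := min q ε
    have hδ : 0 < δ := lt_min hq0 hε
    have hδ1 : δ ≤ q := min_le_left _ _
    have h1 : ψ (-(q - δ)) a = ψ δ (c v) := by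
      rw [← hqv, ← ψ.map_add]; congr 1; ring
    have h2 := hwcurve (fun q => ψ (-q) a) (q - δ) hgc (by linarith)
      (fun q' h3 h4 => hq q' h3 (by linarith))
    simp only [neg_zero, ψ.map_zero_apply, h1] at h2
    rw [h2, hwp v hv δ ⟨hδ, min_le_right _ _⟩]
  have hpt : ψ ε (c 0) = γ (t + ε) := by rw [hc0, add_comm]; exact hsh ε t
  have hpt' : γ (t + ε) ∉ S := by rw [← hpt]; exact hVp 0 (by simp) ε ⟨hε, le_rfl⟩
  have hne : mp ≠ mm := by
    intro heq
    set m := (s + t) / 2 with hm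
    have hms : s < m := by rw [hm]; linarith
    have hmt : m < t := by rw [hm]; linarith
    have hσm : σ m = γ m := hσ1 m hmt.le
    have hσs : σ s = γ s := hσ1 s hst.le
    have h0 : 0 < ‖σ s - σ m‖ := by
      rw [norm_pos_iff, hσm, hσs, sub_ne_zero]
      exact fun h => hms.ne (hinj h)
    -- points near `γ m` flow close to `γ (t + ε)`, unless they meet the curve before
    have hnear : ∀ᶠ a in 𝓝 (γ m), w (ψ (t + ε - m) a) = mp := by
      have h1 : ψ (t + ε - m) (γ m) = γ (t + ε) := by rw [hsh]; congr 1; ring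
      have h2 : ContinuousAt (fun a => ψ (t + ε - m) a) (γ m) := (ψ.cont_space _).continuousAt
      obtain ⟨r, hr, hb⟩ := Metric.isOpen_iff.mp hScpt.isClosed.isOpen_compl _ hpt'
      have h3 : ∀ᶠ b in 𝓝 (ψ (t + ε - m) (γ m)), b ∈ Metric.ball (γ (t + ε)) r := by
        rw [h1]; exact Metric.ball_mem_nhds _ hr
      filter_upwards [h2.eventually h3] with a ha
      rw [hwc (Metric.ball (γ (t + ε)) r) (convex_ball _ _).isPreconnected (fun z hz => hb hz) _ ha
        _ (Metric.mem_ball_self hr), hmp, hpt]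
    obtain ⟨ρ, hρ, hb⟩ := Metric.eventually_nhds_iff_ball.mp hnear
    obtain ⟨a, ha, haS, haw⟩ := wind_jump (m := m) hms.le (by linarith : m ≤ t + 1) hσc hclosed
      (lt_min hρ h0) (min_le_right _ _) (by
        intro q hq q' hq' h hball
        rw [hσ1 q (by linarith [hq.2])] at h hball ⊢
        rw [hσm]
        rcases le_or_gt q' t with hq't | hq't
        · rw [hσ1 q' hq't] at h
          have := hinj h
          have : q = m := by linarith [hq.2, hq'.1]
          rw [this]
        · exfalso
          rw [hσ2 q' hq't.le] at h
          rcases hq'.2.eq_or_lt with h5 | h5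
          · rw [h5, add_sub_cancel_left, hc1] at h
            rw [h, Metric.mem_ball, dist_eq_norm] at hball
            have := hball.trans_le (min_le_right _ _)
            rw [hσs] at this
            exact lt_irrefl _ this
          · exact hcd _ ⟨by linarith, by linarith⟩ q ⟨hq.1, by linarith [hq.2]⟩ h.symm) mm
    have haS' : a ∉ S := haS
    by_cases hh : ∃ r, 0 ≤ r ∧ ψ r a ∈ S
    · obtain ⟨r, hr, hrS⟩ := hh
      exact haw (hit_fwd a haS' r hr hrS)
    · push Not at hh
      have hfin := hb a (Metric.ball_subset_ball (min_le_left _ _) (by rwa [hσm] at ha))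
      have h2 := hwcurve (fun q => ψ q a) (t + ε - m) (ψ.cont_time a) (by linarith)
        (fun q' h3 _ => hh q' h3)
      simp only [ψ.map_zero_apply, hfin] at h2
      exact haw (h2.trans heq)
  refine ⟨S, w, mp, mm, hScpt, ?_, hwc, hne, ?_, ?_⟩
  · intro a ha
    rcases hSsub a ha with ⟨q, hq, rfl⟩ | ⟨v, hv, rfl⟩
    · exact Or.inl ⟨q, hq, rfl⟩
    · exact Or.inr ⟨v, hv, rfl⟩
  · -- the later orbit never returns to the curve
    have hall : ∀ q, t < q → γ q ∉ S := by
      intro q hq hqS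
      rcases le_or_gt q (t + ε) with h | h
      · refine hVp 0 (by simp) (q - t) ⟨by linarith, by linarith⟩ ?_
        rw [hc0]
        have := hsh (q - t) t
        rw [sub_add_cancel] at this
        rw [← this] at hqS
        exact hqS
      · refine hne ?_
        rw [hmp, hpt]
        refine hit_fwd _ hpt' (q - (t + ε)) (by linarith) ?_
        rw [hsh, sub_add_cancel]; exact hqS
    intro q hq
    refine ⟨hall q hq, ?_⟩
    rw [hmp, hpt]
    refine hwc (γ '' Ioi t) (isPreconnected_Ioi.image _ hγc.continuousOn) ?_ _
      ⟨q, hq, rfl⟩ _ ⟨t + ε, by simpa using hε, rfl⟩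
    rintro _ ⟨q', hq', rfl⟩
    exact hall q' hq'
  · have hpm : ψ (-ε) (c 1) = γ (s - ε) := by
      rw [hc1]; have := hsh (-ε) s; rw [neg_add_eq_sub] at this; exact this
    have hpm' : γ (s - ε) ∉ S := by rw [← hpm]; exact hVm 1 (by simp) ε ⟨hε, le_rfl⟩
    have hall : ∀ q, q < s → γ q ∉ S := by
      intro q hq hqS
      rcases le_or_gt (s - ε) q with h | h
      · refine hVm 1 (by simp) (s - q) ⟨by linarith, by linarith⟩ ?_
        rw [hc1]
        have := hsh (-(s - q)) s
        rw [show -(s - q) + s = q by ring] at this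
        rw [← this] at hqS
        exact hqS
      · refine hne ?_
        rw [hmm, hpm]
        refine (hit_bwd _ hpm' (s - ε - q) (by linarith) ?_).symm
        rw [hsh, show -(s - ε - q) + (s - ε) = q by ring]; exact hqS
    intro q hq
    refine ⟨hall q hq, ?_⟩
    rw [hmm, hpm]
    refine hwc (γ '' Iio s) (isPreconnected_Iio.image _ hγc.continuousOn) ?_ _
      ⟨q, hq, rfl⟩ _ ⟨s - ε, by simpa using hε, rfl⟩
    rintro _ ⟨q', hq', rfl⟩
    exact (hall q' hq')

/-- If an injective orbit comes back near a non-fixed point `y`, then a compact set consisting of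
an orbit arc and of points near `y` separates the later orbit from the earlier one. -/
theorem trap (ψ : Flow ℝ ℂ) {x y : ℂ} (hinj : Function.Injective fun q => ψ q x)
    (hy : ∃ κ, ψ κ y ≠ y) {O : Set ℂ} (hO : O ∈ 𝓝 y)
    (hrec : ∀ O' ∈ 𝓝 y, ∃ τ₁ τ₂ : ℝ, τ₁ + 3 ≤ τ₂ ∧ ψ τ₁ x ∈ O' ∧ ψ τ₂ x ∈ O') :
    ∃ (s t : ℝ) (S : Set ℂ) (w : ℂ → ℂ) (mp mm : ℂ), IsCompact S ∧
      S ⊆ (fun q => ψ q x) '' Icc s t ∪ O ∧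
      (∀ D : Set ℂ, IsPreconnected D → (∀ a ∈ D, a ∉ S) → ∀ a ∈ D, ∀ b ∈ D, w a = w b) ∧
      mp ≠ mm ∧ (∀ q, t < q → ψ q x ∉ S ∧ w (ψ q x) = mp) ∧
      (∀ q, q < s → ψ q x ∉ S ∧ w (ψ q x) = mm) := by
  obtain ⟨ε, hε, ρ, hρ, T, hε1, hTc, hT1, hTO, hTs⟩ := exists_local_section ψ hy hO
  obtain ⟨τ₁, τ₂, hτ, h1, h2⟩ := hrec _ (Metric.ball_mem_nhds y hρ)
  set γ : ℝ → ℂ := fun q => ψ q x with hγ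
  have hγc : Continuous γ := ψ.cont_time x
  have hsh : ∀ δ q, ψ δ (γ q) = γ (δ + q) := fun δ q => (ψ.map_add δ q x).symm
  set p : ℝ → ℂ := fun u => AffineMap.lineMap (γ τ₂) (γ τ₁) u with hp
  have hpb : ∀ u ∈ Icc (0:ℝ) 1, p u ∈ Metric.ball y ρ := fun u hu =>
    (convex_ball y ρ).lineMap_mem h2 h1 hu
  have hpc : Continuous p := AffineMap.lineMap_continuous
  set c₀ : ℝ → ℂ := fun u => ψ (T (p u)) (p u) with hc₀
  have hcc : ContinuousOn c₀ (Icc 0 1) :=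
    ψ.cont_pair.comp_continuousOn (f := fun u => (T (p u), p u))
      ((hTc.comp hpc.continuousOn hpb).prodMk hpc.continuousOn)
  set s₀ := T (γ τ₁) + τ₁ with hs₀
  set t₀ := T (γ τ₂) + τ₂ with ht₀
  have hst : s₀ < t₀ - ε := by
    have a1 := abs_le.mp (hT1 _ h1)
    have a2 := abs_le.mp (hT1 _ h2)
    simp only [hγ] at hs₀ ht₀
    linarith [a1.2, a2.1]
  have hc0 : c₀ 0 = γ t₀ := by simp only [hc₀, hp, AffineMap.lineMap_apply_zero, ht₀, ← hsh]
  have hc1 : c₀ 1 = γ s₀ := by simp only [hc₀, hp, AffineMap.lineMap_apply_one, hs₀, ← hsh]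
  have hcs : ∀ v ∈ Icc (0:ℝ) 1, ∀ v' ∈ Icc (0:ℝ) 1, ∀ δ : ℝ, δ ≠ 0 → |δ| ≤ ε →
      ψ δ (c₀ v) ≠ c₀ v' := fun v hv v' hv' δ h0 hδ => hTs _ (hpb v hv) _ (hpb v' hv') δ h0 hδ
  -- the last passage of the section through `γ t₀`
  have hZ0 : IsCompact (Icc (0:ℝ) 1 ∩ c₀ ⁻¹' {γ t₀}) :=
    isCompact_Icc.of_isClosed_subset (hcc.preimage_isClosed_of_isClosed isClosed_Icc
      isClosed_singleton) inter_subset_left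
  obtain ⟨u₁, ⟨hu₁, hu₁'⟩, hmax⟩ := hZ0.exists_isGreatest ⟨0, by simp, hc0⟩
  -- the first later passage through the older part of the arc
  have hcc1 : ContinuousOn c₀ (Icc u₁ 1) := hcc.mono (Icc_subset_Icc_left hu₁.1)
  have hZ1 : IsCompact (Icc u₁ 1 ∩ c₀ ⁻¹' (γ '' Icc s₀ (t₀ - ε))) :=
    isCompact_Icc.of_isClosed_subset (hcc1.preimage_isClosed_of_isClosed isClosed_Icc
      (isCompact_Icc.image hγc).isClosed) inter_subset_left
  obtain ⟨u₂, ⟨hu₂, s, hs, hs'⟩, hmin⟩ := hZ1.exists_isLeast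
    ⟨1, ⟨hu₁.2, le_rfl⟩, s₀, ⟨le_rfl, hst.le⟩, hc1.symm⟩
  have hu12 : u₁ < u₂ := by
    refine lt_of_le_of_ne hu₂.1 fun h => ?_
    rw [← h, hu₁'] at hs'
    have := hinj hs'
    linarith [hs.2]
  set l : ℝ → ℝ := fun v => u₁ + v * (u₂ - u₁) with hl
  have hlI : ∀ v ∈ Icc (0:ℝ) 1, l v ∈ Icc (0:ℝ) 1 := by
    intro v hv
    constructor
    · have := mul_nonneg hv.1 (sub_pos.mpr hu12).le
      simp only [hl]; linarith [hu₁.1]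
    · have := mul_le_mul_of_nonneg_right hv.2 (sub_pos.mpr hu12).le
      simp only [hl]; linarith [hu₂.2]
  obtain ⟨S, w, mp, mm, hS1, hS2, hS3, hS4, hS5, hS6⟩ := trap_core ψ (x := x) hinj
    (s := s) (t := t₀) (by linarith [hs.2]) hε (c := fun v => c₀ (l v))
    (hcc.comp (by fun_prop) hlI) (by simp only [hl, zero_mul, add_zero]; exact hu₁')
    (by simp only [hl, one_mul, add_sub_cancel]; exact hs'.symm) (by
      intro v hv q hq h
      have hv1 : u₁ < l v := by
        have := mul_pos hv.1 (sub_pos.mpr hu12)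
        simp only [hl]; linarith
      have hv2 : l v < u₂ := by
        have := mul_lt_mul_of_pos_right hv.2 (sub_pos.mpr hu12)
        simp only [hl]; linarith
      have hlv := hlI v ⟨hv.1.le, hv.2.le⟩
      rcases hq.2.eq_or_lt with h3 | h3
      · have : l v ≤ u₁ := hmax ⟨hlv, by rw [mem_preimage, h, h3]; rfl⟩
        linarith
      · rcases le_or_gt q (t₀ - ε) with h4 | h4
        · have : u₂ ≤ l v := hmin ⟨⟨hv1.le, hlv.2⟩, q, ⟨hs.1.trans hq.1, h4⟩, h.symm⟩
          linarith
        · refine hcs _ hlv _ hu₁ (t₀ - q) (by linarith) ?_ ?_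
          · rw [abs_of_pos (by linarith)]; linarith
          · rw [h, hu₁']
            have := hsh (t₀ - q) q
            rw [sub_add_cancel] at this
            exact this)
    (fun v hv v' hv' => hcs _ (hlI v hv) _ (hlI v' hv'))
  refine ⟨s, t₀, S, w, mp, mm, hS1, hS2.trans (union_subset_union_right _ ?_), hS3, hS4, hS5, hS6⟩
  rintro _ ⟨v, hv, rfl⟩
  exact hTO _ (hpb _ (hlI v hv))

/-! ### Accumulation of orbits and periodic orbits -/

/-- `y` is an accumulation point of the orbit of `x` in forward time, that is, `y ∈ ω(x)`. -/
def AccP (ψ : Flow ℝ ℂ) (x y : ℂ) : Prop := ∀ O ∈ 𝓝 y, ∀ T : ℝ, ∃ t, T ≤ t ∧ ψ t x ∈ O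

/-- `y` is an accumulation point of the orbit of `x` in backward time, that is, `y ∈ ω*(x)`. -/
def AccN (ψ : Flow ℝ ℂ) (x y : ℂ) : Prop := ∀ O ∈ 𝓝 y, ∀ T : ℝ, ∃ t, t ≤ T ∧ ψ t x ∈ O

theorem accN_iff (ψ : Flow ℝ ℂ) (x y : ℂ) : AccN ψ x y ↔ AccP ψ.reverse x y := by
  constructor
  · intro h O hO T
    obtain ⟨t, ht, h⟩ := h O hO (-T)
    exact ⟨-t, by linarith, by simpa [Flow.reverse_apply] using h⟩
  · intro h O hO T
    obtain ⟨t, ht, h⟩ := h O hO (-T)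
    exact ⟨-t, by linarith, by simpa [Flow.reverse_apply] using h⟩

theorem AccP.shift {ψ : Flow ℝ ℂ} {x y : ℂ} (h : AccP ψ x y) (q : ℝ) : AccP ψ (ψ q x) y := by
  intro O hO T
  obtain ⟨t, ht, h⟩ := h O hO (T + q)
  exact ⟨t - q, by linarith, by rw [← ψ.map_add, sub_add_cancel]; exact h⟩

theorem AccN.shift {ψ : Flow ℝ ℂ} {x y : ℂ} (h : AccN ψ x y) (q : ℝ) : AccN ψ (ψ q x) y := by
  intro O hO T
  obtain ⟨t, ht, h⟩ := h O hO (T + q)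
  exact ⟨t - q, by linarith, by rw [← ψ.map_add, sub_add_cancel]; exact h⟩

theorem AccP.flow {ψ : Flow ℝ ℂ} {x y : ℂ} (h : AccP ψ x y) (q : ℝ) : AccP ψ x (ψ q y) := by
  intro O hO T
  obtain ⟨t, ht, h⟩ := h _ ((ψ.cont_space q).continuousAt.preimage_mem_nhds hO) (T - q)
  exact ⟨q + t, by linarith, by rw [ψ.map_add]; exact h⟩

theorem isClosed_accP (ψ : Flow ℝ ℂ) (x : ℂ) : IsClosed {y | AccP ψ x y} := by
  rw [← isOpen_compl_iff, isOpen_iff_mem_nhds]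
  intro y hy
  have hy' : ¬ AccP ψ x y := hy
  unfold AccP at hy'
  push Not at hy'
  obtain ⟨O, hO, T, h⟩ := hy'
  filter_upwards [eventually_mem_nhds_iff.mpr hO] with z hz hz'
  obtain ⟨t, ht, ht'⟩ := hz' O hz T
  exact h t ht ht'

theorem exists_accP {ψ : Flow ℝ ℂ} {x : ℂ} {C : Set ℂ} (hC : IsCompact C)
    (h : ∀ T : ℝ, ∃ t, T ≤ t ∧ ψ t x ∈ C) : ∃ y ∈ C, AccP ψ x y := by
  have hf : ∃ᶠ t in (atTop : Filter ℝ), ψ t x ∈ C := frequently_atTop.mpr h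
  obtain ⟨y, hy, hy'⟩ := hC.exists_mapClusterPt_of_frequently hf
  refine ⟨y, hy, fun O hO T => ?_⟩
  obtain ⟨t, ht, h⟩ := frequently_atTop.mp (mapClusterPt_iff_frequently.mp hy' O hO) T
  exact ⟨t, ht, h⟩

theorem exists_accN {ψ : Flow ℝ ℂ} {x : ℂ} {C : Set ℂ} (hC : IsCompact C)
    (h : ∀ T : ℝ, ∃ t, t ≤ T ∧ ψ t x ∈ C) : ∃ y ∈ C, AccN ψ x y := by
  simp only [accN_iff]
  refine exists_accP hC fun T => ?_
  obtain ⟨t, ht, h⟩ := h (-T)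
  exact ⟨-t, by linarith, by simpa [Flow.reverse_apply] using h⟩

theorem injective_or_periodic (ψ : Flow ℝ ℂ) (x : ℂ) :
    (Function.Injective fun q => ψ q x) ∨ ∃ p > 0, ψ p x = x := by
  by_cases h : Function.Injective fun q => ψ q x
  · exact Or.inl h
  right
  have key : ∀ a b : ℝ, ψ a x = ψ b x → ψ (b - a) x = x := fun a b h => by
    have : ψ (b - a) x = ψ (-a) (ψ b x) := by rw [← ψ.map_add]; congr 1; ring
    rw [this, ← h, ← ψ.map_add]; simp
  simp only [Function.Injective, not_forall] at h
  obtain ⟨a, b, h, hab⟩ := h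
  rcases lt_or_gt_of_ne hab with h1 | h1
  · exact ⟨b - a, by linarith, key a b h⟩
  · exact ⟨a - b, by linarith, key b a h.symm⟩

theorem range_of_period {ψ : Flow ℝ ℂ} {x : ℂ} {p : ℝ} (hp : 0 < p) (h : ψ p x = x) :
    (fun q => ψ q x) '' Icc 0 p = range fun q => ψ q x := by
  have hper : Function.Periodic (fun q => ψ q x) p := fun q => by
    simp only [ψ.map_add, h]
  simpa using hper.image_Icc hp 0

theorem injective_of_accP {ψ : Flow ℝ ℂ} {x k : ℂ} (h : AccP ψ x k)
    (hk : k ∉ range fun q => ψ q x) : Function.Injective fun q => ψ q x := by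
  refine (injective_or_periodic ψ x).resolve_right ?_
  rintro ⟨p, hp, hpx⟩
  have hcl : IsClosed (range fun q => ψ q x) := by
    rw [← range_of_period hp hpx]
    exact (isCompact_Icc.image (ψ.cont_time x)).isClosed
  obtain ⟨t, -, ht⟩ := h _ (hcl.isOpen_compl.mem_nhds hk) 0
  exact ht ⟨t, rfl⟩

/-- An orbit accumulating in both time directions on a connected closed set accumulates at no
other non-fixed point: the trapping curve would separate the two limits. -/
theorem no_accumulation {ψ : Flow ℝ ℂ} {x : ℂ} {K : Set ℂ} (hK : IsClosed K)
    (hKc : IsPreconnected K) (hdis : ∀ q, ψ q x ∉ K) {k₁ k₂ : ℂ} (hk₁ : k₁ ∈ K) (hk₂ : k₂ ∈ K)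
    (h₁ : AccP ψ x k₁) (h₂ : AccN ψ x k₂) {y : ℂ} (hyK : y ∉ K) (hy : ∃ κ, ψ κ y ≠ y) :
    ¬ AccP ψ x y ∧ ¬ AccN ψ x y := by
  have hinj := injective_of_accP h₁ (by rintro ⟨q, rfl⟩; exact hdis q hk₁)
  suffices ¬ ∀ O' ∈ 𝓝 y, ∃ τ₁ τ₂ : ℝ, τ₁ + 3 ≤ τ₂ ∧ ψ τ₁ x ∈ O' ∧ ψ τ₂ x ∈ O' by
    constructor
    · intro h
      refine this fun O' hO' => ?_
      obtain ⟨τ₁, -, h1⟩ := h O' hO' 0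
      obtain ⟨τ₂, h3, h2⟩ := h O' hO' (τ₁ + 3)
      exact ⟨τ₁, τ₂, h3, h1, h2⟩
    · intro h
      refine this fun O' hO' => ?_
      obtain ⟨τ₂, -, h1⟩ := h O' hO' 0
      obtain ⟨τ₁, h3, h2⟩ := h O' hO' (τ₂ - 3)
      exact ⟨τ₁, τ₂, by linarith, h2, h1⟩
  intro hrec
  obtain ⟨s, t, S, w, mp, mm, hS1, hS2, hS3, hS4, hS5, hS6⟩ :=
    trap ψ hinj hy (hK.isOpen_compl.mem_nhds hyK) hrec
  have hKS : ∀ a ∈ K, a ∉ S := by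
    intro a ha haS
    rcases hS2 haS with ⟨q, -, rfl⟩ | h
    · exact hdis q ha
    · exact h ha
  have hloc : ∀ k ∈ K, ∃ r > 0, ∀ a ∈ Metric.ball k r, w a = w k := by
    intro k hk
    obtain ⟨r, hr, hb⟩ := Metric.isOpen_iff.mp hS1.isClosed.isOpen_compl k (hKS k hk)
    exact ⟨r, hr, fun a ha => hS3 _ (convex_ball k r).isPreconnected (fun z hz => hb hz) _ ha _
      (Metric.mem_ball_self hr)⟩
  obtain ⟨r₁, hr₁, hb₁⟩ := hloc k₁ hk₁
  obtain ⟨r₂, hr₂, hb₂⟩ := hloc k₂ hk₂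
  obtain ⟨q₁, hq₁, hq₁'⟩ := h₁ _ (Metric.ball_mem_nhds k₁ hr₁) (t + 1)
  obtain ⟨q₂, hq₂, hq₂'⟩ := h₂ _ (Metric.ball_mem_nhds k₂ hr₂) (s - 1)
  refine hS4 ?_
  rw [← (hS5 q₁ (by linarith)).2, ← (hS6 q₂ (by linarith)).2, hb₁ _ hq₁', hb₂ _ hq₂']
  exact hS3 K hKc hKS _ hk₁ _ hk₂

/-- A nonempty compact invariant set without fixed points contains a periodic orbit. -/
theorem exists_periodic {ψ : Flow ℝ ℂ} {Q : Set ℂ} (hQ : IsCompact Q) (hne : Q.Nonempty)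
    (hinv : ∀ p ∈ Q, ∀ t, ψ t p ∈ Q) (hfix : ∀ p ∈ Q, ∃ t, ψ t p ≠ p) :
    ∃ z ∈ Q, ∃ T > 0, ψ T z = z ∧ ∀ τ, 0 < τ → τ < T → ψ τ z ≠ z := by
  obtain ⟨M, hM⟩ := zorn_superset_nonempty
    {M : Set ℂ | M ⊆ Q ∧ IsClosed M ∧ M.Nonempty ∧ ∀ p ∈ M, ∀ t, ψ t p ∈ M} (by
      intro c hc hch hcne
      refine ⟨⋂₀ c, ⟨?_, ?_, ?_, ?_⟩, fun s hs => sInter_subset_of_mem hs⟩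
      · obtain ⟨s, hs⟩ := hcne
        exact (sInter_subset_of_mem hs).trans (hc hs).1
      · exact isClosed_sInter fun s hs => (hc hs).2.1
      · have : Nonempty c := hcne.to_subtype
        exact IsCompact.nonempty_sInter_of_directed_nonempty_isCompact_isClosed
          (fun a ha b hb => (hch.total ha hb).elim (fun h => ⟨a, ha, Subset.rfl, h⟩)
            (fun h => ⟨b, hb, h, Subset.rfl⟩)) (fun s hs => (hc hs).2.2.1)
          (fun s hs => hQ.of_isClosed_subset (hc hs).2.1 (hc hs).1) (fun s hs => (hc hs).2.1)
      · intro p hp t s hs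
        exact (hc hs).2.2.2 p (hp s hs) t) Q ⟨Subset.rfl, hQ.isClosed, hne, hinv⟩
  obtain ⟨-, ⟨hMQ, hMcl, ⟨z, hz⟩, hMinv⟩, hMmin⟩ := hM
  refine ⟨z, hMQ hz, ?_⟩
  rcases injective_or_periodic ψ z with hinj | ⟨p, hp, hpz⟩
  · exfalso
    have hsub : {y | AccP ψ z y} ⊆ M := by
      intro y hy
      by_contra hyM
      obtain ⟨t, -, ht⟩ := hy _ (hMcl.isOpen_compl.mem_nhds hyM) 0
      exact ht (hMinv z hz t)
    have hAne : {y | AccP ψ z y}.Nonempty := by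
      obtain ⟨y, -, hy⟩ := exists_accP (hQ.of_isClosed_subset hMcl hMQ)
        (fun T => ⟨T, le_rfl, hMinv z hz T⟩)
      exact ⟨y, hy⟩
    have hMA : M ⊆ {y | AccP ψ z y} := hMmin
      ⟨hsub.trans hMQ, isClosed_accP ψ z, hAne, fun y hy t => AccP.flow hy t⟩ hsub
    have hrec : ∀ O' ∈ 𝓝 z, ∃ τ₁ τ₂ : ℝ, τ₁ + 3 ≤ τ₂ ∧ ψ τ₁ z ∈ O' ∧ ψ τ₂ z ∈ O' := by
      intro O' hO'
      obtain ⟨τ₂, h3, h2⟩ := hMA hz O' hO' (0 + 3)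
      exact ⟨0, τ₂, h3, by rw [ψ.map_zero_apply]; exact mem_of_mem_nhds hO', h2⟩
    obtain ⟨s, t, S, w, mp, mm, hS1, -, hS3, hS4, hS5, hS6⟩ :=
      trap ψ hinj (hfix z (hMQ hz)) univ_mem hrec
    have h1 := hS6 (s - 1) (by linarith)
    obtain ⟨r, hr, hb⟩ := Metric.isOpen_iff.mp hS1.isClosed.isOpen_compl _ h1.1
    obtain ⟨q, hq, hq'⟩ := hMA (hMinv z hz (s - 1)) _ (Metric.ball_mem_nhds _ hr) (t + 1)
    refine hS4 ?_
    rw [← h1.2, ← (hS5 q (by linarith)).2]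
    exact hS3 _ (convex_ball _ r).isPreconnected (fun a ha => hb ha) _ hq' _
      (Metric.mem_ball_self hr)
  · have hback : ∀ a : ℝ, ψ a z = z → ψ (-a) z = z := fun a h => by
      conv_lhs => rw [← h]
      rw [← ψ.map_add]; simp
    let G : AddSubgroup ℝ :=
      { carrier := {a | ψ a z = z}
        add_mem' := fun {a b} ha hb => by
          simp only [mem_ofPred_eq] at *
          rw [ψ.map_add, hb, ha]
        zero_mem' := ψ.map_zero_apply z
        neg_mem' := fun {a} ha => hback a ha }
    rcases G.dense_or_cyclic with h | ⟨a, ha⟩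
    · exfalso
      obtain ⟨t, ht⟩ := hfix z (hMQ hz)
      have hGcl : IsClosed (G : Set ℝ) := isClosed_eq (ψ.cont_time z) continuous_const
      have : (t : ℝ) ∈ (G : Set ℝ) := by
        rw [← hGcl.closure_eq]; exact h t
      exact ht this
    · rw [← AddSubgroup.zmultiples_eq_closure] at ha
      have hpG : p ∈ G := hpz
      have ha0 : a ≠ 0 := by
        rintro rfl
        rw [ha] at hpG
        simp at hpG
        linarith
      have haG : a ∈ G := by rw [ha]; exact AddSubgroup.mem_zmultiples a
      refine ⟨|a|, abs_pos.mpr ha0, ?_, ?_⟩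
      · rcases abs_choice a with h | h
        · rw [h]; exact haG
        · rw [h]; exact hback a haG
      · intro τ hτ hτa hτz
        have hτG : τ ∈ G := hτz
        rw [ha, AddSubgroup.mem_zmultiples_iff] at hτG
        obtain ⟨n, hn⟩ := hτG
        rw [zsmul_eq_mul] at hn
        have h1 : |(n : ℝ)| * |a| < 1 * |a| := by
          rw [← abs_mul, hn, one_mul, abs_of_pos hτ]; exact hτa
        have h2 : |(n : ℝ)| < 1 := lt_of_mul_lt_mul_right h1 (abs_nonneg a)
        have h3 : |n| < 1 := by exact_mod_cast h2
        rw [Int.abs_lt_one_iff] at h3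
        rw [h3] at hn
        simp at hn
        linarith

/-! ### A periodic orbit surrounds a fixed point -/

/-- A function of the parameter of a curve which takes equal values where the curve meets itself
factors continuously through the image of the curve. -/
theorem descend {γ f : ℝ → ℂ} {T : ℝ} (hγ : ContinuousOn γ (Icc 0 T))
    (hf : ContinuousOn f (Icc 0 T))
    (h : ∀ q ∈ Icc 0 T, ∀ q' ∈ Icc 0 T, γ q = γ q' → f q = f q') :
    ∃ g : ℂ → ℂ, ContinuousOn g (γ '' Icc 0 T) ∧ ∀ q ∈ Icc 0 T, g (γ q) = f q := by
  have hex : ∀ a, ∃ b, ∀ q ∈ Icc 0 T, γ q = a → f q = b := by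
    intro a
    by_cases ha : ∃ q ∈ Icc 0 T, γ q = a
    · obtain ⟨q, hq, hqa⟩ := ha
      exact ⟨f q, fun q' hq' h' => h q' hq' q hq (h'.trans hqa.symm)⟩
    · push Not at ha
      exact ⟨0, fun q hq h' => absurd h' (ha q hq)⟩
  choose g hg using hex
  have hg' : ∀ q ∈ Icc 0 T, g (γ q) = f q := fun q hq => (hg _ q hq rfl).symm
  refine ⟨g, ?_, hg'⟩
  rw [continuousOn_iff_isClosed]
  intro C hC
  refine ⟨γ '' (Icc 0 T ∩ f ⁻¹' C), ?_, ?_⟩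
  · refine (IsCompact.image_of_continuousOn ?_ (hγ.mono inter_subset_left)).isClosed
    exact isCompact_Icc.of_isClosed_subset (hf.preimage_isClosed_of_isClosed isClosed_Icc hC)
      inter_subset_left
  · ext a
    constructor
    · rintro ⟨ha, q, hq, rfl⟩
      refine ⟨⟨q, ⟨hq, ?_⟩, rfl⟩, q, hq, rfl⟩
      rw [mem_preimage, ← hg' q hq]; exact ha
    · rintro ⟨⟨q, ⟨hq, hqC⟩, rfl⟩, hP⟩
      refine ⟨?_, hP⟩
      rw [mem_preimage, hg' q hq]; exact hqC

/-- On a compact set without fixed points, no point has a very small period. -/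
theorem eventually_no_small_period {ψ : Flow ℝ ℂ} {D : Set ℂ} (hD : IsCompact D)
    (hfix : ∀ a ∈ D, ∃ t, ψ t a ≠ a) : ∀ᶠ r in 𝓝 (0:ℝ), ∀ a ∈ D, 0 < r → ψ r a ≠ a := by
  refine hD.eventually_forall_of_forall_eventually fun a ha => ?_
  obtain ⟨t, ht⟩ := hfix a ha
  have hop : IsOpen {p : ℝ × ℂ | ψ p.1 p.2 ≠ p.2} :=
    isOpen_ne_fun ψ.cont_pair continuous_snd
  obtain ⟨δ, hδ, hb⟩ := Metric.isOpen_iff.mp hop (t, a) ht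
  have h1 : Metric.ball ((0:ℝ), a) δ ∈ 𝓝 ((0:ℝ), a) := Metric.ball_mem_nhds _ hδ
  filter_upwards [h1] with p hp hr hper
  rw [Metric.mem_ball, Prod.dist_eq, max_lt_iff] at hp
  have hrδ : p.1 < δ := by
    have := hp.1
    rw [Real.dist_eq, sub_zero] at this
    exact (le_abs_self _).trans_lt this
  set n : ℤ := ⌊t / p.1⌋ with hn
  have h2 : (n : ℝ) * p.1 ≤ t := by
    have := Int.floor_le (t / p.1)
    rwa [le_div_iff₀ hr] at this
  have h3 : t < (n : ℝ) * p.1 + p.1 := by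
    have := Int.lt_floor_add_one (t / p.1)
    rw [div_lt_iff₀ hr] at this
    linarith
  have hP : Function.Periodic (fun q => ψ q p.2) p.1 := fun q => by
    simp only [ψ.map_add, hper]
  have h4 : ψ ((n : ℝ) * p.1) p.2 = p.2 := by
    have := hP.int_mul_eq n
    simpa using this
  refine hb (a := ((n : ℝ) * p.1, p.2)) ?_ h4
  rw [Metric.mem_ball, Prod.dist_eq, max_lt_iff]
  refine ⟨?_, hp.2⟩
  rw [Real.dist_eq, abs_lt]
  constructor <;> linarith

/-- The secants `γ (q + r) - γ q` of a simple closed curve of period `T` turn a nonzero number of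
times: deforming `r` to `T / 2`, the secant reverses its direction over half a period. -/
theorem secant_winding {γ : ℝ → ℂ} (hγ : Continuous γ) {T r : ℝ} (hr : 0 < r) (hrT : r < T / 2)
    (hper : ∀ q, γ (q + T) = γ q) (hinj : ∀ q τ, 0 < τ → τ < T → γ (q + τ) ≠ γ q) :
    ∃ l : ℝ → ℂ, Continuous l ∧ (∀ q, Complex.exp (l q) = γ (q + r) - γ q) ∧ l T ≠ l 0 := by
  set cl : ℝ → ℝ := fun τ => max r (min τ (T / 2)) with hcl
  have hclc : Continuous cl := by fun_prop
  have hcl1 : ∀ τ, 0 < cl τ := fun τ => hr.trans_le (le_max_left _ _)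
  have hcl2 : ∀ τ, cl τ < T := fun τ => by
    have : cl τ ≤ T / 2 := max_le hrT.le (min_le_right _ _)
    linarith
  have hclr : cl r = r := by simp [hcl, hrT.le]
  have hclT : cl (T / 2) = T / 2 := by simp [hcl, hrT.le]
  obtain ⟨L, hL, hLe⟩ := exists_log_of_ne_zero (X := ℝ × ℝ)
    (g := fun p => γ (p.1 + cl p.2) - γ p.1) (by fun_prop)
    (fun p => sub_ne_zero.mpr (hinj _ _ (hcl1 _) (hcl2 _)))
  refine ⟨fun q => L (q, r), by fun_prop, fun q => by rw [hLe]; simp only [hclr], fun h => ?_⟩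
  have h1 := log_sub_const (X := ℝ) isPreconnected_univ (f := fun τ => L (T, τ))
    (g := fun τ => L (0, τ)) (by fun_prop) (by fun_prop) (fun τ _ => by
      simp only [hLe]
      rw [add_comm T, hper, zero_add, show γ T = γ 0 by rw [← hper 0, zero_add]]) (mem_univ r) (mem_univ (T / 2))
  have h2 := log_sub_const (X := ℝ) isPreconnected_univ (f := fun q => L (q + T / 2, T / 2))
    (g := fun q => L (q, T / 2) + Real.pi * Complex.I) (by fun_prop) (by fun_prop) (fun q _ => by
      simp only [Complex.exp_add, hLe, hclT, Complex.exp_pi_mul_I]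
      rw [add_assoc, add_halves, hper]; ring) (mem_univ 0) (mem_univ (T / 2))
  simp only [zero_add, add_halves] at h1 h2
  simp only [h, sub_self] at h1
  have h3 : L (T / 2, T / 2) = L (0, T / 2) := by
    linear_combination (h2 - h1) / 2
  have h4 := hLe (T / 2, T / 2)
  rw [h3, hLe] at h4
  simp only [hclT, zero_add, add_halves] at h4
  rw [← hper 0, zero_add] at h4
  have h5 : γ (T / 2) - γ T = 0 := by linear_combination h4 / 2
  refine hinj 0 (T / 2) (by linarith) (by linarith) ?_
  rw [zero_add, sub_eq_zero.mp h5, ← hper 0, zero_add]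

/-- If a nonvanishing function on a bounded closed set `D` agrees on the frontier of `D`, up to an
exponential, with `(a - a₀) ^ k` for some interior point `a₀`, then `k = 0`: continuing it by the
latter outside `D` gives a nonvanishing function on the plane, which has a logarithm. -/
theorem degree_zero {P D : Set ℂ} (hP : IsClosed P) (hD : IsClosed D)
    (hDb : Bornology.IsBounded D) (hfr : frontier D ⊆ P) {a₀ : ℂ} (ha₀ : a₀ ∈ interior D)
    {F h : ℂ → ℂ} (hF : ContinuousOn F D) (hF0 : ∀ a ∈ D, F a ≠ 0) (hh : ContinuousOn h P) {k : ℤ}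
    (he : ∀ a ∈ P, Complex.exp (h a) * (a - a₀) ^ k = F a) : k = 0 := by
  classical
  obtain ⟨g, hg⟩ := ContinuousMap.exists_restrict_eq hP
    ⟨P.domRestrict h, continuousOn_iff_continuous_domRestrict.mp hh⟩
  have hgP : ∀ a ∈ P, g a = h a := fun a ha => by
    exact congrArg (fun f => f ⟨a, ha⟩) hg
  set G : ℂ → ℂ := D.piecewise F (fun a => Complex.exp (g a) * (a - a₀) ^ k) with hG
  have hint : ∀ a ∈ closure Dᶜ, a - a₀ ≠ 0 := by
    intro a ha h0
    rw [closure_compl] at ha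
    exact ha (by rw [sub_eq_zero.mp h0]; exact ha₀)
  have hGc : Continuous G := by
    refine continuous_piecewise (fun a ha => ?_) (by rwa [hD.closure_eq]) ?_
    · rw [hgP a (hfr ha), he a (hfr ha)]
    · exact (Complex.continuous_exp.comp g.continuous).continuousOn.mul
        (ContinuousOn.zpow₀ (by fun_prop) k fun a ha => Or.inl (hint a ha))
  have hG0 : ∀ a, G a ≠ 0 := by
    intro a
    by_cases ha : a ∈ D
    · rw [hG, piecewise_eq_of_mem _ _ _ ha]; exact hF0 a ha
    · rw [hG, piecewise_eq_of_notMem _ _ _ ha]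
      exact mul_ne_zero (Complex.exp_ne_zero _) (zpow_ne_zero _ (hint a (subset_closure ha)))
  obtain ⟨Λ, hΛ, hΛe⟩ := exists_log_of_ne_zero hGc hG0
  obtain ⟨ρ, hρ⟩ := hDb.subset_ball a₀
  have hρ0 : 0 < ρ := by
    have := hρ (interior_subset ha₀)
    rwa [Metric.mem_ball, dist_self] at this
  set c : ℝ → ℂ := fun θ => a₀ + ρ * Complex.exp (θ * Complex.I) with hc
  have hcc : Continuous c := by fun_prop
  have hcD : ∀ θ, c θ ∉ D := fun θ hθ => by
    have := hρ hθ
    rw [Metric.mem_ball, hc, dist_eq_norm, add_sub_cancel_left, norm_mul,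
      Complex.norm_exp_ofReal_mul_I, mul_one, Complex.norm_real, Real.norm_of_nonneg hρ0.le] at this
    exact lt_irrefl _ this
  have h1 := log_sub_const (X := ℝ) isPreconnected_univ (f := fun θ => Λ (c θ))
    (g := fun θ : ℝ => g (c θ) + k * (Complex.log ρ + θ * Complex.I)) (by fun_prop) (by fun_prop)
    (fun θ _ => by
      rw [hΛe, hG, piecewise_eq_of_notMem _ _ _ (hcD θ), Complex.exp_add, Complex.exp_int_mul,
        Complex.exp_add, Complex.exp_log (by exact_mod_cast hρ0.ne')]
      simp [hc]) (mem_univ 0) (mem_univ (2 * Real.pi))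
  have h2 : c (2 * Real.pi) = c 0 := by
    simp [hc, Complex.exp_two_pi_mul_I]
  simp only [h2] at h1
  have h3 : (k : ℂ) * (2 * Real.pi * Complex.I) = 0 := by
    push_cast at h1
    linear_combination h1
  rcases mul_eq_zero.mp h3 with h4 | h4
  · exact_mod_cast h4
  · exact absurd h4 Complex.two_pi_I_ne_zero

/-- A periodic orbit of minimal period `T` has a fixed point on it or among the points around which
it winds. -/
theorem periodic_fixed {ψ : Flow ℝ ℂ} {z : ℂ} {T : ℝ} (hT : 0 < T) (hz : ψ T z = z)
    (hmin : ∀ τ, 0 < τ → τ < T → ψ τ z ≠ z)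
    (hfix : ∀ a, (a ∈ range fun q => ψ q z) ∨ wind (fun q => ψ q z) 0 T a ≠ 0 → ∃ t, ψ t a ≠ a) :
    False := by
  set γ : ℝ → ℂ := fun q => ψ q z with hγ
  have hγc : Continuous γ := ψ.cont_time z
  have hper : ∀ q, γ (q + T) = γ q := fun q => by simp only [hγ, ψ.map_add, hz]
  have hinj : ∀ q τ, 0 < τ → τ < T → γ (q + τ) ≠ γ q := by
    intro q τ h0 h1 h
    refine hmin τ h0 h1 ?_
    have := congrArg (ψ (-q)) h
    simpa only [hγ, ← ψ.map_add, neg_add_cancel, ψ.map_zero_apply, neg_add_cancel_left] using this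
  have hT0 : γ 0 = γ T := by rw [← hper 0, zero_add]
  have hPr : γ '' Icc 0 T = range γ := range_of_period hT hz
  set P := γ '' Icc 0 T with hP
  have hPc : IsCompact P := isCompact_Icc.image hγc
  set w := wind γ 0 T with hw
  have hwP : ∀ a, w a ≠ 0 → a ∉ P := by
    rintro _ h ⟨q, hq, rfl⟩
    refine h (dif_neg ?_)
    rintro ⟨L, hL⟩
    have := hL.2 q hq
    simp [Complex.exp_ne_zero] at this
  have hloc : ∀ a ∉ P, ∀ᶠ b in 𝓝 a, b ∉ P ∧ w b = w a := by
    intro a ha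
    obtain ⟨ε, hε, hb⟩ := Metric.isOpen_iff.mp hPc.isClosed.isOpen_compl a ha
    filter_upwards [Metric.ball_mem_nhds a hε] with b hb'
    exact ⟨hb hb', wind_const hT.le hγc.continuousOn hT0 (convex_ball a ε).isPreconnected
      (fun x hx => hb hx) hb' (Metric.mem_ball_self hε)⟩
  set D : Set ℂ := P ∪ {a | w a ≠ 0} with hDdef
  have hΩo : IsOpen {a | w a ≠ 0} := by
    refine isOpen_iff_mem_nhds.mpr fun a ha => ?_
    filter_upwards [hloc a (hwP a ha)] with b hb
    rw [hb.2]; exact ha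
  have hD : IsClosed D := by
    rw [← isOpen_compl_iff]
    refine isOpen_iff_mem_nhds.mpr fun a ha => ?_
    have ha1 : a ∉ P := fun h => ha (Or.inl h)
    have ha2 : w a = 0 := by
      by_contra h
      exact ha (Or.inr h)
    filter_upwards [hloc a ha1] with b hb
    rintro (h | h)
    · exact hb.1 h
    · exact h (hb.2.trans ha2)
  have hDb : Bornology.IsBounded D := by
    obtain ⟨R, hR⟩ := hPc.isBounded.subset_closedBall 0
    refine (Metric.isBounded_closedBall (x := (0:ℂ)) (r := R)).subset ?_
    rintro a (ha | ha)
    · exact hR ha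
    · rw [mem_closedBall_zero_iff]
      by_contra! h
      exact ha (wind_far hT.le hγc.continuousOn hT0 hR h)
  have hfr : frontier D ⊆ P := by
    intro a ha
    rw [hD.frontier_eq] at ha
    rcases ha.1 with h | h
    · exact h
    · exact absurd (interior_maximal subset_union_right hΩo h) ha.2
  have hDfix : ∀ a ∈ D, ∃ t, ψ t a ≠ a := by
    rintro a (ha | ha)
    · exact hfix a (Or.inl (hPr ▸ ha))
    · exact hfix a (Or.inr ha)
  -- a point around which the orbit winds
  have hd : 0 < ‖γ 0 - γ (T / 2)‖ := by
    rw [norm_pos_iff, sub_ne_zero]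
    have := hinj 0 (T / 2) (by linarith) (by linarith)
    rw [zero_add] at this
    exact this.symm
  have hu : ∀ q ∈ Icc 0 (T / 2), ∀ q' ∈ Icc (T / 2) T, γ q = γ q' →
      γ q ∈ Metric.ball (γ (T / 2)) ‖γ 0 - γ (T / 2)‖ → γ q = γ (T / 2) := by
    intro q hq q' hq' h hb
    rcases eq_or_lt_of_le (hq.2.trans hq'.1) with h1 | h1
    · rw [le_antisymm hq.2 (h1 ▸ hq'.1)]
    · rcases lt_or_ge (q' - q) T with h2 | h2
      · exact absurd (by rw [add_sub_cancel, h]) (hinj q (q' - q) (by linarith) h2)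
      · have h3 : q = 0 := by linarith [hq.1, hq'.2]
        rw [h3, Metric.mem_ball, dist_eq_norm] at hb
        exact absurd hb (lt_irrefl _)
  obtain ⟨a₀, -, ha₀P, ha₀⟩ := wind_jump (by linarith : (0:ℝ) ≤ T / 2) (by linarith)
    hγc.continuousOn hT0 hd le_rfl hu 0
  obtain ⟨n, hn⟩ := wind_int hT.le hγc.continuousOn hT0 ha₀P
  have hn0 : n ≠ 0 := by
    rintro rfl
    exact ha₀ (by rw [hn]; simp)
  -- a time step without fixed points on `D`
  obtain ⟨r, hr, hrT, hrD⟩ : ∃ r, 0 < r ∧ r < T / 2 ∧ ∀ a ∈ D, ψ r a ≠ a := by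
    have h1 := (eventually_no_small_period (Metric.isCompact_of_isClosed_isBounded hD hDb) hDfix)
    have h2 : ∀ᶠ r in 𝓝[>] (0:ℝ), r < T / 2 :=
      (eventually_lt_nhds (by linarith)).filter_mono nhdsWithin_le_nhds
    obtain ⟨r, h3, h4, h5⟩ := ((h1.filter_mono nhdsWithin_le_nhds).and
      (h2.and self_mem_nhdsWithin)).exists
    exact ⟨r, h5, h4, fun a ha => h3 a ha h5⟩
  obtain ⟨l, hl, hle, hlT⟩ := secant_winding hγc hr hrT hper hinj
  obtain ⟨k, hk⟩ : ∃ k : ℤ, l T - l 0 = k * (2 * Real.pi * Complex.I) := by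
    refine Complex.exp_eq_one_iff.mp ?_
    rw [Complex.exp_sub, div_eq_one_iff_eq (Complex.exp_ne_zero _), hle, hle, add_comm T, hper,
      zero_add, ← hT0]
  have hk0 : k ≠ 0 := by
    rintro rfl
    exact hlT (sub_eq_zero.mp (by rw [hk]; simp))
  obtain ⟨L, hL, hLe⟩ := exists_isLog hT.le hγc.continuousOn ha₀P
  have hLT : L T - L 0 = n * (2 * Real.pi * Complex.I) := by
    rw [← hn, IsLog.wind_eq hT.le ⟨hL, hLe⟩]
  obtain ⟨h, hh, hhe⟩ := descend (f := fun q => n * l q - k * L q) hγc.continuousOn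
    (by fun_prop) (T := T) (by
      have key : (n:ℂ) * l T - k * L T = n * l 0 - k * L 0 := by
        linear_combination (n:ℂ) * hk - k * hLT
      have aux : ∀ q ∈ Icc 0 T, ∀ q' ∈ Icc 0 T, q < q' → γ q = γ q' → q = 0 ∧ q' = T := by
        intro q hq q' hq' hlt h
        rcases lt_or_ge (q' - q) T with h2 | h2
        · exact absurd (by rw [add_sub_cancel, h]) (hinj q (q' - q) (by linarith) h2)
        · exact ⟨by linarith [hq.1, hq'.2], by linarith [hq.1, hq'.2]⟩
      intro q hq q' hq' h
      rcases lt_trichotomy q q' with h1 | h1 | h1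
      · obtain ⟨rfl, rfl⟩ := aux q hq q' hq' h1 h
        exact key.symm
      · rw [h1]
      · obtain ⟨rfl, rfl⟩ := aux q' hq' q hq h1 h.symm
        exact key)
  refine hk0 (degree_zero (F := fun a => (ψ r a - a) ^ n) (h := h) hPc.isClosed hD hDb hfr
    (interior_maximal subset_union_right hΩo ha₀) ?_ ?_ hh ?_)
  · exact ContinuousOn.zpow₀ (((ψ.cont_space r).sub continuous_id).continuousOn) n
      fun a ha => Or.inl (sub_ne_zero.mpr (hrD a ha))
  · exact fun a ha => zpow_ne_zero _ (sub_ne_zero.mpr (hrD a ha))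
  · rintro _ ⟨q, hq, rfl⟩
    have h1 : γ q - a₀ ≠ 0 := fun h => ha₀P ⟨q, hq, sub_eq_zero.mp h⟩
    rw [hhe q hq, Complex.exp_sub, Complex.exp_int_mul, Complex.exp_int_mul, hle, hLe q hq,
      div_mul_cancel₀ _ (zpow_ne_zero _ h1)]
    simp only [hγ, add_comm q r, ψ.map_add]

/-! ### Separation by a closed set, through logarithms -/

/-- `(z - a) / (z - b)` has a continuous logarithm on `X`. For compact `X` and `a`, `b` outside `X`
this holds if and only if `a` and `b` lie in the same component of the complement of `X`. -/
def LogEq (X : Set ℂ) (a b : ℂ) : Prop :=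
  ∃ h : ℂ → ℂ, ContinuousOn h X ∧ ∀ z ∈ X, Complex.exp (h z) = (z - a) / (z - b)

theorem LogEq.refl {X : Set ℂ} {a : ℂ} (ha : a ∉ X) : LogEq X a a :=
  ⟨0, continuousOn_const, fun z hz => by
    have : z - a ≠ 0 := sub_ne_zero.mpr fun h => ha (h ▸ hz)
    simp [this]⟩

theorem LogEq.symm {X : Set ℂ} {a b : ℂ} (h : LogEq X a b) : LogEq X b a := by
  obtain ⟨f, hf, he⟩ := h
  exact ⟨fun z => -f z, hf.neg, fun z hz => by rw [Complex.exp_neg, he z hz, inv_div]⟩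

theorem LogEq.trans {X : Set ℂ} {a b c : ℂ} (hb : b ∉ X) (h : LogEq X a b) (h' : LogEq X b c) :
    LogEq X a c := by
  obtain ⟨f, hf, he⟩ := h
  obtain ⟨g, hg, he'⟩ := h'
  refine ⟨fun z => f z + g z, hf.add hg, fun z hz => ?_⟩
  have : z - b ≠ 0 := sub_ne_zero.mpr fun h => hb (h ▸ hz)
  rw [Complex.exp_add, he z hz, he' z hz, div_mul_div_cancel₀ this]

theorem LogEq.eventually {X : Set ℂ} (hX : IsClosed X) {a : ℂ} (ha : a ∉ X) :
    ∀ᶠ a' in 𝓝 a, LogEq X a' a := by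
  obtain ⟨ε, hε, hb⟩ := Metric.isOpen_iff.mp hX.isOpen_compl a ha
  filter_upwards [Metric.ball_mem_nhds a hε] with a' ha'
  have hs : ∀ z ∈ X, (z - a') / (z - a) ∈ Complex.slitPlane := fun z hz => by
    refine mem_slitPlane_of_near ?_
    rw [← dist_eq_norm, ← dist_eq_norm]
    refine (Metric.mem_ball.mp ha').trans_le ?_
    by_contra! h
    exact hb (Metric.mem_ball.mpr h) hz
  refine ⟨fun z => Complex.log ((z - a') / (z - a)), ContinuousOn.clog ?_ hs,
    fun z hz => Complex.exp_log (Complex.slitPlane_ne_zero (hs z hz))⟩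
  exact ContinuousOn.div (by fun_prop) (by fun_prop)
    fun z hz => sub_ne_zero.mpr fun h => ha (h ▸ hz)

theorem LogEq.congr {X : Set ℂ} {a b c : ℂ} (ha : a ∉ X) (hb : b ∉ X) (h : LogEq X a b) :
    LogEq X a c ↔ LogEq X b c :=
  ⟨fun hc => h.symm.trans ha hc, fun hc => h.trans hb hc⟩

/-- Points of a connected set disjoint from `X` are not separated by `X`. -/
theorem LogEq.of_isPreconnected {X S : Set ℂ} (hX : IsClosed X) (hS : IsPreconnected S)
    (hd : ∀ a ∈ S, a ∉ X) {a b : ℂ} (ha : a ∈ S) (hb : b ∈ S) : LogEq X a b := by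
  have := eq_of_locally_eq hS (f := fun y => LogEq X y b) (fun y hy => ?_) ha hb
  · rw [this]; exact LogEq.refl (hd b hb)
  · filter_upwards [mem_nhdsWithin_of_mem_nhds (LogEq.eventually hX (hd y hy)),
      self_mem_nhdsWithin] with y' h1 h2
    exact propext (h1.congr (hd _ h2) (hd _ hy))

/-- A bounded set does not separate two points far from it. -/
theorem LogEq.of_far {X : Set ℂ} {R : ℝ} (hR : X ⊆ Metric.closedBall 0 R) {a b : ℂ}
    (ha : R < ‖a‖) (hb : R < ‖b‖) (ha0 : a ≠ 0) (hb0 : b ≠ 0) : LogEq X a b := by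
  have hs : ∀ c : ℂ, R < ‖c‖ → ∀ z ∈ X, (c - z) / (c - 0) ∈ Complex.slitPlane :=
    fun c hc z hz => mem_slitPlane_of_near (by
      simpa using (mem_closedBall_zero_iff.mp (hR hz)).trans_lt hc)
  refine ⟨fun z => Complex.log ((a - z) / (a - 0)) - Complex.log ((b - z) / (b - 0)) +
    Complex.log (a / b), ?_, fun z hz => ?_⟩
  · refine ((ContinuousOn.clog (ContinuousOn.div_const (by fun_prop) _) (hs a ha)).sub
      (ContinuousOn.clog (ContinuousOn.div_const (by fun_prop) _) (hs b hb))).add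
      continuousOn_const
  · have h1 := Complex.slitPlane_ne_zero (hs a ha z hz)
    have h2 := Complex.slitPlane_ne_zero (hs b hb z hz)
    have h3 : b - z ≠ 0 := fun h => h2 (by rw [h, zero_div])
    have h4 : z - b ≠ 0 := fun h => h3 (by linear_combination -h)
    rw [Complex.exp_add, Complex.exp_sub, Complex.exp_log h1, Complex.exp_log h2,
      Complex.exp_log (div_ne_zero ha0 hb0), sub_zero, sub_zero]
    field_simp
    ring

/-- An injective curve whose two ends accumulate on a continuum `K` and eventually stay near `K`
separates points near its time-zero position: otherwise the change of argument along the curve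
would be the same for all nearby points, as it is along the remaining part of `K ∪ range γ`, which
is connected and far away. -/
theorem exists_not_logEq {γ : ℝ → ℂ} (hγ : Continuous γ) (hinj : Function.Injective γ) {K : Set ℂ}
    (hK : IsPreconnected K) (hK0 : K.Nonempty) {k₁ k₂ : ℂ} (hk₁ : k₁ ∈ K) (hk₂ : k₂ ∈ K)
    (h₁ : ∀ T, k₁ ∈ closure (γ '' Ici T)) (h₂ : ∀ T, k₂ ∈ closure (γ '' Iic T)) {T ρ : ℝ}
    (hT : 0 ≤ T) (hVp : ∀ q, T ≤ q → Metric.infDist (γ q) K < Metric.infDist (γ 0) K / 2)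
    (hVn : ∀ q, q ≤ -T → Metric.infDist (γ q) K < Metric.infDist (γ 0) K / 2)
    (hρ : 0 < ρ) (hρd : ρ ≤ Metric.infDist (γ 0) K / 8) :
    ∃ a ∈ Metric.ball (γ 0) ρ, ∃ a' ∈ Metric.ball (γ 0) ρ, a ∉ K ∪ range γ ∧ a' ∉ K ∪ range γ ∧
      ¬ LogEq (K ∪ range γ) a a' := by
  by_contra! hcon
  set X := K ∪ range γ with hX
  set d := Metric.infDist (γ 0) K with hd
  set Y : Set ℂ := (K ∪ γ '' Ici T) ∪ (K ∪ γ '' Iic (-T)) with hY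
  have hYX : Y ⊆ X := by
    rintro z ((h | ⟨q, -, rfl⟩) | (h | ⟨q, -, rfl⟩))
    exacts [Or.inl h, Or.inr ⟨q, rfl⟩, Or.inl h, Or.inr ⟨q, rfl⟩]
  have hYc : IsPreconnected Y := by
    have aux : ∀ S : Set ℂ, IsPreconnected S → ∀ k ∈ K, k ∈ closure S → IsPreconnected (K ∪ S) := by
      intro S hS k hk hkS
      have h1 : IsPreconnected (insert k S) :=
        hS.subset_closure (subset_insert _ _) (insert_subset hkS subset_closure)
      have h2 := hK.union k hk (mem_insert k S) h1
      rwa [union_insert, insert_eq_of_mem (show k ∈ K ∪ S from Or.inl hk)] at h2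
    obtain ⟨k, hk⟩ := hK0
    exact (aux _ (isPreconnected_Ici.image _ hγ.continuousOn) k₁ hk₁ (h₁ T)).union k
      (Or.inl hk) (Or.inl hk)
      (aux _ (isPreconnected_Iic.image _ hγ.continuousOn) k₂ hk₂ (h₂ (-T)))
  have hYd : ∀ z ∈ Y, d / 2 < ‖z - γ 0‖ := by
    have h1 : ∀ z, Metric.infDist z K < d / 2 → d / 2 < ‖z - γ 0‖ := by
      intro z hz
      have := Metric.infDist_le_infDist_add_dist (s := K) (x := γ 0) (y := z)
      rw [dist_comm, dist_eq_norm] at this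
      linarith
    have h2 : ∀ z ∈ K, Metric.infDist z K < d / 2 := fun z hz => by
      rw [Metric.infDist_zero_of_mem hz]; linarith
    rintro z ((h | ⟨q, h, rfl⟩) | (h | ⟨q, h, rfl⟩))
    exacts [h1 _ (h2 _ h), h1 _ (hVp q h), h1 _ (h2 _ h), h1 _ (hVn q h)]
  have hfar : ∀ z ∈ Y, ∀ a ∈ Metric.ball (γ 0) ρ, 2 * ρ < ‖z - a‖ := by
    intro z hz a ha
    have h1 := hYd z hz
    rw [Metric.mem_ball, dist_eq_norm] at ha
    have h2 : ‖z - γ 0‖ ≤ ‖z - a‖ + ‖a - γ 0‖ := norm_sub_le_norm_sub_add_norm_sub z a (γ 0)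
    linarith
  have hslit : ∀ z ∈ Y, ∀ a ∈ Metric.ball (γ 0) ρ, ∀ a' ∈ Metric.ball (γ 0) ρ,
      (z - a) / (z - a') ∈ Complex.slitPlane := by
    intro z hz a ha a' ha'
    refine mem_slitPlane_of_near (lt_trans ?_ (hfar z hz a' ha'))
    rw [Metric.mem_ball, dist_eq_norm] at ha ha'
    rw [norm_sub_rev] at ha'
    linarith [norm_sub_le_norm_sub_add_norm_sub a (γ 0) a']
  have hYne : ∀ z ∈ Y, ∀ a ∈ Metric.ball (γ 0) ρ, z - a ≠ 0 := fun z hz a ha => by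
    have := hfar z hz a ha
    exact norm_pos_iff.mp (by linarith)
  have hTY : γ T ∈ Y := Or.inl (Or.inr ⟨T, self_mem_Ici, rfl⟩)
  have hTY' : γ (-T) ∈ Y := Or.inr (Or.inr ⟨-T, self_mem_Iic, rfl⟩)
  have hnX : ∀ a ∈ Metric.ball (γ 0) ρ, a ∉ γ '' Icc (-T) T → a ∉ X := by
    rintro a ha haT (h | ⟨q, rfl⟩)
    · exact hYne a (Or.inl (Or.inl h)) a ha (sub_self a)
    · rcases le_total T q with h | h
      · exact hYne (γ q) (Or.inl (Or.inr ⟨q, h, rfl⟩)) _ ha (sub_self _)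
      · rcases le_total q (-T) with h' | h'
        · exact hYne (γ q) (Or.inr (Or.inr ⟨q, h', rfl⟩)) _ ha (sub_self _)
        · exact haT ⟨q, ⟨h', h⟩, rfl⟩
  have hTT : -T ≤ T := by linarith
  have hm1 : T ∈ Icc (-T) T := right_mem_Icc.mpr hTT
  have hm2 : -T ∈ Icc (-T) T := left_mem_Icc.mpr hTT
  have hu : ∀ q ∈ Icc (-T) 0, ∀ q' ∈ Icc 0 T, γ q = γ q' →
      γ q ∈ Metric.ball (γ 0) ρ → γ q = γ 0 := by
    intro q hq q' hq' h _
    rw [le_antisymm hq.2 ((hinj h).symm ▸ hq'.1)]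
  -- logarithms of `γ (± T) - a` relative to a reference point `e` of the ball
  have hκ : ∀ z ∈ Y, ∀ e ∈ Metric.ball (γ 0) ρ, ContinuousOn
      (fun a => Complex.log ((z - a) / (z - e)) + Complex.log (z - e)) (Metric.ball (γ 0) ρ) ∧
      ∀ a ∈ Metric.ball (γ 0) ρ,
        Complex.exp (Complex.log ((z - a) / (z - e)) + Complex.log (z - e)) = z - a := by
    intro z hz e he
    refine ⟨(ContinuousOn.clog (ContinuousOn.div_const (by fun_prop) _)
      fun a ha => hslit z hz a ha e he).add continuousOn_const, fun a ha => ?_⟩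
    rw [Complex.exp_add, Complex.exp_log (Complex.slitPlane_ne_zero (hslit z hz a ha e he)),
      Complex.exp_log (hYne z hz e he), div_mul_cancel₀ _ (hYne z hz e he)]
  have hLim : ∀ a L, IsLog γ (-T) T a L → a ∉ γ '' Icc (-T) T := by
    rintro _ L hL ⟨q, hq, rfl⟩
    have := hL.2 q hq
    simp [Complex.exp_ne_zero] at this
  by_cases hex : ∃ e ∈ Metric.ball (γ 0) ρ, e ∉ γ '' Icc (-T) T
  · obtain ⟨e, he, heT⟩ := hex
    obtain ⟨Le, hLe⟩ := exists_isLog hTT hγ.continuousOn heT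
    refine winding_jump (by linarith : -T ≤ 0) hT hγ.continuousOn hρ (hκ _ hTY' e he).1
      (hκ _ hTY e he).1 (hκ _ hTY' e he).2 (hκ _ hTY e he).2 hu
      (C := Le T - Le (-T) - Complex.log (γ T - e) + Complex.log (γ (-T) - e)) ?_
    intro a ha L hL
    have haT := hLim a L hL
    obtain ⟨h, hh, hhe⟩ := hcon a ha e he (hnX a ha haT) (hnX e he heT)
    have h1 := log_sub_const hYc (f := h) (g := fun z => Complex.log ((z - a) / (z - e)))
      (hh.mono hYX) (ContinuousOn.clog (ContinuousOn.div (by fun_prop) (by fun_prop)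
        fun z hz => hYne z hz e he) fun z hz => hslit z hz a ha e he)
      (fun z hz => by
        rw [hhe z (hYX hz), Complex.exp_log (Complex.slitPlane_ne_zero (hslit z hz a ha e he))])
      hTY hTY'
    have h2 := log_sub_const isPreconnected_Icc (f := fun q => L q - Le q) (g := fun q => h (γ q))
      (hL.1.sub hLe.1) (hh.comp hγ.continuousOn fun q _ => Or.inr ⟨q, rfl⟩) (fun q hq => by
        rw [Complex.exp_sub, hL.2 q hq, hLe.2 q hq, hhe (γ q) (Or.inr ⟨q, rfl⟩)]) hm1 hm2
    linear_combination h2 + h1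
  · push Not at hex
    have h0 : γ 0 ∈ Metric.ball (γ 0) ρ := Metric.mem_ball_self hρ
    exact winding_jump (by linarith : -T ≤ 0) hT hγ.continuousOn hρ (hκ _ hTY' _ h0).1
      (hκ _ hTY _ h0).1 (hκ _ hTY' _ h0).2 (hκ _ hTY _ h0).2 hu (C := 0)
      fun a ha L hL => absurd (hex a ha) (hLim a L hL)

/-! ### Homoclinic orbits of an isolated invariant continuum -/

/-- Every point `a` of a connected open set `U` outside a closed set `X` meeting `U` is joined to
`X ∩ U` inside `U`. -/
theorem reach {X U : Set ℂ} (hX : IsClosed X) (hU : IsOpen U) (hUc : IsPreconnected U)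
    (hne : (U ∩ X).Nonempty) {a : ℂ} (ha : a ∈ U) (haX : a ∉ X) :
    ∃ C, IsPreconnected C ∧ a ∈ C ∧ C ⊆ U \ X ∧ ∃ z ∈ closure C, z ∈ U ∧ z ∈ X := by
  have hsub := connectedComponentIn_subset (U \ X) a
  have hmem : a ∈ connectedComponentIn (U \ X) a := mem_connectedComponentIn ⟨ha, haX⟩
  refine ⟨connectedComponentIn (U \ X) a, isPreconnected_connectedComponentIn, hmem, hsub, ?_⟩
  by_contra! hcon
  obtain ⟨z, hzU, hzX⟩ := hne
  refine (hsub (hUc.subset_of_closure_inter_subset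
    (IsOpen.connectedComponentIn (hU.sdiff hX)) ⟨a, ha, hmem⟩ ?_ hzU)).2 hzX
  rintro y ⟨hy, hyU⟩
  have h1 : IsPreconnected (insert y (connectedComponentIn (U \ X) a)) :=
    isPreconnected_connectedComponentIn.subset_closure (subset_insert _ _)
      (insert_subset hy subset_closure)
  exact h1.subset_connectedComponentIn (mem_insert_of_mem _ hmem)
    (insert_subset (show y ∈ U \ X from ⟨hyU, hcon y hy hyU⟩) hsub) (mem_insert _ _)

/-- An isolated invariant continuum `K` with isolating neighborhood `N`, and an invariant component
`U` of its complement without fixed points. That `U` is a component is recorded by `connU`, `disU`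
and `compU`. -/
structure Setting (ψ : Flow ℝ ℂ) (K N U : Set ℂ) : Prop where
  compK : IsCompact K
  connK : IsPreconnected K
  neK : K.Nonempty
  invK : ∀ x ∈ K, ∀ t, ψ t x ∈ K
  compN : IsCompact N
  subN : K ⊆ interior N
  maxN : ∀ x ∈ N, (∀ t, ψ t x ∈ N) → x ∈ K
  openU : IsOpen U
  connU : IsPreconnected U
  disU : ∀ a ∈ U, a ∉ K
  clU : closure U ⊆ U ∪ K
  compU : ∀ C, IsPreconnected C → (∀ a ∈ C, a ∉ K) → ∀ a ∈ C, a ∈ U → C ⊆ U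
  invU : ∀ x ∈ U, ∀ t, ψ t x ∈ U
  fixU : ∀ x ∈ U, ∃ t, ψ t x ≠ x

/-- The orbit of `x`. -/
def orb (ψ : Flow ℝ ℂ) (x : ℂ) : Set ℂ := range fun q => ψ q x

/-- `x` is a point of `U` whose orbit accumulates on `K` in both time directions. -/
def Homo (ψ : Flow ℝ ℂ) (K U : Set ℂ) (x : ℂ) : Prop :=
  x ∈ U ∧ (∃ k ∈ K, AccP ψ x k) ∧ ∃ k ∈ K, AccN ψ x k

theorem self_mem_orb (ψ : Flow ℝ ℂ) (x : ℂ) : x ∈ orb ψ x := ⟨0, ψ.map_zero_apply x⟩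

theorem flow_mem_orb {ψ : Flow ℝ ℂ} {x y : ℂ} (h : y ∈ orb ψ x) (t : ℝ) : ψ t y ∈ orb ψ x := by
  obtain ⟨q, rfl⟩ := h
  exact ⟨t + q, ψ.map_add t q x⟩

theorem mem_orb_symm {ψ : Flow ℝ ℂ} {x y : ℂ} (h : y ∈ orb ψ x) : x ∈ orb ψ y := by
  obtain ⟨q, rfl⟩ := h
  exact ⟨-q, by simp only [← ψ.map_add, neg_add_cancel, ψ.map_zero_apply]⟩

theorem isPreconnected_orb (ψ : Flow ℝ ℂ) (x : ℂ) : IsPreconnected (orb ψ x) :=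
  isPreconnected_range (ψ.cont_time x)

theorem orb_reverse (ψ : Flow ℝ ℂ) (x : ℂ) : orb ψ.reverse x = orb ψ x := by
  ext y
  constructor
  · rintro ⟨q, rfl⟩
    exact ⟨-q, by simp [Flow.reverse_apply]⟩
  · rintro ⟨q, rfl⟩
    exact ⟨-q, by simp [Flow.reverse_apply]⟩

theorem AccP.mem_closure {ψ : Flow ℝ ℂ} {x y : ℂ} (h : AccP ψ x y) : y ∈ closure (orb ψ x) := by
  refine mem_closure_iff_nhds.mpr fun O hO => ?_
  obtain ⟨t, -, ht⟩ := h O hO 0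
  exact ⟨_, ht, t, rfl⟩

theorem reverse_reverse_s18 (ψ : Flow ℝ ℂ) : ψ.reverse.reverse = ψ := by
  ext t x
  simp [Flow.reverse_apply]

theorem accP_reverse (ψ : Flow ℝ ℂ) (x y : ℂ) : AccP ψ x y ↔ AccN ψ.reverse x y := by
  rw [accN_iff, reverse_reverse_s18]

theorem Setting.reverse {ψ : Flow ℝ ℂ} {K N U : Set ℂ} (S : Setting ψ K N U) :
    Setting ψ.reverse K N U where
  compK := S.compK
  connK := S.connK
  neK := S.neK
  invK := fun x hx t => by simpa [Flow.reverse_apply] using S.invK x hx (-t)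
  compN := S.compN
  subN := S.subN
  maxN := fun x hx h => S.maxN x hx fun t => by simpa [Flow.reverse_apply] using h (-t)
  openU := S.openU
  connU := S.connU
  disU := S.disU
  clU := S.clU
  compU := S.compU
  invU := fun x hx t => by simpa [Flow.reverse_apply] using S.invU x hx (-t)
  fixU := fun x hx => by
    obtain ⟨t, ht⟩ := S.fixU x hx
    exact ⟨-t, by simpa [Flow.reverse_apply] using ht⟩

theorem Homo.reverse {ψ : Flow ℝ ℂ} {K U : Set ℂ} {x : ℂ} (h : Homo ψ K U x) :
    Homo ψ.reverse K U x := by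
  obtain ⟨h1, ⟨k, hk, h2⟩, k', hk', h3⟩ := h
  exact ⟨h1, ⟨k', hk', (accN_iff _ _ _).mp h3⟩, k, hk, (accP_reverse _ _ _).mp h2⟩

section

variable {ψ : Flow ℝ ℂ} {K N U : Set ℂ}

theorem Setting.orb_sub (S : Setting ψ K N U) {x : ℂ} (hx : x ∈ U) : orb ψ x ⊆ U := by
  rintro _ ⟨q, rfl⟩
  exact S.invU x hx q

theorem Setting.injective (S : Setting ψ K N U) {x : ℂ} (h : Homo ψ K U x) :
    Function.Injective fun q => ψ q x := by
  obtain ⟨h1, ⟨k, hk, h2⟩, -⟩ := h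
  exact injective_of_accP h2 fun hk' => S.disU k (S.orb_sub h1 hk') hk

/-- A homoclinic orbit ends up near `K`: if it left a neighborhood of `K` at arbitrarily late times, it
would accumulate at a point of `U` at distance `d` from `K`, against `no_accumulation`. -/
theorem Setting.eventually_near (S : Setting ψ K N U) {x : ℂ} (h : Homo ψ K U x) {d : ℝ}
    (hd : 0 < d) : ∃ T, ∀ q, T ≤ q → Metric.infDist (ψ q x) K < d := by
  obtain ⟨hxU, ⟨k, hk, h2⟩, k', hk', h3⟩ := h
  by_contra! hcon
  have hcont : Continuous fun z => Metric.infDist z K := Metric.continuous_infDist_pt K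
  have hC : IsCompact {z | Metric.infDist z K = d} := by
    refine Metric.isCompact_of_isClosed_isBounded (isClosed_eq hcont continuous_const) ?_
    refine (S.compK.isBounded.cthickening (δ := d)).subset fun z hz => ?_
    rw [S.compK.cthickening_eq_biUnion_closedBall hd.le]
    obtain ⟨y, hy, hy'⟩ := S.compK.exists_infDist_eq_dist S.neK z
    exact mem_iUnion₂.mpr ⟨y, hy, by
      rw [Metric.mem_closedBall, ← hy']
      exact le_of_eq hz⟩
  obtain ⟨y, hy, hyA⟩ := exists_accP (ψ := ψ) (x := x) hC fun T => by
    have hO : {z | Metric.infDist z K < d} ∈ 𝓝 k := by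
      refine (isOpen_lt hcont continuous_const).mem_nhds ?_
      rw [mem_ofPred_eq, Metric.infDist_zero_of_mem hk]; exact hd
    obtain ⟨q₁, hq₁, h1⟩ := h2 _ hO T
    obtain ⟨q₂, hq₂, h2⟩ := hcon q₁
    obtain ⟨q, hq, hqd⟩ := intermediate_value_Icc hq₂
      (hcont.comp (ψ.cont_time x)).continuousOn ⟨le_of_lt h1, h2⟩
    exact ⟨q, hq₁.trans hq.1, hqd⟩
  have hyK : y ∉ K := fun hyK => by
    have : Metric.infDist y K = d := hy
    rw [Metric.infDist_zero_of_mem hyK] at this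
    exact hd.ne this
  have hyU : y ∈ U := (S.clU (closure_mono (S.orb_sub hxU) hyA.mem_closure)).resolve_right hyK
  exact (no_accumulation S.compK.isClosed S.connK (fun q => S.disU _ (S.invU x hxU q)) hk hk' h2 h3
    hyK (S.fixU y hyU)).1 hyA

theorem Setting.near (S : Setting ψ K N U) {x : ℂ} (h : Homo ψ K U x) {d : ℝ} (hd : 0 < d) :
    ∃ T, 0 ≤ T ∧ (∀ q, T ≤ q → Metric.infDist (ψ q x) K < d) ∧
      ∀ q, q ≤ -T → Metric.infDist (ψ q x) K < d := by
  obtain ⟨T₁, h₁⟩ := S.eventually_near h hd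
  obtain ⟨T₂, h₂⟩ := S.reverse.eventually_near h.reverse hd
  refine ⟨max 0 (max T₁ T₂), le_max_left _ _, fun q hq => h₁ q ?_, fun q hq => ?_⟩
  · exact ((le_max_left _ _).trans (le_max_right _ _)).trans hq
  · have : T₂ ≤ -q := by linarith [(le_max_right T₁ T₂).trans (le_max_right 0 (max T₁ T₂))]
    simpa [Flow.reverse_apply] using h₂ _ this

theorem Setting.isClosed_union (S : Setting ψ K N U) {x : ℂ} (h : Homo ψ K U x) :
    IsClosed (K ∪ orb ψ x) := by
  rw [← isOpen_compl_iff, isOpen_iff_mem_nhds]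
  intro a ha
  have haK : a ∉ K := fun h => ha (Or.inl h)
  have hd : 0 < Metric.infDist a K :=
    (S.compK.isClosed.notMem_iff_infDist_pos S.neK).mp haK
  obtain ⟨T, -, h1, h2⟩ := S.near h (half_pos hd)
  have hc : IsClosed ((fun q => ψ q x) '' Icc (-T) T) :=
    (isCompact_Icc.image (ψ.cont_time x)).isClosed
  have hac : a ∈ ((fun q => ψ q x) '' Icc (-T) T)ᶜ := by
    rintro ⟨q, -, rfl⟩
    exact ha (Or.inr ⟨q, rfl⟩)
  have hO : {z | Metric.infDist a K / 2 < Metric.infDist z K} ∈ 𝓝 a :=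
    (isOpen_lt continuous_const (Metric.continuous_infDist_pt K)).mem_nhds (half_lt_self hd)
  filter_upwards [hO, hc.isOpen_compl.mem_nhds hac] with z hz hz'
  have hz : Metric.infDist a K / 2 < Metric.infDist z K := hz
  rintro (h | ⟨q, rfl⟩)
  · rw [Metric.infDist_zero_of_mem h] at hz
    linarith
  · rcases le_total T q with h3 | h3
    · exact lt_asymm hz (h1 q h3)
    · rcases le_total q (-T) with h4 | h4
      · exact lt_asymm hz (h2 q h4)
      · exact hz' ⟨q, ⟨h4, h3⟩, rfl⟩

theorem Setting.bounded_union (S : Setting ψ K N U) {x : ℂ} (h : Homo ψ K U x) :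
    Bornology.IsBounded (K ∪ orb ψ x) := by
  obtain ⟨T, -, h1, h2⟩ := S.near h one_pos
  have hc : Bornology.IsBounded ((fun q => ψ q x) '' Icc (-T) T) :=
    (isCompact_Icc.image (ψ.cont_time x)).isBounded
  refine (S.compK.isBounded.union ((S.compK.isBounded.cthickening (δ := 1)).union hc)).subset ?_
  have key : ∀ z, Metric.infDist z K < 1 → z ∈ Metric.cthickening 1 K := by
    intro z hz
    rw [S.compK.cthickening_eq_biUnion_closedBall one_pos.le]
    obtain ⟨y, hy, hy'⟩ := S.compK.exists_infDist_eq_dist S.neK z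
    exact mem_iUnion₂.mpr ⟨y, hy, by
      rw [Metric.mem_closedBall, ← hy']
      exact hz.le⟩
  rintro z (h | ⟨q, rfl⟩)
  · exact Or.inl h
  · rcases le_total T q with h3 | h3
    · exact Or.inr (Or.inl (key _ (h1 q h3)))
    · rcases le_total q (-T) with h4 | h4
      · exact Or.inr (Or.inl (key _ (h2 q h4)))
      · exact Or.inr (Or.inr ⟨q, ⟨h4, h3⟩, rfl⟩)

theorem Setting.isPreconnected_union (S : Setting ψ K N U) {x : ℂ} (h : Homo ψ K U x) :
    IsPreconnected (K ∪ orb ψ x) := by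
  obtain ⟨-, ⟨k, hk, h2⟩, -⟩ := h
  have h1 : IsPreconnected (insert k (orb ψ x)) :=
    (isPreconnected_orb ψ x).subset_closure (subset_insert _ _)
      (insert_subset h2.mem_closure subset_closure)
  have h2 := S.connK.union k hk (mem_insert k _) h1
  rwa [union_insert, insert_eq_of_mem (show k ∈ K ∪ orb ψ x from Or.inl hk)] at h2

/-- Near a homoclinic point there are two points of `U` separated by `K` and the orbit. -/
theorem Setting.exists_separated (S : Setting ψ K N U) {x : ℂ} (h : Homo ψ K U x) :
    ∃ a ∈ U, ∃ a' ∈ U, a ∉ K ∪ orb ψ x ∧ a' ∉ K ∪ orb ψ x ∧ ¬ LogEq (K ∪ orb ψ x) a a' := by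
  have hxK : x ∉ K := S.disU x h.1
  have hd : 0 < Metric.infDist x K :=
    (S.compK.isClosed.notMem_iff_infDist_pos S.neK).mp hxK
  obtain ⟨T, hT, h1, h2⟩ := S.near h (half_pos hd)
  obtain ⟨ε, hε, hb⟩ := Metric.isOpen_iff.mp S.openU x h.1
  have hinj := S.injective h
  obtain ⟨-, ⟨k, hk, h3⟩, k', hk', h4⟩ := h
  have h0 : ψ 0 x = x := ψ.map_zero_apply x
  obtain ⟨a, ha, a', ha', haX, haX', hn⟩ := exists_not_logEq (γ := fun q => ψ q x)
    (ρ := min ε (Metric.infDist x K / 8)) (T := T) (ψ.cont_time x) hinj S.connK S.neK hk hk'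
    (fun T => mem_closure_iff_nhds.mpr fun O hO => by
      obtain ⟨t, ht, ht'⟩ := h3 O hO T
      exact ⟨_, ht', t, ht, rfl⟩)
    (fun T => mem_closure_iff_nhds.mpr fun O hO => by
      obtain ⟨t, ht, ht'⟩ := h4 O hO T
      exact ⟨_, ht', t, ht, rfl⟩)
    hT (by simpa only [h0] using h1) (by simpa only [h0] using h2)
    (lt_min hε (by linarith)) (by simp only [h0]; exact min_le_right _ _)
  simp only [h0] at ha ha'
  exact ⟨a, hb (Metric.ball_subset_ball (min_le_left _ _) ha), a',
    hb (Metric.ball_subset_ball (min_le_left _ _) ha'), haX, haX', hn⟩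

end

/-! ### The nest of homoclinic orbits -/

/-- The points of `U` separated from `b` by `K` together with the orbit of `x`: the inside of the
closed curve formed by the orbit and `K`, as seen from `b`. -/
def inside (ψ : Flow ℝ ℂ) (K U : Set ℂ) (b x : ℂ) : Set ℂ :=
  {a | a ∈ U ∧ a ∉ orb ψ x ∧ ¬ LogEq (K ∪ orb ψ x) a b}

theorem inside_reverse (ψ : Flow ℝ ℂ) (K U : Set ℂ) (b x : ℂ) :
    inside ψ.reverse K U b x = inside ψ K U b x := by
  simp only [inside, orb_reverse]

theorem notMem_inside_self (ψ : Flow ℝ ℂ) (K U : Set ℂ) (b x : ℂ) : x ∉ inside ψ K U b x :=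
  fun h => h.2.1 (self_mem_orb ψ x)

section

variable {ψ : Flow ℝ ℂ} {K N U : Set ℂ} {b x x' : ℂ}

theorem Setting.notMem_union (S : Setting ψ K N U) {a : ℂ} (ha : a ∈ U) (hx : a ∉ orb ψ x) :
    a ∉ K ∪ orb ψ x := by
  rintro (h | h)
  exacts [S.disU a ha h, hx h]

theorem Setting.inside_flow (S : Setting ψ K N U) (h : Homo ψ K U x) {a : ℂ}
    (ha : a ∈ inside ψ K U b x) : orb ψ a ⊆ inside ψ K U b x := by
  have hd : ∀ y ∈ orb ψ a, y ∉ orb ψ x := by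
    rintro y hy ⟨q, rfl⟩
    obtain ⟨q', hq'⟩ := mem_orb_symm hy
    exact ha.2.1 ⟨q' + q, by simp only [ψ.map_add]; exact hq'⟩
  have hd' : ∀ y ∈ orb ψ a, y ∉ K ∪ orb ψ x := fun y hy =>
    S.notMem_union (S.orb_sub ha.1 hy) (hd y hy)
  intro y hy
  refine ⟨S.orb_sub ha.1 hy, hd y hy, fun hl => ha.2.2 ?_⟩
  exact (LogEq.of_isPreconnected (S.isClosed_union h) (isPreconnected_orb ψ a) hd'
    (self_mem_orb ψ a) hy).trans (hd' y hy) hl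

/-- The part of `U` which is not inside is connected: all of it is joined to the orbit. -/
theorem Setting.isPreconnected_diff (S : Setting ψ K N U) (h : Homo ψ K U x) :
    IsPreconnected (U \ inside ψ K U b x) := by
  have horb : orb ψ x ⊆ U \ inside ψ K U b x := fun y hy => ⟨S.orb_sub h.1 hy, fun hi => hi.2.1 hy⟩
  refine isPreconnected_of_forall x fun a ha => ?_
  by_cases hao : a ∈ orb ψ x
  · exact ⟨orb ψ x, horb, self_mem_orb ψ x, hao, isPreconnected_orb ψ x⟩
  have haX := S.notMem_union ha.1 hao
  obtain ⟨C, hC, haC, hCs, z, hz, hzU, hzX⟩ := reach (S.isClosed_union h) S.openU S.connU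
    ⟨x, h.1, Or.inr (self_mem_orb ψ x)⟩ ha.1 haX
  have hzo : z ∈ orb ψ x := hzX.resolve_left (S.disU z hzU)
  have hab : LogEq (K ∪ orb ψ x) a b := by
    by_contra hn
    exact ha.2 ⟨ha.1, hao, hn⟩
  have hCd : C ⊆ U \ inside ψ K U b x := fun y hy => ⟨(hCs hy).1, fun hi => hi.2.2 <|
    (LogEq.of_isPreconnected (S.isClosed_union h) hC (fun c hc => (hCs hc).2) hy haC).trans haX hab⟩
  refine ⟨insert z C ∪ orb ψ x, union_subset (insert_subset (horb hzo) hCd) horb,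
    Or.inr (self_mem_orb ψ x), Or.inl (mem_insert_of_mem _ haC), ?_⟩
  exact IsPreconnected.union z (mem_insert _ _) hzo (hC.subset_closure (subset_insert _ _)
    (insert_subset hz subset_closure)) (isPreconnected_orb ψ x)

theorem Setting.mem_diff (hb : b ∈ U) (hbx : b ∉ K ∪ orb ψ x) : b ∈ U \ inside ψ K U b x :=
  ⟨hb, fun h => h.2.2 (LogEq.refl hbx)⟩

theorem Setting.notMem_orb_of_inside (S : Setting ψ K N U) (h : Homo ψ K U x) (hb : b ∈ U)
    (hbx : b ∉ orb ψ x) (hx' : x' ∈ inside ψ K U b x) : b ∉ orb ψ x' := fun ho =>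
  (Setting.mem_diff hb (S.notMem_union hb hbx)).2 (S.inside_flow h hx' ho)

/-- If `x'` lies inside the orbit of `x`, then whatever is separated from `b` by `x'` is separated from
`b` by `x`: the rest of `U` is connected and avoids `K` and the orbit of `x'`. -/
theorem Setting.inside_trans (S : Setting ψ K N U) (h : Homo ψ K U x) (h' : Homo ψ K U x')
    (hb : b ∈ U) (hbx : b ∉ orb ψ x) (hx' : x' ∈ inside ψ K U b x) :
    inside ψ K U b x' ⊆ inside ψ K U b x := by
  intro a ha
  by_contra hn
  refine ha.2.2 (LogEq.of_isPreconnected (S.isClosed_union h') (S.isPreconnected_diff h (b := b))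
    ?_ ⟨ha.1, hn⟩ (Setting.mem_diff hb (S.notMem_union hb hbx)))
  rintro y hy (hK | ho)
  · exact S.disU y hy.1 hK
  · exact hy.2 (S.inside_flow h hx' ho)

theorem Setting.closure_inside (S : Setting ψ K N U) (h : Homo ψ K U x) :
    closure (inside ψ K U b x ∪ orb ψ x) ∩ U ⊆ inside ψ K U b x ∪ orb ψ x := by
  rintro p ⟨hp, hpU⟩
  by_contra hn
  have hpo : p ∉ orb ψ x := fun h => hn (Or.inr h)
  have hpX := S.notMem_union hpU hpo
  have hev : ∀ᶠ a in 𝓝 p, a ∉ K ∪ orb ψ x ∧ LogEq (K ∪ orb ψ x) a p :=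
    ((S.isClosed_union h).isOpen_compl.eventually_mem hpX).and
      (LogEq.eventually (S.isClosed_union h) hpX)
  obtain ⟨a, ⟨haX, hap⟩, ha⟩ := mem_closure_iff_nhds.mp hp _ hev
  rcases ha with ha | ha
  · refine hn (Or.inl ⟨hpU, hpo, fun hl => ha.2.2 (hap.trans hpX hl)⟩)
  · exact haX (Or.inr ha)

/-- A point inside a bounded nest has an orbit accumulating on `K` in forward time. Otherwise its
limit set would contain a periodic orbit inside; such an orbit winds around points of `U` only, and
therefore cannot exist, as `U` contains no fixed points. -/
theorem Setting.accP_of_inside (S : Setting ψ K N U) (h : Homo ψ K U x) (hb : b ∈ U)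
    (hbx : b ∉ orb ψ x) {R : ℝ} (hR : inside ψ K U b x ⊆ Metric.closedBall 0 R)
    (hbR : R < ‖b‖ ∨ U ⊆ Metric.closedBall 0 R) {p : ℂ} (hp : p ∈ inside ψ K U b x) :
    ∃ k ∈ K, AccP ψ p k := by
  by_contra! hcon
  set I := inside ψ K U b x with hI
  set Q := {y | AccP ψ p y} with hQ
  have hpI : orb ψ p ⊆ I := S.inside_flow h hp
  have hQI : Q ⊆ closure I := fun y hy => closure_mono hpI (AccP.mem_closure hy)
  have hQR : Q ⊆ Metric.closedBall 0 R := fun y hy =>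
    closure_minimal hR Metric.isClosed_closedBall (hQI hy)
  have hQc : IsCompact Q := (isCompact_closedBall _ _).of_isClosed_subset (isClosed_accP ψ p) hQR
  have hQU : Q ⊆ U := fun y hy =>
    (S.clU (closure_mono (fun a ha => ha.1) (hQI hy))).resolve_right fun hK => hcon y hK hy
  have hQne : Q.Nonempty := by
    obtain ⟨y, -, hy⟩ := exists_accP (isCompact_closedBall (0:ℂ) R) (ψ := ψ) (x := p)
      fun T => ⟨T, le_rfl, hR (hpI ⟨T, rfl⟩)⟩
    exact ⟨y, hy⟩
  have hQI' : Q ⊆ I := by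
    intro y hy
    refine (S.closure_inside h ⟨closure_mono subset_union_left (hQI hy), hQU hy⟩).resolve_right ?_
    intro hyo
    obtain ⟨-, ⟨k, hk, hkA⟩, -⟩ := h
    refine hcon k hk ((isClosed_accP ψ p).closure_subset_iff.mpr ?_ hkA.mem_closure)
    rintro _ ⟨q, rfl⟩
    obtain ⟨q', rfl⟩ := hyo
    have := AccP.flow hy (q - q')
    simp only [← ψ.map_add, sub_add_cancel] at this
    exact this
  obtain ⟨z, hz, T, hT, hzT, hmin⟩ := exists_periodic hQc hQne (fun y hy t => AccP.flow hy t)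
    fun y hy => S.fixU y (hQU hy)
  have hP : (fun q => ψ q z) '' Icc 0 T = range fun q => ψ q z := range_of_period hT hzT
  have hPI : (fun q => ψ q z) '' Icc 0 T ⊆ I := by
    rw [hP]
    exact S.inside_flow h (hQI' hz)
  have hz0 : ψ 0 z = ψ T z := by rw [hzT, ψ.map_zero_apply]
  set w := wind (fun q => ψ q z) 0 T with hw
  have hconst : ∀ C : Set ℂ, IsPreconnected C → (∀ a ∈ C, a ∉ I) → ∀ a ∈ C, ∀ c ∈ C, w a = w c :=
    fun C hC hd a ha c hc => wind_const hT.le (ψ.cont_time z).continuousOn hz0 hC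
      (fun y hy hy' => hd y hy (hPI hy')) ha hc
  have hfar : ∀ a : ℂ, R < ‖a‖ → w a = 0 := fun a ha =>
    wind_far hT.le (ψ.cont_time z).continuousOn hz0 (hPI.trans hR) ha
  obtain ⟨k, hk⟩ := S.neK
  -- outside `U` the winding number is constant, since every component of `Kᶜ` reaches `K`
  have hout : ∀ a ∉ U, w a = w k := by
    intro a ha
    have hKI : ∀ y ∈ K, y ∉ I := fun y hy hyI => S.disU y hyI.1 hy
    by_cases haK : a ∈ K
    · exact hconst K S.connK hKI a haK k hk
    obtain ⟨C, hC, haC, hCs, y, hy, -, hyK⟩ := reach S.compK.isClosed isOpen_univ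
      isPreconnected_univ ⟨k, mem_univ k, hk⟩ (mem_univ a) haK
    have hCU : ∀ c ∈ C, c ∉ U := fun c hc hcU =>
      ha (S.compU C hC (fun c hc => (hCs hc).2) c hc hcU haC)
    have h1 := hconst (insert y C) (hC.subset_closure (subset_insert _ _)
      (insert_subset hy subset_closure)) (by
        rintro c (rfl | hc)
        · exact hKI _ hyK
        · exact fun hcI => hCU c hc hcI.1) a (mem_insert_of_mem _ haC) y (mem_insert _ _)
    rw [h1]
    exact hconst K S.connK hKI y hyK k hk
  have hk0 : w k = 0 := by
    rcases hbR with hbR | hUR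
    · have h1 := hconst (U \ I) (S.isPreconnected_diff h) (fun a ha => ha.2) b
        (Setting.mem_diff hb (S.notMem_union hb hbx)) x ⟨h.1, notMem_inside_self ψ K U b x⟩
      have h2 := hconst _ (S.isPreconnected_union h) (by
        rintro a (ha | ha) haI
        · exact S.disU a haI.1 ha
        · exact haI.2.1 ha) x (Or.inr (self_mem_orb ψ x)) k (Or.inl hk)
      rw [← h2, ← h1, hfar b hbR]
    · have h1 : R < ‖((|R| + 1 : ℝ) : ℂ)‖ := by
        rw [Complex.norm_real, Real.norm_of_nonneg (by positivity)]
        linarith [le_abs_self R]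
      rw [← hout _ fun hU' => ?_, hfar _ h1]
      exact absurd (mem_closedBall_zero_iff.mp (hUR hU')) (not_le.mpr h1)
  refine periodic_fixed hT hzT hmin fun a ha => S.fixU a ?_
  rcases ha with ha | ha
  · exact (hPI (hP ▸ ha)).1
  · by_contra haU
    exact ha ((hout a haU).trans hk0)

/-- Every point inside a homoclinic orbit is homoclinic. -/
theorem Setting.homo_of_inside (S : Setting ψ K N U) (h : Homo ψ K U x) (hb : b ∈ U)
    (hbx : b ∉ orb ψ x) {R : ℝ} (hR : inside ψ K U b x ⊆ Metric.closedBall 0 R)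
    (hbR : R < ‖b‖ ∨ U ⊆ Metric.closedBall 0 R) {p : ℂ} (hp : p ∈ inside ψ K U b x) :
    Homo ψ K U p := by
  refine ⟨hp.1, S.accP_of_inside h hb hbx hR hbR hp, ?_⟩
  simp only [accN_iff]
  exact S.reverse.accP_of_inside h.reverse hb (by rwa [orb_reverse]) (by rwa [inside_reverse]) hbR
    (by rwa [inside_reverse])

/-- There is no homoclinic point: a minimal nest would contain a smaller one, and minimal nests
exist because every orbit of a chain leaves `N`, in a compact part of `U`. -/
theorem Setting.not_homo (S : Setting ψ K N U) (x₀ : ℂ) : ¬ Homo ψ K U x₀ := by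
  intro h
  obtain ⟨R₀, hR₀⟩ := (S.bounded_union h).subset_closedBall 0
  set R := max R₀ 0
  have hR : K ∪ orb ψ x₀ ⊆ Metric.closedBall 0 R :=
    hR₀.trans (Metric.closedBall_subset_closedBall (le_max_left _ _))
  have hRn : 0 ≤ R := le_max_right _ _
  have hn0 : ∀ c : ℂ, R < ‖c‖ → c ≠ 0 := fun c hc => norm_pos_iff.mp (hRn.trans_lt hc)
  -- the base point `b` is far away if `U` allows it; otherwise `U` lies in the disc and any `b`
  -- off the orbit will do
  obtain ⟨b, hb, hbx, hbR⟩ : ∃ b ∈ U, b ∉ orb ψ x₀ ∧ (R < ‖b‖ ∨ U ⊆ Metric.closedBall 0 R) := by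
    by_cases hUR : U ⊆ Metric.closedBall 0 R
    · obtain ⟨a, ha, -, -, haX, -⟩ := S.exists_separated h
      exact ⟨a, ha, fun h => haX (Or.inr h), Or.inr hUR⟩
    · obtain ⟨b, hb, hbR⟩ := not_subset.mp hUR
      exact ⟨b, hb, fun h => hbR (hR (Or.inr h)), Or.inl (by simpa using hbR)⟩
  have hIR : inside ψ K U b x₀ ⊆ Metric.closedBall 0 R := by
    rcases hbR with hbR | hUR
    · intro a ha
      rw [mem_closedBall_zero_iff]
      by_contra! haR
      exact ha.2.2 (LogEq.of_far hR haR hbR (hn0 a haR) (hn0 b hbR))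
    · exact fun a ha => hUR ha.1
  set F := {x | x = x₀ ∨ x ∈ inside ψ K U b x₀} with hF
  have hFh : ∀ x ∈ F, Homo ψ K U x := by
    rintro x (rfl | hx)
    · exact h
    · exact S.homo_of_inside h hb hbx hIR hbR hx
  have hFb : ∀ x ∈ F, b ∉ orb ψ x := by
    rintro x (rfl | hx)
    · exact hbx
    · exact S.notMem_orb_of_inside h hb hbx hx
  have hFF : ∀ x ∈ F, inside ψ K U b x ⊆ F := by
    rintro x (rfl | hx) a ha
    · exact Or.inr ha
    · exact Or.inr (S.inside_trans h (hFh x (Or.inr hx)) hb hbx hx ha)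
  have htr : ∀ x ∈ F, ∀ x' ∈ inside ψ K U b x, inside ψ K U b x' ⊆ inside ψ K U b x :=
    fun x hx x' hx' => S.inside_trans (hFh x hx) (hFh x' (hFF x hx hx')) hb (hFb x hx) hx'
  have hFR : ∀ x ∈ F, orb ψ x ⊆ Metric.closedBall 0 R := by
    rintro x (rfl | hx)
    · exact subset_union_right.trans hR
    · exact (S.inside_flow h hx).trans hIR
  -- every orbit of the nest meets the compact set `C₁`
  set C₁ := (Metric.closedBall (0:ℂ) R ∩ closure U) \ interior N with hC₁
  have hC₁c : IsCompact C₁ :=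
    ((isCompact_closedBall _ _).inter_right isClosed_closure).diff isOpen_interior
  have hC₁U : C₁ ⊆ U := fun y hy => (S.clU hy.1.2).resolve_right fun hK => hy.2 (S.subN hK)
  have hex : ∀ x : F, ∃ y ∈ orb ψ x, y ∈ C₁ := by
    rintro ⟨x, hx⟩
    by_contra! hcon
    have hN : ∀ t, ψ t x ∈ N := by
      intro t
      by_contra hN
      have hU := S.invU x (hFh x hx).1 t
      exact hcon _ ⟨t, rfl⟩ ⟨⟨hFR x hx ⟨t, rfl⟩, subset_closure hU⟩,
        fun hi => hN (interior_subset hi)⟩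
    have h0 := hN 0
    rw [ψ.map_zero_apply] at h0
    exact S.disU x (hFh x hx).1 (S.maxN x h0 hN)
  choose e heo heC using hex
  have hrt : ∀ x y z : F, ((y : ℂ) = x ∨ (y : ℂ) ∈ inside ψ K U b x) →
      ((z : ℂ) = y ∨ (z : ℂ) ∈ inside ψ K U b y) → ((z : ℂ) = x ∨ (z : ℂ) ∈ inside ψ K U b x) := by
    rintro x y z (hxy | hxy) hyz
    · rwa [← hxy]
    · rcases hyz with hyz | hyz
      · rw [hyz]; exact Or.inr hxy
      · exact Or.inr (htr x x.2 y hxy hyz)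
  set r : F → F → Prop := fun x y => (y : ℂ) = x ∨ (y : ℂ) ∈ inside ψ K U b x with hr
  -- a chain without innermost orbit has an upper bound: by compactness of `C₁`, the chosen points
  -- accumulate at a point `p`, which lies inside every orbit of the chain
  have hub : ∀ c : Set F, IsChain r c → ∃ ub, ∀ x ∈ c, r x ub := by
    intro c hc
    by_cases hmin : ∃ x₁ ∈ c, ∀ x ∈ c, (x : ℂ) ∉ inside ψ K U b x₁
    · obtain ⟨x₁, hx₁, hmin⟩ := hmin
      refine ⟨x₁, fun x hx => ?_⟩
      by_cases hxx : x = x₁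
      · exact Or.inl (by rw [hxx])
      · rcases hc hx hx₁ hxx with h1 | h1
        · exact h1
        · rcases h1 with h1 | h1
          · exact Or.inl h1.symm
          · exact absurd h1 (hmin x hx)
    push Not at hmin
    rcases c.eq_empty_or_nonempty with rfl | hne
    · exact ⟨⟨x₀, Or.inl rfl⟩, fun x hx => absurd hx (notMem_empty x)⟩
    have : Nonempty c := hne.to_subtype
    set G : c → Set ℂ := fun x => closure {y | ∃ x' ∈ c, y = e x' ∧
      ((x' : ℂ) = (x : F) ∨ (x' : ℂ) ∈ inside ψ K U b (x : F))} with hG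
    have hGmono : ∀ x y : c, ((y : F) : ℂ) = (x : F) ∨ ((y : F) : ℂ) ∈ inside ψ K U b (x : F) →
        G y ⊆ G x := by
      intro x y hxy
      refine closure_mono ?_
      rintro _ ⟨x', hx', rfl, hyx⟩
      exact ⟨x', hx', rfl, hrt x y x' hxy hyx⟩
    have hGC : ∀ x, G x ⊆ C₁ := fun x => closure_minimal (by
      rintro _ ⟨x', -, rfl, -⟩
      exact heC x') hC₁c.isClosed
    obtain ⟨p, hp⟩ := IsCompact.nonempty_iInter_of_directed_nonempty_isCompact_isClosed G
      (fun x y => by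
        by_cases hxy : (x : F) = y
        · exact ⟨x, subset_rfl, by rw [Subtype.ext hxy]⟩
        · rcases hc x.2 y.2 hxy with h1 | h1
          · exact ⟨y, hGmono x y h1, subset_rfl⟩
          · exact ⟨x, subset_rfl, hGmono y x h1⟩)
      (fun x => ⟨e x, subset_closure ⟨x, x.2, rfl, Or.inl rfl⟩⟩)
      (fun x => hC₁c.of_isClosed_subset isClosed_closure (hGC x)) (fun x => isClosed_closure)
    rw [mem_iInter] at hp
    have hpI : ∀ x ∈ c, p ∈ inside ψ K U b (x : ℂ) := by
      intro x hx
      obtain ⟨x₁, hx₁, hx₁I⟩ := hmin x hx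
      have h1 := S.closure_inside (b := b) (hFh x₁ x₁.2) (x := x₁) ⟨closure_mono ?_ (hp ⟨x₁, hx₁⟩),
        hC₁U (hGC _ (hp ⟨x₁, hx₁⟩))⟩
      · rcases h1 with h1 | h1
        · exact htr x x.2 x₁ hx₁I h1
        · exact S.inside_flow (hFh x x.2) hx₁I h1
      · rintro _ ⟨x', hx', rfl, h2 | h2⟩
        · exact Or.inr (by rw [← h2]; exact heo x')
        · exact Or.inl (S.inside_flow (hFh x₁ x₁.2) h2 (heo x'))
    obtain ⟨x, hx⟩ := hne
    exact ⟨⟨p, hFF x x.2 (hpI x hx)⟩, fun y hy => Or.inr (hpI y hy)⟩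
  obtain ⟨m, hm⟩ := exists_maximal_of_chains_bounded hub (fun {x y z} => hrt x y z)
  -- the innermost orbit still separates `U`, so there is a point inside
  obtain ⟨a, ha, a', ha', haX, haX', hn⟩ := S.exists_separated (hFh m m.2)
  obtain ⟨p, hp⟩ : ∃ p, p ∈ inside ψ K U b m := by
    by_contra! hcon
    have key : ∀ a ∈ U, a ∉ K ∪ orb ψ (m : ℂ) → LogEq (K ∪ orb ψ (m : ℂ)) a b := by
      intro a ha haX
      by_contra hl
      exact hcon a ⟨ha, fun h => haX (Or.inr h), hl⟩
    exact hn ((key a ha haX).trans (S.notMem_union hb (hFb m m.2)) (key a' ha' haX').symm)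
  rcases hm ⟨p, hFF m m.2 hp⟩ (Or.inr hp) with h1 | h1
  · have h1 : (m : ℂ) = p := h1
    exact notMem_inside_self ψ K U b m (h1.symm ▸ hp)
  · exact notMem_inside_self ψ K U b m (htr m m.2 p hp h1)

end

/-! ### The theorem in `ℂ` and its transfer to `ℝ × ℝ` -/

/-- A component of the complement of `K` is invariant and closed up to `K`. -/
theorem setting_of_component {ψ : Flow ℝ ℂ} {K N : Set ℂ} (hK : IsCompact K)
    (hKc : IsConnected K) (hinv : ∀ x ∈ K, ∀ t, ψ t x ∈ K) (hN : IsCompact N)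
    (hKN : K ⊆ interior N) (hmax : ∀ x ∈ N, (∀ t, ψ t x ∈ N) → x ∈ K) {p : ℂ}
    (hfix : ∀ x ∈ connectedComponentIn Kᶜ p, ∃ t, ψ t x ≠ x) :
    Setting ψ K N (connectedComponentIn Kᶜ p) := by
  have hsub := connectedComponentIn_subset Kᶜ p
  have hcomp : ∀ C, IsPreconnected C → (∀ a ∈ C, a ∉ K) → ∀ a ∈ C,
      a ∈ connectedComponentIn Kᶜ p → C ⊆ connectedComponentIn Kᶜ p := by
    intro C hC hd a haC ha
    rw [connectedComponentIn_eq ha]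
    exact hC.subset_connectedComponentIn haC hd
  refine ⟨hK, hKc.isPreconnected, hKc.nonempty, hinv, hN, hKN, hmax,
    hK.isClosed.isOpen_compl.connectedComponentIn, isPreconnected_connectedComponentIn, hsub, ?_,
    hcomp, ?_, hfix⟩
  · intro z hz
    by_cases hzK : z ∈ K
    · exact Or.inr hzK
    obtain ⟨a, ha⟩ : (connectedComponentIn Kᶜ p).Nonempty := closure_nonempty_iff.mp ⟨z, hz⟩
    refine Or.inl (hcomp (insert z (connectedComponentIn Kᶜ p)) ?_ ?_ a (mem_insert_of_mem _ ha) ha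
      (mem_insert _ _))
    · exact isPreconnected_connectedComponentIn.subset_closure (subset_insert _ _)
        (insert_subset hz subset_closure)
    · rintro c (rfl | hc)
      exacts [hzK, hsub hc]
  · intro x hx t
    refine hcomp (orb ψ x) (isPreconnected_orb ψ x) ?_ x (self_mem_orb ψ x) hx ⟨t, rfl⟩
    rintro _ ⟨q, rfl⟩ hq
    refine hsub hx ?_
    have := hinv _ hq (-q)
    simpa only [← ψ.map_add, neg_add_cancel, ψ.map_zero_apply] using this

/-- A flow on the plane `ℝ × ℝ`, read in the complex coordinate. -/
noncomputable def toComplex (φ : Flow ℝ (ℝ × ℝ)) : Flow ℝ ℂ where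
  toFun t z := Complex.equivRealProdCLM.symm (φ t (Complex.equivRealProdCLM z))
  cont' := Complex.equivRealProdCLM.symm.continuous.comp
    (φ.continuous continuous_fst (Complex.equivRealProdCLM.continuous.comp continuous_snd))
  map_add' s t z := by simp [φ.map_add]
  map_zero' z := by rw [φ.map_zero_apply, ContinuousLinearEquiv.symm_apply_apply]

/-- if a component `U` of `ℝ²∖K` contains no fixed point, then no
trajectory contained in `U` has both its omega-limit and its negative omega-limit
meeting `K`. -/
theorem stmt18 (φ : Flow ℝ (ℝ × ℝ)) (K U : Set (ℝ × ℝ))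
    (hIso : IsIsolatedInv φ K) (hConn : IsConnected K)
    (hU : ∃ p ∈ Kᶜ, U = connectedComponentIn Kᶜ p)
    (hfix : ∀ p ∈ U, ∃ t : ℝ, φ t p ≠ p) :
    ∀ x : ℝ × ℝ, (∀ t : ℝ, φ t x ∈ U) →
      ¬ ((omegaLim φ x ∩ K).Nonempty ∧ (alphaLim φ x ∩ K).Nonempty) := by
  rintro x hx ⟨⟨k, hk, hkK⟩, k', hk', hkK'⟩
  obtain ⟨hK, hinv, N, hN, hKN, hmax⟩ := hIso
  obtain ⟨p, hp, rfl⟩ := hU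
  set e : (ℝ × ℝ) ≃ₜ ℂ := Complex.equivRealProdCLM.symm.toHomeomorph with he
  set ψ := toComplex φ with hψdef
  have hψ : ∀ t a, ψ t (e a) = e (φ t a) := fun t a => by
    simp [hψdef, toComplex, he]
  have hcomp : connectedComponentIn (e '' K)ᶜ (e p) = e '' connectedComponentIn Kᶜ p := by
    rw [e.image_connectedComponentIn hp, image_compl_eq e.bijective]
  have hS : Setting ψ (e '' K) (e '' N) (connectedComponentIn (e '' K)ᶜ (e p)) := by
    refine setting_of_component (hK.image e.continuous) (hConn.image e e.continuous.continuousOn)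
      ?_ (hN.image e.continuous) ?_ ?_ ?_
    · rintro _ ⟨a, ha, rfl⟩ t
      exact ⟨_, hinv a ha t, (hψ t a).symm⟩
    · rw [← e.image_interior]
      exact image_mono hKN
    · rintro _ ⟨a, ha, rfl⟩ h
      refine ⟨a, hmax a ha fun t => ?_, rfl⟩
      have := h t
      rwa [hψ, e.injective.mem_set_image] at this
    · rw [hcomp]
      rintro _ ⟨a, ha, rfl⟩
      obtain ⟨t, ht⟩ := hfix a ha
      exact ⟨t, by rw [hψ]; exact fun h => ht (e.injective h)⟩
  refine hS.not_homo (e x) ⟨?_, ⟨e k, ⟨k, hkK, rfl⟩, ?_⟩, e k', ⟨k', hkK', rfl⟩, ?_⟩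
  · rw [hcomp]
    have := hx 0
    rw [φ.map_zero_apply] at this
    exact ⟨x, this, rfl⟩
  · intro O hO T
    have h1 := mem_iInter₂.mp hk (max T 1)
      (show (0 : ℝ) < max T 1 from lt_of_lt_of_le one_pos (le_max_right _ _))
    obtain ⟨y, hy, t, ht, rfl⟩ := mem_closure_iff_nhds.mp h1 _
      (e.continuous.continuousAt.preimage_mem_nhds hO)
    exact ⟨t, (le_max_left _ _).trans ht, by rw [hψ]; exact hy⟩
  · intro O hO T
    have h1 := mem_iInter₂.mp hk' (min T (-1))
      (show min T (-1) < (0 : ℝ) from lt_of_le_of_lt (min_le_right T (-1)) (by norm_num))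
    obtain ⟨y, hy, t, ht, rfl⟩ := mem_closure_iff_nhds.mp h1 _
      (e.continuous.continuousAt.preimage_mem_nhds hO)
    exact ⟨t, ht.trans (min_le_left _ _), by rw [hψ]; exact hy⟩
end
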